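/- arXiv:1206.1184 — 2 statements merged into one kernel-verified Lean document; each statement's English description precedes it below -/
import Mathlib

section
/- There exists a constant λ > 0 depending only on n and C₀ such that for all ρ ≥ 2ε: λ ε^{n−2} Σ_{i,j=1}^{n−1} Σ_{1≤|α|≤d} h_{ij,α}² ∫_{B⁺_ρ(0)} (ε+|x|)^{2|α|+2−2n} dx ≤ (1/4) ∫_{B⁺_ρ(0)} Σ_{a,b,c=1}^n Q_{ab,c}² dx − (n²/(2(n−1)(n−2))) ∫_{{x̄ ∈ ℝ^{n−1} : |x̄| < ρ}} ∂_nU_ε · U_ε · S_{nn}²(x̄,0) dx̄. -/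
open MeasureTheory

/-!
On the boundary `∂_n U_ε < 0`, so the boundary term has a favourable sign and can be dropped. Write
`U_ε = (ε / w)^((n-2)/2)` with `w` quadratic; then `Q = (U_ε / w) D_w T` for a first order operator
`D_w` with polynomial coefficients. On each dyadic half-annulus of radius `r` rescale to unit size.
By compactness in the unit coefficients `h` and in `δ = ε / r ∈ [0, 1]`, it is enough to find, for
every `H ≠ 0`, a quantity controlled by `∫ |D_w T|²` that stays away from zero.

* If the linearised Weyl tensor of `H` is nonzero somewhere, test it against a bump function: the
  conformal Killing operator `S` lies in its kernel and it annihilates multiples of the metric, so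
  integrating by parts bounds the pairing by `D_w T`.
* If `∂_n H_ij ≠ 0` at a boundary point, then so is the trace-free part of `∂_n T_ij`, since
  `∂_n S_ij` is a multiple of `δ_ij` there; the bounds on `V` extend this to a neighbourhood.
* Otherwise the linearised Riemann tensor of `H` is a Kulkarni-Nomizu product with a tensor
  satisfying a Codazzi equation. On the boundary, the gauge `x_j H_ij = 0` and the Fischer pairing
  then force `H = 0`, and a recursion in powers of `x_n` gives `H = 0` everywhere.
-/

namespace HalfSpaceTensor

section Euler

open MvPolynomial

variable {σ R : Type*} [CommRing R]

theorem pderiv_comm (i j : σ) (p : MvPolynomial σ R) :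
    pderiv i (pderiv j p) = pderiv j (pderiv i p) := by
  have h : ⁅pderiv (R := R) i, pderiv (R := R) j⁆ = 0 := by
    classical
    ext k
    simp only [Derivation.commutator_apply, pderiv_X, Pi.single_apply]
    split_ifs <;> simp
  simpa [Derivation.commutator_apply, sub_eq_zero] using congr($h p)

/-- The Euler operator `p ↦ ∑ i, X i * ∂ᵢ p`, whose eigenvectors are the homogeneous polynomials. -/
noncomputable def euler : Derivation R (MvPolynomial σ R) (MvPolynomial σ R) :=
  mkDerivation R X

theorem coeff_euler (p : MvPolynomial σ R) (s : σ →₀ ℕ) :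
    coeff s (euler p) = s.degree * coeff s p := by
  classical
  induction p using MvPolynomial.induction_on' with
  | add p q hp hq => simp only [map_add, coeff_add, hp, hq, mul_add]
  | monomial t c =>
    have h : euler (monomial t c) = (t.degree : R) • monomial t c := by
      rw [euler, mkDerivation_monomial, Finsupp.sum, Finsupp.degree_apply, Nat.cast_sum,
        Finset.sum_smul, Finset.smul_sum]
      refine Finset.sum_congr rfl fun i hi => ?_
      have hi : Finsupp.single i 1 ≤ t := by
        simpa [Nat.one_le_iff_ne_zero] using Finsupp.mem_support_iff.1 hi
      rw [smul_eq_mul, X, monomial_mul, tsub_add_cancel_of_le hi, smul_monomial, smul_monomial]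
      simp [mul_comm]
    rw [h, coeff_smul, smul_eq_mul, coeff_monomial]
    split_ifs with hts <;> simp [hts]

theorem pderiv_euler (i : σ) (p : MvPolynomial σ R) :
    pderiv i (euler p) = pderiv i p + euler (pderiv i p) := by
  have h : ⁅pderiv (R := R) i, euler (R := R)⁆ = pderiv i := by
    classical
    ext k
    simp only [Derivation.commutator_apply, euler, mkDerivation_X, pderiv_X, Pi.single_apply]
    split_ifs <;> simp
  exact sub_eq_iff_eq_add.1 (congr($h p))

section Fintype

variable [Fintype σ]

theorem euler_eq_sum (p : MvPolynomial σ R) : euler p = ∑ i, X i * pderiv i p := by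
  classical
  induction p using MvPolynomial.induction_on with
  | C a => simp
  | add p q hp hq => simp only [map_add, hp, hq, mul_add, Finset.sum_add_distrib]
  | mul_X p j hp =>
    rw [Derivation.leibniz, hp, euler, mkDerivation_X]
    simp only [Derivation.leibniz, smul_eq_mul, mul_add, Finset.sum_add_distrib, Finset.mul_sum,
      pderiv_X, Pi.single_apply]
    simp [mul_comm, mul_left_comm]

theorem pderiv_sum_X_mul (j : σ) (f : σ → MvPolynomial σ R) :
    pderiv j (∑ k, X k * f k) = f j + ∑ k, X k * pderiv j (f k) := by
  classical
  simp [pderiv_X, Finset.sum_add_distrib, Pi.single_apply, add_comm]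

end Fintype

theorem eq_zero_of_euler_add_self {t : MvPolynomial σ ℝ} (h : euler t + t = 0) : t = 0 := by
  ext s
  have hs : ((s.degree : ℝ) + 1) * coeff s t = 0 := by
    simpa [coeff_euler, add_mul] using congr(coeff s $h)
  exact (mul_eq_zero.1 hs).resolve_left (by positivity)

theorem eq_zero_of_euler_eq_zero {t : MvPolynomial σ ℝ} (h0 : coeff 0 t = 0)
    (h : euler t = 0) : t = 0 := by
  ext s
  have hs : (s.degree : ℝ) * coeff s t = 0 := by simpa [coeff_euler] using congr(coeff s $h)
  rcases mul_eq_zero.1 hs with hs | hs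
  · rw [Nat.cast_eq_zero, Finsupp.degree_eq_zero_iff] at hs
    rw [hs, h0, coeff_zero]
  · exact hs

end Euler

section Fischer

open MvPolynomial

variable {σ : Type*} [Fintype σ]

/-- The Fischer inner product of real polynomials: monomials are orthogonal and `x ^ s` has square
norm `s!`, which makes multiplication by `X i` adjoint to `∂ᵢ`. -/
noncomputable def fischer : MvPolynomial σ ℝ →ₗ[ℝ] MvPolynomial σ ℝ →ₗ[ℝ] ℝ :=
  (basisMonomials σ ℝ).constr ℝ fun s => ((∏ i, (s i).factorial : ℕ) : ℝ) • lcoeff ℝ s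

theorem fischer_monomial (s : σ →₀ ℕ) (c : ℝ) (q : MvPolynomial σ ℝ) :
    fischer (monomial s c) q = c * ((∏ i, (s i).factorial : ℕ) : ℝ) * coeff s q := by
  have h : (monomial s c : MvPolynomial σ ℝ) = c • basisMonomials σ ℝ s := by
    simp [smul_monomial]
  rw [h, fischer, map_smul, Module.Basis.constr_basis]
  simp [lcoeff_apply, mul_assoc]

theorem fischer_eq_sum (p q : MvPolynomial σ ℝ) :
    fischer p q = ∑ s ∈ p.support, ((∏ i, (s i).factorial : ℕ) : ℝ) * (coeff s p * coeff s q) := by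
  conv_lhs => rw [p.as_sum]
  rw [map_sum, LinearMap.sum_apply]
  exact Finset.sum_congr rfl fun s _ => by rw [fischer_monomial]; ring

theorem fischer_self_nonneg (p : MvPolynomial σ ℝ) : 0 ≤ fischer p p := by
  rw [fischer_eq_sum]
  exact Finset.sum_nonneg fun s _ => mul_nonneg (Nat.cast_nonneg _) (mul_self_nonneg _)

theorem prod_factorial_eq_mul (s : σ →₀ ℕ) {i : σ} (hi : s i ≠ 0) :
    ∏ j, (s j).factorial = s i * ∏ j, ((s - Finsupp.single i 1 : σ →₀ ℕ) j).factorial := by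
  classical
  rw [← Finset.mul_prod_erase _ _ (Finset.mem_univ i),
    ← Finset.mul_prod_erase _ (fun j => ((s - Finsupp.single i 1 : σ →₀ ℕ) j).factorial)
      (Finset.mem_univ i), ← mul_assoc]
  congr 1
  · simp [Nat.mul_factorial_pred hi]
  · refine Finset.prod_congr rfl fun j hj => ?_
    simp [(Finset.ne_of_mem_erase hj).symm]

theorem fischer_pderiv (i : σ) (p q : MvPolynomial σ ℝ) :
    fischer (pderiv i p) q = fischer p (X i * q) := by
  classical
  induction p using MvPolynomial.induction_on' with
  | add p q hp hq => simp [hp, hq]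
  | monomial s c =>
    rw [pderiv_monomial, fischer_monomial, fischer_monomial, coeff_X_mul']
    split_ifs with hi
    · rw [prod_factorial_eq_mul s (Finsupp.mem_support_iff.1 hi)]
      push_cast
      ring
    · simp [Finsupp.notMem_support_iff.1 hi]

theorem fischer_laplacian (p q : MvPolynomial σ ℝ) :
    fischer (∑ i, pderiv i (pderiv i p)) q = fischer p ((∑ i, X i * X i) * q) := by
  simp only [map_sum, LinearMap.sum_apply, Finset.sum_mul, fischer_pderiv, mul_assoc]

theorem eq_zero_of_fischer_nonpos {q t : MvPolynomial σ ℝ} (c : (σ →₀ ℕ) → ℝ) (hc : ∀ s, 0 < c s)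
    (hq : ∀ s, coeff s q = c s * coeff s t) (h : fischer q t ≤ 0) : t = 0 := by
  have term_eq (s : σ →₀ ℕ) : ((∏ i, (s i).factorial : ℕ) : ℝ) * (coeff s q * coeff s t)
      = ((∏ i, (s i).factorial : ℕ) : ℝ) * c s * (coeff s t * coeff s t) := by
    rw [hq]; ring
  have weight_pos (s : σ →₀ ℕ) : 0 < ((∏ i, (s i).factorial : ℕ) : ℝ) * c s :=
    mul_pos (Nat.cast_pos.2 (Finset.prod_pos fun i _ => Nat.factorial_pos _)) (hc s)
  have term_nonneg : ∀ s ∈ q.support, 0 ≤ ((∏ i, (s i).factorial : ℕ) : ℝ)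
      * c s * (coeff s t * coeff s t) :=
    fun s _ => mul_nonneg (weight_pos s).le (mul_self_nonneg _)
  simp only [fischer_eq_sum, term_eq] at h
  have terms_zero :=
    (Finset.sum_eq_zero_iff_of_nonneg term_nonneg).1 (h.antisymm (Finset.sum_nonneg term_nonneg))
  ext s
  by_contra hs
  have hsq : s ∈ q.support := mem_support_iff.2 (hq s ▸ mul_ne_zero (hc s).ne' hs)
  exact hs (mul_self_eq_zero.1 ((mul_eq_zero.1 (terms_zero s hsq)).resolve_left (weight_pos s).ne'))

/- Pair the equation with `t`: the left side becomes the Fischer square norm of `|x|² t`, while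
`(E + 2)(E + 1)` is positive. -/
theorem eq_zero_of_laplacian_eq_neg_euler {k : ℝ} (hk : 0 < k) {t : MvPolynomial σ ℝ}
    (h : ∑ i, pderiv i (pderiv i ((∑ j, X j * X j) * t))
      = -(k • (euler (euler t + t) + (2 : ℝ) • (euler t + t)))) : t = 0 := by
  refine eq_zero_of_fischer_nonpos (q := euler (euler t + t) + (2 : ℝ) • (euler t + t))
    (fun s => (s.degree + 2) * (s.degree + 1)) (fun s => by positivity) (fun s => ?_) ?_
  · simp only [coeff_add, coeff_smul, coeff_euler, smul_eq_mul]; ring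
  · have hnonneg := fischer_self_nonneg ((∑ j, X j * X j) * t)
    rw [← fischer_laplacian, h, map_neg, LinearMap.neg_apply, map_smul, LinearMap.smul_apply,
      smul_eq_mul] at hnonneg
    exact nonpos_of_mul_nonpos_right (neg_nonneg.1 hnonneg) hk

end Fischer

section AlgebraicCurvature

variable {ι R : Type*}

/-- The Kronecker delta. -/
def delta [DecidableEq ι] [Zero R] [One R] (i j : ι) : R := if i = j then 1 else 0

/-- The alternation of a four-tensor `G c a d b` in the index pairs `(c, a)` and `(d, b)`. -/
def alternate [AddCommGroup R] (G : ι → ι → ι → ι → R) (c a d b : ι) : R :=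
  G c a d b - G c a b d - G a c d b + G a c b d

/-- The Kulkarni-Nomizu product of a two-tensor with the Euclidean metric. -/
def kulkarniNomizu [DecidableEq ι] [CommRing R] (P : ι → ι → R) : ι → ι → ι → ι → R :=
  alternate fun c a d b => P c d * delta a b

theorem alternate_swap_left [AddCommGroup R] (G : ι → ι → ι → ι → R) (c a d b : ι) :
    alternate G a c d b = -alternate G c a d b := by
  simp only [alternate]; abel

theorem alternate_swap_right [AddCommGroup R] (G : ι → ι → ι → ι → R) (c a d b : ι) :
    alternate G c a b d = -alternate G c a d b := by
  simp only [alternate]; abel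

theorem alternate_pair_swap [AddCommGroup R] {G : ι → ι → ι → ι → R}
    (hG : ∀ c a d b, G d b c a = G c a d b) (c a d b : ι) :
    alternate G d b c a = alternate G c a d b := by
  simp only [alternate, hG]; abel

section Delta

variable [DecidableEq ι]

theorem delta_comm [Zero R] [One R] (i j : ι) : (delta i j : R) = delta j i := by
  simp only [delta, eq_comm]

@[simp]
theorem delta_self [Zero R] [One R] (i : ι) : (delta i i : R) = 1 := if_pos rfl

theorem abs_delta_le_one (i j : ι) : |(delta i j : ℝ)| ≤ 1 := by
  unfold delta; split_ifs <;> simp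

variable [CommRing R]

theorem map_delta {S F : Type*} [CommRing S] [FunLike F R S] [RingHomClass F R S] (φ : F)
    (i j : ι) :
    φ (delta i j) = delta i j := by
  unfold delta; split_ifs <;> simp

theorem map_kulkarniNomizu {S : Type*} [CommRing S] (φ : R →+* S) (P : ι → ι → R)
    (c a d b : ι) :
    φ (kulkarniNomizu P c a d b) = kulkarniNomizu (fun i j => φ (P i j)) c a d b := by
  simp only [kulkarniNomizu, alternate, map_add, map_sub, map_mul, map_delta]

theorem kulkarniNomizu_comp {κ : Type*} [DecidableEq κ] {f : κ → ι} (hf : f.Injective)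
    (P : ι → ι → R) (c a d b : κ) :
    kulkarniNomizu P (f c) (f a) (f d) (f b)
      = kulkarniNomizu (fun i j => P (f i) (f j)) c a d b := by
  simp only [kulkarniNomizu, alternate, delta, hf.eq_iff]

theorem kulkarniNomizu_pair_swap {P : ι → ι → R} (hP : ∀ i j, P i j = P j i) (c a d b : ι) :
    kulkarniNomizu P d b c a = kulkarniNomizu P c a d b :=
  alternate_pair_swap (fun c a d b => by rw [hP d c, delta_comm b a]) c a d b

variable [Fintype ι]

theorem sum_mul_delta (f : ι → R) (i : ι) : ∑ j, f j * delta i j = f i := by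
  simp [delta]

theorem sum_mul_delta' (f : ι → R) (i : ι) : ∑ j, f j * delta j i = f i := by
  simp [delta]

theorem sum_kulkarniNomizu (P : ι → ι → R) (c d : ι) :
    ∑ a, kulkarniNomizu P c a d a
      = ((Fintype.card ι : R) - 2) * P c d + (∑ a, P a a) * delta c d := by
  simp only [kulkarniNomizu, alternate, Finset.sum_add_distrib, Finset.sum_sub_distrib,
    ← Finset.sum_mul, sum_mul_delta', sum_mul_delta]
  simp only [delta_self, mul_one, Finset.sum_const, Finset.card_univ, nsmul_eq_mul]
  ring

end Delta

variable [Fintype ι]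

/-- The full contraction of two four-tensors. -/
def contract (C G : ι → ι → ι → ι → ℝ) : ℝ := ∑ c, ∑ a, ∑ d, ∑ b, C c a d b * G c a d b

theorem contract_add (C G G' : ι → ι → ι → ι → ℝ) :
    contract C (fun c a d b => G c a d b + G' c a d b) = contract C G + contract C G' := by
  simp only [contract, mul_add, Finset.sum_add_distrib]

theorem contract_sub (C G G' : ι → ι → ι → ι → ℝ) :
    contract C (fun c a d b => G c a d b - G' c a d b) = contract C G - contract C G' := by
  simp only [contract, mul_sub, Finset.sum_sub_distrib]

theorem contract_const_mul (C G : ι → ι → ι → ι → ℝ) (r : ℝ) :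
    contract C (fun c a d b => r * G c a d b) = r * contract C G := by
  simp only [contract, Finset.mul_sum, mul_left_comm r]

theorem eq_zero_of_contract_self_eq_zero {W : ι → ι → ι → ι → ℝ} (h : contract W W = 0)
    (c a d b : ι) : W c a d b = 0 := by
  have h' : ∑ q : ι × ι × ι × ι,
      W q.1 q.2.1 q.2.2.1 q.2.2.2 * W q.1 q.2.1 q.2.2.1 q.2.2.2 = 0 := by
    simpa only [contract, Fintype.sum_prod_type] using h
  exact mul_self_eq_zero.1 ((Finset.sum_eq_zero_iff_of_nonneg fun q _ => mul_self_nonneg _).1 h'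
    (c, a, d, b) (Finset.mem_univ _))

/-- Trace-free symmetric forms on bivectors. These are the algebraic Weyl tensors, except that the
first Bianchi identity is not required. -/
structure IsWeyl (C : ι → ι → ι → ι → ℝ) : Prop where
  swap_left : ∀ c a d b, C a c d b = -C c a d b
  swap_right : ∀ c a d b, C c a b d = -C c a d b
  pair_swap : ∀ c a d b, C d b c a = C c a d b
  trace : ∀ c d, ∑ a, C c a d a = 0

namespace IsWeyl

variable {C : ι → ι → ι → ι → ℝ}

theorem contract_swap_left (h : IsWeyl C) (G : ι → ι → ι → ι → ℝ) :
    contract C (fun c a d b => G a c d b) = -contract C G := by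
  rw [contract, Finset.sum_comm]
  simp only [contract, ← Finset.sum_neg_distrib, ← neg_mul]
  simp only [← h.swap_left]

theorem contract_swap_right (h : IsWeyl C) (G : ι → ι → ι → ι → ℝ) :
    contract C (fun c a d b => G c a b d) = -contract C G := by
  simp only [contract, ← Finset.sum_neg_distrib, ← neg_mul]
  simp only [← h.swap_right]
  exact Finset.sum_congr rfl fun c _ => Finset.sum_congr rfl fun a _ => Finset.sum_comm

theorem contract_alternate (h : IsWeyl C) (G : ι → ι → ι → ι → ℝ) :
    contract C (alternate G) = 4 * contract C G := by
  have h' : contract C (alternate G) = contract C G - contract C (fun c a d b => G c a b d)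
      - contract C (fun c a d b => G a c d b) + contract C (fun c a d b => G a c b d) := by
    simp only [← contract_sub, ← contract_add]; rfl
  rw [h', h.contract_swap_left (fun c a d b => G c a b d), h.contract_swap_right G,
    h.contract_swap_left G]
  ring

theorem contract_pair_swap (h : IsWeyl C) (G : ι → ι → ι → ι → ℝ) :
    contract C (fun c a d b => G d b c a) = contract C G := by
  have sum_pairs (F : ι → ι → ι → ι → ℝ) :
      ∑ c, ∑ a, ∑ d, ∑ b, F c a d b = ∑ p : ι × ι, ∑ q : ι × ι, F p.1 p.2 q.1 q.2 := by
    simp only [Fintype.sum_prod_type]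
  rw [contract, contract, sum_pairs, sum_pairs, Finset.sum_comm]
  simp only [h.pair_swap]

theorem contract_eq_zero_of_symm_left (h : IsWeyl C) {G : ι → ι → ι → ι → ℝ}
    (hG : ∀ c a d b, G a c d b = G c a d b) : contract C G = 0 := by
  have hswap := h.contract_swap_left G
  simp only [hG] at hswap
  linarith

theorem contract_eq_zero_of_symm_right (h : IsWeyl C) {G : ι → ι → ι → ι → ℝ}
    (hG : ∀ c a d b, G c a b d = G c a d b) : contract C G = 0 := by
  have hswap := h.contract_swap_right G
  simp only [hG] at hswap
  linarith

theorem contract_cyclic_eq_zero (h : IsWeyl C) (v : ι → ℝ) {G : ι → ι → ι → ℝ}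
    (hG : ∀ c a b, G c a b = G c b a) :
    contract C (fun c a d b => v d * G c a b + v a * G d b c + v b * G d a c) = 0 := by
  have hlast : contract C (fun c a d b => v b * G d a c) = 0 :=
    h.contract_eq_zero_of_symm_left fun c a d b => by rw [hG]
  rw [contract_add, contract_add, hlast, h.contract_pair_swap fun c a d b => v b * G c a d,
    h.contract_swap_right fun c a d b => v d * G c a b]
  ring

variable [DecidableEq ι]

theorem contract_mul_delta (h : IsWeyl C) (f : ι → ι → ℝ) :
    contract C (fun c a d b => f c d * delta a b) = 0 := by
  refine Finset.sum_eq_zero fun c _ => ?_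
  rw [Finset.sum_comm]
  refine Finset.sum_eq_zero fun d _ => ?_
  simp only [← mul_assoc, sum_mul_delta, ← Finset.sum_mul, h.trace, zero_mul]

theorem contract_kulkarniNomizu (h : IsWeyl C) (P : ι → ι → ℝ) :
    contract C (kulkarniNomizu P) = 0 := by
  rw [kulkarniNomizu, h.contract_alternate, h.contract_mul_delta, mul_zero]

end IsWeyl

/-- The Schouten tensor of a curvature-type four-tensor, with values in a real algebra. -/
noncomputable def schouten [DecidableEq ι] [CommRing R] [Algebra ℝ R] (K : ι → ι → ι → ι → R)
    (a b : ι) : R :=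
  (1 / ((Fintype.card ι : ℝ) - 2)) •
    (∑ e, K a e b e
      - (1 / (2 * ((Fintype.card ι : ℝ) - 1))) • ((∑ c, ∑ e, K c e c e) * delta a b))

section Schouten

variable [DecidableEq ι]

theorem schouten_comm [CommRing R] [Algebra ℝ R] {K : ι → ι → ι → ι → R}
    (hK : ∀ c a d b, K d b c a = K c a d b) (a b : ι) : schouten K a b = schouten K b a := by
  simp only [schouten, delta_comm a b, fun e => hK a e b e]

variable {G : ι → ι → ι → ι → ℝ}

theorem sum_kulkarniNomizu_schouten (hι : 3 ≤ Fintype.card ι) (K : ι → ι → ι → ι → ℝ) (c d : ι) :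
    ∑ a, kulkarniNomizu (schouten K) c a d a = ∑ a, K c a d a := by
  have hcard : (3 : ℝ) ≤ Fintype.card ι := by exact_mod_cast hι
  have h2 : (Fintype.card ι : ℝ) - 2 ≠ 0 := by linarith
  have h1 : (Fintype.card ι : ℝ) - 1 ≠ 0 := by linarith
  have htrace : ∑ a, schouten K a a
      = 1 / (2 * ((Fintype.card ι : ℝ) - 1)) * ∑ c, ∑ e, K c e c e := by
    simp only [schouten, smul_eq_mul, delta_self, mul_one, ← Finset.mul_sum,
      Finset.sum_sub_distrib, Finset.sum_const, Finset.card_univ, nsmul_eq_mul]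
    field_simp
    ring
  rw [sum_kulkarniNomizu, htrace]
  simp only [schouten, smul_eq_mul]
  field_simp
  ring

theorem isWeyl_alternate_sub_kulkarniNomizu (hι : 3 ≤ Fintype.card ι)
    (hG : ∀ c a d b, G d b c a = G c a d b) :
    IsWeyl fun c a d b =>
      alternate G c a d b - kulkarniNomizu (schouten (alternate G)) c a d b where
  swap_left c a d b := by
    rw [alternate_swap_left G c a, kulkarniNomizu, alternate_swap_left _ c a]; ring
  swap_right c a d b := by
    rw [alternate_swap_right G c a d b, kulkarniNomizu, alternate_swap_right _ c a d b]; ring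
  pair_swap c a d b := by
    rw [alternate_pair_swap hG c a d b,
      kulkarniNomizu_pair_swap (schouten_comm (alternate_pair_swap hG)) c a d b]
  trace c d := by
    rw [Finset.sum_sub_distrib, sum_kulkarniNomizu_schouten hι, sub_self]

theorem alternate_eq_kulkarniNomizu (hι : 3 ≤ Fintype.card ι)
    (hG : ∀ c a d b, G d b c a = G c a d b) (h : ∀ C, IsWeyl C → contract C G = 0) :
    alternate G = kulkarniNomizu (schouten (alternate G)) := by
  have hW := isWeyl_alternate_sub_kulkarniNomizu hι hG
  funext c a d b
  refine sub_eq_zero.1 (eq_zero_of_contract_self_eq_zero (W := fun c a d b =>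
    alternate G c a d b - kulkarniNomizu (schouten (alternate G)) c a d b) ?_ c a d b)
  rw [contract_sub, hW.contract_alternate, h _ hW, hW.contract_kulkarniNomizu, mul_zero, sub_zero]

end Schouten

end AlgebraicCurvature

section PolynomialCurvature

open MvPolynomial

variable {σ : Type*}

/-- The linearisation at the Euclidean metric of the Riemann tensor, up to a constant factor,
in the direction of a polynomial symmetric two-tensor. -/
noncomputable def linearizedRiemann (H : σ → σ → MvPolynomial σ ℝ) :
    σ → σ → σ → σ → MvPolynomial σ ℝ :=
  alternate fun c a d b => pderiv c (pderiv d (H a b))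

theorem linearizedRiemann_bianchi (H : σ → σ → MvPolynomial σ ℝ) (e a b c d : σ) :
    pderiv e (linearizedRiemann H a b c d) + pderiv a (linearizedRiemann H b e c d)
      + pderiv b (linearizedRiemann H e a c d) = 0 := by
  simp only [linearizedRiemann, alternate, map_add, map_sub]
  linear_combination pderiv_comm e a (pderiv c (H b d)) - pderiv_comm e a (pderiv d (H b c))
    - pderiv_comm e b (pderiv c (H a d)) + pderiv_comm e b (pderiv d (H a c))
    + pderiv_comm a b (pderiv c (H e d)) - pderiv_comm a b (pderiv d (H e c))

/-- Symmetric two-tensors whose covariant derivative is totally symmetric. -/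
structure IsCodazzi (P : σ → σ → MvPolynomial σ ℝ) : Prop where
  symm : ∀ i j, P i j = P j i
  pderiv_swap : ∀ k i j, pderiv k (P i j) = pderiv i (P k j)

theorem pderiv_delta [DecidableEq σ] (i a b : σ) :
    pderiv i (delta a b : MvPolynomial σ ℝ) = 0 := by
  unfold delta; split_ifs <;> simp

variable [Fintype σ]

section RadialGauge

variable {H : σ → σ → MvPolynomial σ ℝ}

theorem sum_X_mul_pderiv_of_radial (hH : ∀ i, ∑ j, X j * H i j = 0) (i j : σ) :
    ∑ k, X k * pderiv j (H i k) = -H i j := by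
  have h := congr(pderiv j $(hH i))
  rw [pderiv_sum_X_mul, map_zero] at h
  linear_combination h

theorem sum_X_mul_pderiv_pderiv_of_radial (hH : ∀ i, ∑ j, X j * H i j = 0) (i j l : σ) :
    ∑ k, X k * pderiv i (pderiv l (H j k)) = -pderiv i (H j l) - pderiv l (H j i) := by
  have h := congr(pderiv i $(sum_X_mul_pderiv_of_radial hH j l))
  rw [pderiv_sum_X_mul, map_neg] at h
  linear_combination h

theorem sum_X_mul_euler_of_radial (hH : ∀ i, ∑ j, X j * H i j = 0) (i : σ) :
    ∑ j, X j * euler (H i j) = 0 := by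
  have h := congr(euler $(hH i))
  simp only [map_sum, Derivation.leibniz, smul_eq_mul, Finset.sum_add_distrib, map_zero] at h
  have hX (j : σ) : euler (X j : MvPolynomial σ ℝ) = X j := mkDerivation_X ..
  simpa only [hX, mul_comm (H i _), hH i, add_zero] using h

theorem sum_X_mul_linearizedRiemann (hs : ∀ i j, H i j = H j i)
    (hH : ∀ i, ∑ j, X j * H i j = 0) (i j l : σ) :
    ∑ k, X k * linearizedRiemann H i j k l
      = pderiv i (euler (H j l)) - pderiv j (euler (H i l)) := by
  have hcomm (i j l : σ) : ∑ k, X k * pderiv i (pderiv k (H j l)) = euler (pderiv i (H j l)) := by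
    simp only [euler_eq_sum, pderiv_comm i]
  simp only [linearizedRiemann, alternate, mul_add, mul_sub, Finset.sum_add_distrib,
    Finset.sum_sub_distrib, hcomm, sum_X_mul_pderiv_pderiv_of_radial hH, pderiv_euler, hs i j]
  ring

theorem sum_X_mul_sum_X_mul_linearizedRiemann (hs : ∀ i j, H i j = H j i)
    (hH : ∀ i, ∑ j, X j * H i j = 0) (j l : σ) :
    ∑ i, X i * ∑ k, X k * linearizedRiemann H i j k l
      = euler (euler (H j l)) + euler (H j l) := by
  have hgauge := sum_X_mul_pderiv_of_radial (sum_X_mul_euler_of_radial hH) l j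
  simp only [sum_X_mul_linearizedRiemann hs hH, mul_sub, Finset.sum_sub_distrib, ← euler_eq_sum,
    hs _ l, hgauge]
  rw [hs l j]
  ring

end RadialGauge

/-- The contraction `∑ₖ xₖ Pᵢₖ` of a two-tensor with the position vector. -/
noncomputable def radial (P : σ → σ → MvPolynomial σ ℝ) (i : σ) : MvPolynomial σ ℝ :=
  ∑ k, X k * P i k

theorem sum_X_mul_sum_X_mul_kulkarniNomizu [DecidableEq σ] {P : σ → σ → MvPolynomial σ ℝ}
    (hP : ∀ i j, P i j = P j i) (j l : σ) :
    ∑ i, X i * ∑ k, X k * kulkarniNomizu P i j k l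
      = (∑ i, X i * radial P i) * delta j l - radial P l * X j - radial P j * X l
        + P j l * ∑ i, X i * X i := by
  have hinner (i : σ) : ∑ k, X k * kulkarniNomizu P i j k l
      = radial P i * delta j l - P i l * X j - radial P j * delta i l + P j l * X i := by
    simp only [kulkarniNomizu, alternate, mul_add, mul_sub, Finset.sum_add_distrib,
      Finset.sum_sub_distrib, ← mul_assoc, sum_mul_delta, radial, Finset.sum_mul]
    ring
  simp only [hinner, mul_add, mul_sub, Finset.sum_add_distrib, Finset.sum_sub_distrib,
    ← mul_assoc, sum_mul_delta', ← Finset.sum_mul]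
  have hl : ∑ i, X i * P i l = radial P l := Finset.sum_congr rfl fun i _ => by rw [hP]
  rw [hl, Finset.mul_sum, mul_comm (X l)]
  congr 1
  exact Finset.sum_congr rfl fun i _ => by ring

namespace IsCodazzi

variable {P : σ → σ → MvPolynomial σ ℝ}

theorem pderiv_radial (h : IsCodazzi P) (i j : σ) :
    pderiv j (radial P i) = P i j + euler (P i j) := by
  rw [radial, pderiv_sum_X_mul, euler_eq_sum]
  congr 1
  exact Finset.sum_congr rfl fun k _ => by rw [h.symm i k, h.pderiv_swap j, h.symm j]

theorem pderiv_sum_X_mul_radial (h : IsCodazzi P) (i : σ) :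
    pderiv i (∑ j, X j * radial P j) = radial P i + euler (radial P i) := by
  simp only [pderiv_sum_X_mul, euler_eq_sum (radial P i), h.pderiv_radial, h.symm i]

theorem laplacian_sum_X_mul_radial (h : IsCodazzi P) :
    ∑ i, pderiv i (pderiv i (∑ j, X j * radial P j))
      = euler (euler (∑ i, P i i) + ∑ i, P i i)
        + (2 : ℝ) • (euler (∑ i, P i i) + ∑ i, P i i) := by
  simp only [h.pderiv_sum_X_mul_radial, map_add, pderiv_euler, h.pderiv_radial,
    Finset.sum_add_distrib, ← map_sum, two_smul]
  ring

theorem eq_zero_of_trace_identity (h : IsCodazzi P) {k : ℝ} (hk : 0 < k)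
    (hF : k • ∑ i, X i * radial P i + (∑ i, X i * X i) * ∑ i, P i i = 0) (i j : σ) :
    P i j = 0 := by
  have htrace : ∑ i, P i i = 0 := by
    refine eq_zero_of_laplacian_eq_neg_euler hk ?_
    rw [← h.laplacian_sum_X_mul_radial, eq_neg_of_add_eq_zero_right hF]
    simp only [map_neg, Derivation.map_smul, Finset.sum_neg_distrib, ← Finset.smul_sum]
  have hzero : ∑ i, X i * radial P i = 0 := by
    rw [htrace, mul_zero, add_zero] at hF
    exact (smul_eq_zero.1 hF).resolve_left hk.ne'
  have hradial (i : σ) : radial P i = 0 := eq_zero_of_euler_add_self <| by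
    rw [add_comm, ← h.pderiv_sum_X_mul_radial, hzero, map_zero]
  exact eq_zero_of_euler_add_self <| by
    rw [add_comm, ← h.pderiv_radial, hradial, map_zero]

end IsCodazzi

section KulkarniNomizu

variable [DecidableEq σ] {H P : σ → σ → MvPolynomial σ ℝ}

theorem eq_zero_of_linearizedRiemann_eq_kulkarniNomizu (hσ : 3 ≤ Fintype.card σ)
    (hs : ∀ i j, H i j = H j i) (htr : ∑ i, H i i = 0) (h0 : ∀ i j, coeff 0 (H i j) = 0)
    (hH : ∀ i, ∑ j, X j * H i j = 0) (hP : IsCodazzi P)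
    (hR : linearizedRiemann H = kulkarniNomizu P) (i j : σ) : H i j = 0 := by
  have hcontract (j l : σ) : euler (euler (H j l)) + euler (H j l)
      = (∑ i, X i * radial P i) * delta j l - radial P l * X j - radial P j * X l
        + P j l * ∑ i, X i * X i := by
    rw [← sum_X_mul_sum_X_mul_linearizedRiemann hs hH, hR,
      sum_X_mul_sum_X_mul_kulkarniNomizu hP.symm]
  have hcard : (3 : ℝ) ≤ Fintype.card σ := by exact_mod_cast hσ
  have htrace : ((Fintype.card σ : ℝ) - 2) • ∑ i, X i * radial P i
      + (∑ i, X i * X i) * ∑ i, P i i = 0 := by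
    have h : ∑ j, (euler (euler (H j j)) + euler (H j j)) = 0 := by
      simp only [Finset.sum_add_distrib, ← map_sum, htr, map_zero, add_zero]
    simp only [hcontract, delta_self, mul_one, Finset.sum_add_distrib, Finset.sum_sub_distrib,
      Finset.sum_const, Finset.card_univ, ← Finset.sum_mul, mul_comm (radial P _)] at h
    rw [sub_smul, Nat.cast_smul_eq_nsmul, two_smul]
    linear_combination h
  have hP0 := hP.eq_zero_of_trace_identity (by linarith) htrace
  have hradial (i : σ) : radial P i = 0 := by simp [radial, hP0]
  refine eq_zero_of_euler_eq_zero (h0 i j) (eq_zero_of_euler_add_self ?_)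
  simp [hcontract, hradial, hP0]

theorem sum_pderiv_kulkarniNomizu (P : σ → σ → MvPolynomial σ ℝ) (e a c : σ) :
    ∑ b, pderiv e (kulkarniNomizu P a b c b)
      = ((Fintype.card σ : MvPolynomial σ ℝ) - 2) * pderiv e (P a c)
        + pderiv e (∑ b, P b b) * delta a c := by
  have h2 : pderiv e (2 : MvPolynomial σ ℝ) = 0 := (pderiv e).map_natCast 2
  rw [← map_sum, sum_kulkarniNomizu]
  simp only [map_add, Derivation.leibniz, smul_eq_mul, pderiv_delta, map_sub,
    Derivation.map_natCast, h2]
  ring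

theorem divergence_kulkarniNomizu (P : σ → σ → MvPolynomial σ ℝ) (e a c : σ) :
    ∑ b, pderiv b (kulkarniNomizu P e a c b)
      = pderiv a (P e c) - delta a c * ∑ b, pderiv b (P e b) - pderiv e (P a c)
        + delta e c * ∑ b, pderiv b (P a b) := by
  simp only [kulkarniNomizu, alternate, map_add, map_sub, Derivation.leibniz, smul_eq_mul,
    pderiv_delta, mul_zero, zero_add, Finset.sum_add_distrib, Finset.sum_sub_distrib,
    ← Finset.mul_sum]
  simp only [mul_comm (delta _ _), sum_mul_delta]

/- The trace of the second Bianchi identity, followed by one more trace, isolates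
`∂ₑ P a c - ∂ₐ P e c`. -/
theorem isCodazzi_of_bianchi (hσ : 4 ≤ Fintype.card σ) (hs : ∀ i j, P i j = P j i)
    (hB : ∀ e a b c d, pderiv e (kulkarniNomizu P a b c d) + pderiv a (kulkarniNomizu P b e c d)
      + pderiv b (kulkarniNomizu P e a c d) = 0) : IsCodazzi P where
  symm := hs
  pderiv_swap e a c := by
    have hcard : (4 : ℝ) ≤ Fintype.card σ := by exact_mod_cast hσ
    let v (e : σ) := pderiv e (∑ b, P b b) - ∑ b, pderiv b (P e b)
    have traced (e a c : σ) : ((Fintype.card σ : MvPolynomial σ ℝ) - 3)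
        * (pderiv e (P a c) - pderiv a (P e c)) + delta a c * v e - delta e c * v a = 0 := by
      have h : ∑ b, (pderiv e (kulkarniNomizu P a b c b) - pderiv a (kulkarniNomizu P e b c b)
          + pderiv b (kulkarniNomizu P e a c b)) = 0 := Finset.sum_eq_zero fun b _ => by
        rw [← hB e a b c b, kulkarniNomizu, alternate_swap_left _ e b, map_neg, sub_eq_add_neg]
      rw [Finset.sum_add_distrib, Finset.sum_sub_distrib, sum_pderiv_kulkarniNomizu,
        sum_pderiv_kulkarniNomizu, divergence_kulkarniNomizu] at h
      linear_combination h
    have hv (e : σ) : v e = 0 := by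
      have h := Finset.sum_eq_zero fun a (_ : a ∈ Finset.univ) => traced e a a
      simp only [Finset.sum_sub_distrib, Finset.sum_add_distrib, ← Finset.mul_sum, delta_self,
        one_mul, mul_comm (delta e _), sum_mul_delta, Finset.sum_const, Finset.card_univ,
        nsmul_eq_mul, ← map_sum] at h
      have h' : C (2 * (Fintype.card σ : ℝ) - 4) * v e = 0 := by
        simp only [map_sub, map_mul, map_natCast, map_ofNat]
        linear_combination h
      exact (mul_eq_zero.1 h').resolve_left (C_ne_zero.2 (by linarith))
    have h : C ((Fintype.card σ : ℝ) - 3) * (pderiv e (P a c) - pderiv a (P e c)) = 0 := by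
      simpa only [hv, mul_zero, add_zero, sub_zero, map_sub, map_natCast, map_ofNat]
        using traced e a c
    exact sub_eq_zero.1 ((mul_eq_zero.1 h).resolve_left (C_ne_zero.2 (by linarith)))

theorem eval_kulkarniNomizu_schouten (K : σ → σ → σ → σ → MvPolynomial σ ℝ) (y : σ → ℝ)
    (c a d b : σ) : eval y (kulkarniNomizu (schouten K) c a d b)
      = kulkarniNomizu (schouten fun c a d b => eval y (K c a d b)) c a d b := by
  simp only [map_kulkarniNomizu, schouten, smul_eval, map_sub, map_sum, map_mul, map_delta]
  rfl

theorem linearizedRiemann_eq_kulkarniNomizu (hσ : 3 ≤ Fintype.card σ) (hs : ∀ i j, H i j = H j i)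
    (hW : ∀ C, IsWeyl C → ∀ y : σ → ℝ,
      contract C (fun c a d b => eval y (pderiv c (pderiv d (H a b)))) = 0) :
    linearizedRiemann H = kulkarniNomizu (schouten (linearizedRiemann H)) := by
  funext c a d b
  refine MvPolynomial.funext fun y => ?_
  have heval : (fun c a d b => eval y (linearizedRiemann H c a d b))
      = alternate fun c a d b => eval y (pderiv c (pderiv d (H a b))) := by
    funext c a d b; simp only [linearizedRiemann, alternate, map_add, map_sub]
  rw [eval_kulkarniNomizu_schouten, heval, ← alternate_eq_kulkarniNomizu hσ
    (fun c a d b => by rw [pderiv_comm d c, hs b a]) (fun C hC => hW C hC y), ← heval]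

end KulkarniNomizu

end PolynomialCurvature

section BoundaryJet

open MvPolynomial

theorem killCompl_pderiv {σ τ : Type*} {f : σ → τ} (hf : f.Injective) (i : σ)
    (p : MvPolynomial τ ℝ) :
    killCompl hf (pderiv (f i) p) = pderiv i (killCompl hf p) := by
  classical
  ext s
  simp [coeff_killCompl, coeff_pderiv, Finsupp.mapDomain_add, Finsupp.mapDomain_single,
    Finsupp.mapDomain_apply hf]

variable {m : ℕ}

/-- The restriction to the hyperplane `x_m = 0` of the `k`-th derivative in the last variable. -/
noncomputable def normalDeriv (k : ℕ) :
    MvPolynomial (Fin (m + 1)) ℝ →ₗ[ℝ] MvPolynomial (Fin m) ℝ :=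
  (killCompl (Fin.castSucc_injective m)).toLinearMap ∘ₗ
    ((pderiv (Fin.last m)).toLinearMap : Module.End ℝ (MvPolynomial (Fin (m + 1)) ℝ)) ^ k

theorem normalDeriv_zero (p : MvPolynomial (Fin (m + 1)) ℝ) :
    normalDeriv 0 p = killCompl (Fin.castSucc_injective m) p := rfl

theorem normalDeriv_pderiv_last (k : ℕ) (p : MvPolynomial (Fin (m + 1)) ℝ) :
    normalDeriv k (pderiv (Fin.last m) p) = normalDeriv (k + 1) p := by
  simp only [normalDeriv, LinearMap.comp_apply, pow_succ, Module.End.mul_apply]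
  rfl

theorem normalDeriv_pderiv_castSucc (k : ℕ) (i : Fin m) (p : MvPolynomial (Fin (m + 1)) ℝ) :
    normalDeriv k (pderiv i.castSucc p) = pderiv i (normalDeriv k p) := by
  induction k generalizing p with
  | zero => exact killCompl_pderiv _ i p
  | succ k ih => rw [← normalDeriv_pderiv_last, pderiv_comm, ih, normalDeriv_pderiv_last]

theorem eval_normalDeriv_zero (y : Fin m → ℝ) (p : MvPolynomial (Fin (m + 1)) ℝ) :
    eval y (normalDeriv 0 p) = eval (Fin.snoc (α := fun _ => ℝ) y 0) p := by
  have h : (aeval y).comp (killCompl (R := ℝ) (Fin.castSucc_injective m))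
      = aeval (Fin.snoc (α := fun _ => ℝ) y 0) := by
    ext i
    cases i using Fin.lastCases with
    | last => simp [killCompl]
    | cast i => simp [killCompl]
  simpa [normalDeriv_zero, aeval_eq_eval] using congr($h p)

theorem eq_zero_of_normalDeriv_eq_zero {p : MvPolynomial (Fin (m + 1)) ℝ}
    (h : ∀ k, normalDeriv k p = 0) : p = 0 := by
  ext s
  rw [coeff_zero]
  generalize hk : s (Fin.last m) = k
  induction k generalizing s p with
  | zero =>
    have hs : (s.support : Set (Fin (m + 1))) ⊆ Set.range Fin.castSucc := fun i hi => by
      cases i using Fin.lastCases with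
      | last => exact absurd hk (by simpa using hi)
      | cast i => exact ⟨i, rfl⟩
    rw [← s.mapDomain_comapDomain _ (Fin.castSucc_injective m) hs,
      ← coeff_killCompl (Fin.castSucc_injective m), ← normalDeriv_zero, h 0, coeff_zero]
  | succ k ih =>
    have hs : s - Finsupp.single (Fin.last m) 1 + Finsupp.single (Fin.last m) 1 = s :=
      tsub_add_cancel_of_le (by simp [hk])
    have hcoeff := ih (p := pderiv (Fin.last m) p)
      (fun k => by rw [normalDeriv_pderiv_last, h]) (s - Finsupp.single (Fin.last m) 1)
      (by simp [hk])
    rw [coeff_pderiv, hs] at hcoeff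
    exact (mul_eq_zero.1 hcoeff).resolve_right (by positivity)

theorem normalDeriv_linearizedRiemann (k : ℕ)
    (H : Fin (m + 1) → Fin (m + 1) → MvPolynomial (Fin (m + 1)) ℝ) (c a d b : Fin m) :
    normalDeriv k (linearizedRiemann H c.castSucc a.castSucc d.castSucc b.castSucc)
      = linearizedRiemann (fun i j => normalDeriv k (H i.castSucc j.castSucc)) c a d b := by
  simp only [linearizedRiemann, alternate, map_add, map_sub, normalDeriv_pderiv_castSucc]

variable {H P : Fin (m + 1) → Fin (m + 1) → MvPolynomial (Fin (m + 1)) ℝ}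

theorem normalDeriv_zero_eq_zero_of_isCodazzi (hm : 3 ≤ m) (hs : ∀ i j, H i j = H j i)
    (htr : ∑ i : Fin m, H i.castSucc i.castSucc = 0) (h0 : ∀ i j, coeff 0 (H i j) = 0)
    (hgauge : ∀ i : Fin m, ∑ j : Fin m, X j * normalDeriv 0 (H i.castSucc j.castSucc) = 0)
    (hP : IsCodazzi P) (hR : linearizedRiemann H = kulkarniNomizu P) (i j : Fin m) :
    normalDeriv 0 (H i.castSucc j.castSucc) = 0 := by
  refine eq_zero_of_linearizedRiemann_eq_kulkarniNomizu
    (H := fun i j => normalDeriv 0 (H i.castSucc j.castSucc))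
    (P := fun i j => normalDeriv 0 (P i.castSucc j.castSucc)) (by simpa using hm)
    (fun i j => by rw [hs]) (by rw [← map_sum, htr, map_zero]) (fun i j => ?_) hgauge
    ⟨fun i j => by rw [hP.symm], fun k i j => ?_⟩ ?_ i j
  · rw [normalDeriv_zero, coeff_killCompl, Finsupp.mapDomain_zero, h0]
  · simp only [← normalDeriv_pderiv_castSucc, hP.pderiv_swap k.castSucc]
  · funext c a d b
    rw [← normalDeriv_linearizedRiemann, hR, kulkarniNomizu_comp (Fin.castSucc_injective m)]
    simp only [normalDeriv_zero, kulkarniNomizu, alternate, map_add, map_sub, map_mul, map_delta]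

theorem pderiv_last_pderiv_last_eq (hN : ∀ a, H a (Fin.last m) = 0)
    (hN' : ∀ a, H (Fin.last m) a = 0) (hR : linearizedRiemann H = kulkarniNomizu P) (i j : Fin m) :
    pderiv (Fin.last m) (pderiv (Fin.last m) (H i.castSucc j.castSucc))
      = P i.castSucc j.castSucc + P (Fin.last m) (Fin.last m) * delta i j := by
  have h := congr($hR i.castSucc (Fin.last m) j.castSucc (Fin.last m))
  simp only [linearizedRiemann, kulkarniNomizu, alternate, hN, hN', delta, map_zero, if_true,
    (Fin.castSucc_lt_last _).ne, (Fin.castSucc_lt_last _).ne', if_false, Fin.castSucc_inj] at h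
  rw [delta]
  linear_combination h

theorem smul_pderiv_last_pderiv_last_eq (hN : ∀ a, H a (Fin.last m) = 0)
    (hN' : ∀ a, H (Fin.last m) a = 0) (htr : ∑ i : Fin m, H i.castSucc i.castSucc = 0)
    (hR : linearizedRiemann H = kulkarniNomizu P) (i j : Fin m) :
    ((m : ℝ) * (m - 2)) • pderiv (Fin.last m) (pderiv (Fin.last m) (H i.castSucc j.castSucc))
      = (m : ℝ) • ∑ k : Fin m, linearizedRiemann H i.castSucc k.castSucc j.castSucc k.castSucc
        - (delta i j : ℝ) • ∑ l : Fin m, ∑ k : Fin m,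
          linearizedRiemann H l.castSucc k.castSucc l.castSucc k.castSucc := by
  have hnormal := pderiv_last_pderiv_last_eq hN hN' hR
  have hricci (i j : Fin m) :
      ∑ k : Fin m, linearizedRiemann H i.castSucc k.castSucc j.castSucc k.castSucc
        = ((m : MvPolynomial (Fin (m + 1)) ℝ) - 2) * P i.castSucc j.castSucc
          + (∑ k : Fin m, P k.castSucc k.castSucc) * delta i j := by
    simp only [hR, kulkarniNomizu_comp (Fin.castSucc_injective m), sum_kulkarniNomizu,
      Fintype.card_fin]
  have htrP : ∑ k : Fin m, P k.castSucc k.castSucc = -(m * P (Fin.last m) (Fin.last m)) := by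
    have h := congr(pderiv (Fin.last m) (pderiv (Fin.last m) $htr))
    simp only [map_sum, hnormal, delta_self, mul_one, Finset.sum_add_distrib, Finset.sum_const,
      Finset.card_univ, Fintype.card_fin, nsmul_eq_mul, map_zero] at h
    linear_combination h
  simp only [hnormal, hricci, Finset.sum_add_distrib, ← Finset.mul_sum, htrP,
    delta_self, mul_one, Finset.sum_const, Finset.card_univ, Fintype.card_fin, nsmul_eq_mul,
    smul_eq_C_mul, map_mul, map_sub, map_natCast, map_ofNat, map_delta]
  ring

/- The Cauchy problem from the boundary: the previous identity expresses each normal derivative of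
order `k + 2` through tangential derivatives of the one of order `k`. -/
theorem eq_zero_of_contract_pderiv_pderiv_eq_zero (hm : 3 ≤ m) (hs : ∀ i j, H i j = H j i)
    (htr : ∑ a, H a a = 0) (hN : ∀ a, H a (Fin.last m) = 0) (h0 : ∀ i j, coeff 0 (H i j) = 0)
    (hW : ∀ C, IsWeyl C → ∀ y : Fin (m + 1) → ℝ,
      contract C (fun c a d b => eval y (pderiv c (pderiv d (H a b)))) = 0)
    (hgauge : ∀ i : Fin m, ∑ j : Fin m, X j * normalDeriv 0 (H i.castSucc j.castSucc) = 0)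
    (hnormal : ∀ i j : Fin m, normalDeriv 1 (H i.castSucc j.castSucc) = 0) (a b : Fin (m + 1)) :
    H a b = 0 := by
  have hN' (a) : H (Fin.last m) a = 0 := by rw [hs, hN]
  have htr' : ∑ i : Fin m, H i.castSucc i.castSucc = 0 := by
    rwa [Fin.sum_univ_castSucc, hN, add_zero] at htr
  have hR := linearizedRiemann_eq_kulkarniNomizu (by simp; omega) hs hW
  have hP : IsCodazzi (schouten (linearizedRiemann H)) := isCodazzi_of_bianchi (by simp; omega)
    (schouten_comm (alternate_pair_swap fun c a d b => by rw [pderiv_comm d c, hs b a]))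
    fun e a b c d => by rw [← hR, linearizedRiemann_bianchi]
  have hm' : (m : ℝ) * (m - 2) ≠ 0 := by
    have : (3 : ℝ) ≤ m := by exact_mod_cast hm
    exact (mul_pos (by linarith) (by linarith)).ne'
  have hjet (k : ℕ) : ∀ i j : Fin m, normalDeriv k (H i.castSucc j.castSucc) = 0 := by
    induction k using Nat.twoStepInduction with
    | zero => exact normalDeriv_zero_eq_zero_of_isCodazzi hm hs htr' h0 hgauge hP hR
    | one => exact hnormal
    | more k ih _ =>
      intro i j
      have h := congr(normalDeriv k $(smul_pderiv_last_pderiv_last_eq hN hN' htr' hR i j))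
      simp only [map_smul, map_sub, map_sum, normalDeriv_pderiv_last,
        normalDeriv_linearizedRiemann, ih] at h
      refine (smul_eq_zero.1 (h.trans ?_)).resolve_left hm'
      simp [linearizedRiemann, alternate]
  cases a using Fin.lastCases with
  | last => exact hN' b
  | cast i =>
    cases b using Fin.lastCases with
    | last => exact hN _
    | cast j => exact eq_zero_of_normalDeriv_eq_zero fun k => hjet k i j

end BoundaryJet

section PartialDeriv

open scoped ContDiff

variable {ι : Type*}

theorem differentiable_of_smooth [Fintype ι] {f : (ι → ℝ) → ℝ} (hf : ContDiff ℝ ∞ f) :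
    Differentiable ℝ f :=
  hf.differentiable (by simp)

theorem contDiff_eval [Fintype ι] (p : MvPolynomial ι ℝ) :
    ContDiff ℝ ∞ fun x => MvPolynomial.eval x p := by
  induction p using MvPolynomial.induction_on with
  | C r => simpa using contDiff_const
  | add p q hp hq => simpa using hp.add hq
  | mul_X p i hp => simpa using hp.mul (contDiff_apply ℝ ℝ i)

variable [DecidableEq ι]

/-- The partial derivative `∂f/∂xₐ` of a function of the coordinates indexed by `ι`. -/
noncomputable def partialDeriv (a : ι) (f : (ι → ℝ) → ℝ) (x : ι → ℝ) : ℝ :=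
  fderiv ℝ f x (Pi.single a 1)

/-- The iterated partial derivative along a list of coordinates, the head being applied last. -/
noncomputable def iteratedPartialDeriv (l : List ι) (f : (ι → ℝ) → ℝ) : (ι → ℝ) → ℝ :=
  l.foldr partialDeriv f

theorem iteratedPartialDeriv_cons (a : ι) (l : List ι) (f : (ι → ℝ) → ℝ) :
    iteratedPartialDeriv (a :: l) f = partialDeriv a (iteratedPartialDeriv l f) := rfl

variable {a : ι} {f g : (ι → ℝ) → ℝ} {x : ι → ℝ}

theorem partialDeriv_const (r : ℝ) : partialDeriv a (fun _ => r) x = 0 := by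
  simp [partialDeriv]

theorem partialDeriv_apply (a b : ι) (x : ι → ℝ) : partialDeriv a (fun y => y b) x = delta a b := by
  simp only [partialDeriv, (hasFDerivAt_apply b x).fderiv, ContinuousLinearMap.proj_apply, delta,
    Pi.single_apply, eq_comm]

section Finite

variable [Finite ι]

theorem partialDeriv_add (hf : DifferentiableAt ℝ f x) (hg : DifferentiableAt ℝ g x) :
    partialDeriv a (fun y => f y + g y) x = partialDeriv a f x + partialDeriv a g x := by
  cases nonempty_fintype ι
  simp only [partialDeriv, fderiv_fun_add hf hg, add_apply]

theorem partialDeriv_sub (hf : DifferentiableAt ℝ f x) (hg : DifferentiableAt ℝ g x) :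
    partialDeriv a (fun y => f y - g y) x = partialDeriv a f x - partialDeriv a g x := by
  cases nonempty_fintype ι
  simp only [partialDeriv, fderiv_fun_sub hf hg, sub_apply]

theorem partialDeriv_mul (hf : DifferentiableAt ℝ f x) (hg : DifferentiableAt ℝ g x) :
    partialDeriv a (fun y => f y * g y) x
      = partialDeriv a f x * g x + f x * partialDeriv a g x := by
  cases nonempty_fintype ι
  simp only [partialDeriv, fderiv_fun_mul hf hg, add_apply, smul_apply, smul_eq_mul]
  ring

theorem partialDeriv_const_mul (r : ℝ) (hf : DifferentiableAt ℝ f x) :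
    partialDeriv a (fun y => r * f y) x = r * partialDeriv a f x := by
  rw [partialDeriv_mul (differentiableAt_const r) hf, partialDeriv_const, zero_mul, zero_add]

theorem partialDeriv_sum {κ : Type*} {s : Finset κ} {F : κ → (ι → ℝ) → ℝ}
    (hF : ∀ k, DifferentiableAt ℝ (F k) x) :
    partialDeriv a (fun y => ∑ k ∈ s, F k y) x = ∑ k ∈ s, partialDeriv a (F k) x := by
  cases nonempty_fintype ι
  simp only [partialDeriv, fderiv_fun_sum fun k _ => hF k, sum_apply]

theorem partialDeriv_eval (p : MvPolynomial ι ℝ) (a : ι) :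
    partialDeriv a (fun x => MvPolynomial.eval x p)
      = fun x => MvPolynomial.eval x (MvPolynomial.pderiv a p) := by
  cases nonempty_fintype ι
  have hdiff (p : MvPolynomial ι ℝ) := differentiable_of_smooth (contDiff_eval p)
  funext x
  induction p using MvPolynomial.induction_on with
  | C r => simp [partialDeriv_const]
  | add p q hp hq => simp only [map_add, partialDeriv_add (hdiff p x) (hdiff q x), hp, hq]
  | mul_X p i hp =>
    have hX : MvPolynomial.eval x (MvPolynomial.pderiv a (MvPolynomial.X i)) = delta a i := by
      obtain rfl | h := eq_or_ne a i
      · rw [MvPolynomial.pderiv_X_self, map_one, delta_self]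
      · rw [MvPolynomial.pderiv_X_of_ne h.symm, map_zero, delta, if_neg h]
    simp only [map_mul, MvPolynomial.eval_X]
    rw [partialDeriv_mul (hdiff p x) (by fun_prop), hp, partialDeriv_apply, Derivation.leibniz]
    simp only [smul_eq_mul, map_add, map_mul, MvPolynomial.eval_X, hX]
    ring

end Finite

variable [Fintype ι]

theorem contDiff_partialDeriv (hf : ContDiff ℝ ∞ f) (a : ι) : ContDiff ℝ ∞ (partialDeriv a f) :=
  (hf.fderiv_right (m := ∞) (by simp)).clm_apply contDiff_const

theorem partialDeriv_comm (hf : ContDiff ℝ ∞ f) (a b : ι) :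
    partialDeriv a (partialDeriv b f) = partialDeriv b (partialDeriv a f) := by
  have hdf : Differentiable ℝ (fderiv ℝ f) :=
    (hf.fderiv_right (m := ∞) (by simp)).differentiable (by simp)
  have second_deriv (a b : ι) (x : ι → ℝ) : partialDeriv a (partialDeriv b f) x
      = fderiv ℝ (fderiv ℝ f) x (Pi.single a 1) (Pi.single b 1) := by
    unfold partialDeriv
    rw [fderiv_clm_apply (hdf x) (by fun_prop)]
    simp
  have hf2 : ContDiff ℝ 2 f := hf.of_le (WithTop.coe_le_coe.2 le_top)
  funext x
  rw [second_deriv, second_deriv]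
  exact hf2.contDiffAt.isSymmSndFDerivAt (by simp) _ _

theorem norm_fderiv_le_of_abs_partialDeriv_le {L : ℝ} (hL : 0 ≤ L)
    (h : ∀ a, |partialDeriv a f x| ≤ L) : ‖fderiv ℝ f x‖ ≤ Fintype.card ι * L := by
  refine ContinuousLinearMap.opNorm_le_bound _ (by positivity) fun v => ?_
  have hv : fderiv ℝ f x v = ∑ a, v a * partialDeriv a f x := by
    conv_lhs => rw [pi_eq_sum_univ' v]
    simp only [map_sum, map_smul, smul_eq_mul, partialDeriv]
  rw [hv]
  refine (norm_sum_le_of_le _ fun a _ => ?_).trans_eq (b := ∑ _a : ι, L * ‖v‖) (by simp [mul_assoc])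
  rw [norm_mul, mul_comm]
  exact mul_le_mul (h a) (norm_le_pi_norm v a) (norm_nonneg _) hL

theorem integral_mul_partialDeriv {ψ : (ι → ℝ) → ℝ} (hf : ContDiff ℝ ∞ f) (hψ : ContDiff ℝ ∞ ψ)
    (hc : HasCompactSupport ψ) (a : ι) :
    ∫ x, ψ x * partialDeriv a f x = -∫ x, partialDeriv a ψ x * f x := by
  have hf' := (contDiff_partialDeriv hf a).continuous
  have hψ' := (contDiff_partialDeriv hψ a).continuous
  exact integral_mul_fderiv_eq_neg_fderiv_mul_of_integrable
    ((hψ'.mul hf.continuous).integrable_of_hasCompactSupport (hc.fderiv_apply ℝ _).mul_right)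
    ((hψ.continuous.mul hf').integrable_of_hasCompactSupport hc.mul_right)
    ((hψ.continuous.mul hf.continuous).integrable_of_hasCompactSupport hc.mul_right)
    (fun x _ => differentiable_of_smooth hψ x) (fun x _ => differentiable_of_smooth hf x)

theorem contDiff_iteratedPartialDeriv (hf : ContDiff ℝ ∞ f) :
    ∀ l : List ι, ContDiff ℝ ∞ (iteratedPartialDeriv l f)
  | [] => hf
  | a :: l => contDiff_partialDeriv (contDiff_iteratedPartialDeriv hf l) a

theorem iteratedPartialDeriv_sub (hf : ContDiff ℝ ∞ f) (hg : ContDiff ℝ ∞ g) (l : List ι) :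
    iteratedPartialDeriv l (fun y => f y - g y)
      = fun y => iteratedPartialDeriv l f y - iteratedPartialDeriv l g y := by
  induction l with
  | nil => rfl
  | cons a l ih =>
    funext y
    have df := differentiable_of_smooth (contDiff_iteratedPartialDeriv hf l)
    have dg := differentiable_of_smooth (contDiff_iteratedPartialDeriv hg l)
    rw [iteratedPartialDeriv_cons, ih, partialDeriv_sub (df y) (dg y)]
    rfl

end PartialDeriv

section WeightedDerivative

open scoped ContDiff

variable {ι : Type*} [Fintype ι] [DecidableEq ι]

/-- The first-order operator through which the `Q`-tensor of a symmetric two-tensor `T` factors: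
if `U = w ^ (-(n - 2) / 2)` then `Q = (U / w) * weightedDeriv w T`. -/
noncomputable def weightedDeriv (w : (ι → ℝ) → ℝ) (T : ι → ι → (ι → ℝ) → ℝ) (a b c : ι)
    (y : ι → ℝ) : ℝ :=
  w y * partialDeriv c (T a b) y + partialDeriv a w y * T b c y + partialDeriv b w y * T a c y
    - (∑ e, partialDeriv e w y * T a e y) * delta b c
    - (∑ e, partialDeriv e w y * T b e y) * delta a c

variable {w : (ι → ℝ) → ℝ} {T : ι → ι → (ι → ℝ) → ℝ}

theorem contDiff_weightedDeriv (hw : ContDiff ℝ ∞ w) (hT : ∀ a b, ContDiff ℝ ∞ (T a b))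
    (a b c : ι) : ContDiff ℝ ∞ (weightedDeriv w T a b c) := by
  have hw' := contDiff_partialDeriv hw
  have hT' := contDiff_partialDeriv (hT a b) c
  unfold weightedDeriv
  fun_prop

theorem partialDeriv_weightedDeriv (hw : ContDiff ℝ ∞ w) {κ : ℝ}
    (hw2 : ∀ d a y, partialDeriv d (partialDeriv a w) y = κ * delta d a)
    (hT : ∀ a b, ContDiff ℝ ∞ (T a b)) (a b c d : ι) (y : ι → ℝ) :
    partialDeriv d (weightedDeriv w T a b c) y
      = (partialDeriv d w y * partialDeriv c (T a b) y
          + partialDeriv a w y * partialDeriv d (T b c) y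
          + partialDeriv b w y * partialDeriv d (T a c) y)
        + w y * partialDeriv d (partialDeriv c (T a b)) y
        + κ * T b c y * delta a d + κ * T a c y * delta d b
        - partialDeriv d (fun y => ∑ e, partialDeriv e w y * T a e y) y * delta c b
        - partialDeriv d (fun y => ∑ e, partialDeriv e w y * T b e y) y * delta a c := by
  have dw := differentiable_of_smooth hw
  have dw' (a : ι) := differentiable_of_smooth (contDiff_partialDeriv hw a)
  have dT (a b : ι) := differentiable_of_smooth (hT a b)
  have dT' (a b c : ι) := differentiable_of_smooth (contDiff_partialDeriv (hT a b) c)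
  unfold weightedDeriv
  rw [partialDeriv_sub (by fun_prop) (by fun_prop), partialDeriv_sub (by fun_prop) (by fun_prop),
    partialDeriv_add (by fun_prop) (by fun_prop), partialDeriv_add (by fun_prop) (by fun_prop),
    partialDeriv_mul (dw y) (dT' a b c y), partialDeriv_mul (dw' a y) (dT b c y),
    partialDeriv_mul (dw' b y) (dT a c y), partialDeriv_mul (by fun_prop) (by fun_prop),
    partialDeriv_mul (by fun_prop) (by fun_prop), partialDeriv_const, partialDeriv_const, hw2, hw2,
    delta_comm c b, delta_comm a d]
  ring

theorem contract_partialDeriv_weightedDeriv {C : ι → ι → ι → ι → ℝ} (h : IsWeyl C)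
    (hw : ContDiff ℝ ∞ w) {κ : ℝ}
    (hw2 : ∀ d a y, partialDeriv d (partialDeriv a w) y = κ * delta d a)
    (hT : ∀ a b, ContDiff ℝ ∞ (T a b)) (hs : ∀ a b, T a b = T b a) (y : ι → ℝ) :
    contract C (fun c a d b => partialDeriv d (weightedDeriv w T a b c) y)
      = w y * contract C (fun c a d b => partialDeriv c (partialDeriv d (T a b)) y) := by
  set E : ι → ι → ℝ := fun a d => partialDeriv d (fun y => ∑ e, partialDeriv e w y * T a e y) y
  have hcyclic := h.contract_cyclic_eq_zero (fun d => partialDeriv d w y)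
    (G := fun c a b => partialDeriv c (T a b) y) fun c a b => by rw [hs a b]
  have hsecond : contract C (fun c a d b => w y * partialDeriv d (partialDeriv c (T a b)) y)
      = w y * contract C (fun c a d b => partialDeriv c (partialDeriv d (T a b)) y) := by
    rw [contract_const_mul, ← h.contract_pair_swap]
    simp only [fun a b => hs b a]
  have had : contract C (fun c a d b => κ * T b c y * delta a d) = 0 := by
    simpa only [h.contract_mul_delta, neg_zero] using
      h.contract_swap_right fun c a d b => κ * T d c y * delta a b
  have hdb : contract C (fun c a d b => κ * T a c y * delta d b) = 0 :=
    h.contract_eq_zero_of_symm_right fun c a d b => by rw [delta_comm]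
  have hbc : contract C (fun c a d b => E a d * delta c b) = 0 := by
    simpa only [h.contract_mul_delta, neg_zero] using
      h.contract_swap_left fun c a d b => E c d * delta a b
  have hac : contract C (fun c a d b => E b d * delta a c) = 0 :=
    h.contract_eq_zero_of_symm_left fun c a d b => by rw [delta_comm]
  simp only [partialDeriv_weightedDeriv hw hw2 hT, contract_sub, contract_add]
  simp only [contract_add] at hcyclic
  rw [hsecond, had, hdb, hbc, hac, hcyclic]
  ring

/-- The conformal Killing operator `∂ₐV_b + ∂_bVₐ - r (div V) δ_{ab}`; the trace-free normalisation
is `r = 2 / n`. -/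
noncomputable def conformalKilling (r : ℝ) (V : ι → (ι → ℝ) → ℝ) (a b : ι) (x : ι → ℝ) : ℝ :=
  partialDeriv a (V b) x + partialDeriv b (V a) x - r * (∑ c, partialDeriv c (V c) x) * delta a b

theorem contDiff_conformalKilling (r : ℝ) {V : ι → (ι → ℝ) → ℝ} (hV : ∀ a, ContDiff ℝ ∞ (V a))
    (a b : ι) : ContDiff ℝ ∞ (conformalKilling r V a b) := by
  have hV' (a b : ι) := contDiff_partialDeriv (hV b) a
  unfold conformalKilling
  fun_prop

theorem partialDeriv_conformalKilling (r : ℝ) {V : ι → (ι → ℝ) → ℝ} (hV : ∀ a, ContDiff ℝ ∞ (V a))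
    (a b c : ι) :
    partialDeriv c (conformalKilling r V a b)
      = conformalKilling r (fun b => partialDeriv c (V b)) a b := by
  have dV (a b : ι) := differentiable_of_smooth (contDiff_partialDeriv (hV b) a)
  funext x
  unfold conformalKilling
  rw [partialDeriv_sub (by fun_prop) (by fun_prop), partialDeriv_add (dV a b x) (dV b a x),
    partialDeriv_mul (by fun_prop) (by fun_prop), partialDeriv_const, mul_zero, add_zero,
    partialDeriv_const_mul _ (by fun_prop), partialDeriv_sum fun e => dV e e x]
  simp only [fun a b => partialDeriv_comm (hV b) c a]

theorem contract_partialDeriv_conformalKilling {C : ι → ι → ι → ι → ℝ} (h : IsWeyl C) (r : ℝ)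
    {V : ι → (ι → ℝ) → ℝ} (hV : ∀ a, ContDiff ℝ ∞ (V a)) (y : ι → ℝ) :
    contract C (fun c a d b => partialDeriv c (partialDeriv d (conformalKilling r V a b)) y)
      = 0 := by
  have hV' (d b : ι) := contDiff_partialDeriv (hV b) d
  have hleft : contract C
      (fun c a d b => partialDeriv a (partialDeriv c (partialDeriv d (V b))) y) = 0 :=
    h.contract_eq_zero_of_symm_left fun c a d b => by rw [partialDeriv_comm (hV' d b)]
  have hright : contract C
      (fun c a d b => partialDeriv b (partialDeriv c (partialDeriv d (V a))) y) = 0 :=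
    h.contract_eq_zero_of_symm_right fun c a d b => by
      rw [partialDeriv_comm (hV' d a), partialDeriv_comm (hV' b a) d, partialDeriv_comm (hV a)]
  simp only [partialDeriv_conformalKilling r hV, partialDeriv_conformalKilling r (hV' _),
    conformalKilling, contract_sub, contract_add]
  rw [hleft, hright, h.contract_mul_delta]
  ring

end WeightedDerivative

section IntegralEstimates

open scoped ContDiff

theorem sq_setIntegral_le {X : Type*} [MeasurableSpace X] {μ : Measure X} {K : Set X} {f : X → ℝ}
    (hK : μ K ≠ ⊤) (hf : IntegrableOn f K μ) (hf2 : IntegrableOn (fun x => f x ^ 2) K μ) :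
    (∫ x in K, f x ∂μ) ^ 2 ≤ μ.real K * ∫ x in K, f x ^ 2 ∂μ := by
  by_cases h0 : μ K = 0
  · simp [setIntegral_measure_zero _ h0, h0, Measure.real]
  have hpos : 0 < μ.real K := ENNReal.toReal_pos h0 hK
  have hjensen := even_two.convexOn_pow.map_set_average_le (continuous_pow 2).continuousOn
    isClosed_univ h0 hK (Filter.Eventually.of_forall fun x => Set.mem_univ (f x)) hf hf2
  simp only [setAverage_eq, smul_eq_mul] at hjensen
  rw [mul_pow, inv_pow, inv_mul_le_iff₀ (by positivity)] at hjensen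
  refine hjensen.trans_eq ?_
  field_simp

theorem pow_mul_sq_le_setIntegral_sq {ι : Type*} [Fintype ι] [DecidableEq ι] {lo hi x₀ : ι → ℝ}
    {f : (ι → ℝ) → ℝ} (hf : ContDiff ℝ ∞ f) {L g t : ℝ} (hL : 0 ≤ L) (ht : 0 ≤ t) (hg : 0 ≤ g)
    (hlo : lo ≤ x₀) (hhi : ∀ a, x₀ a + t ≤ hi a)
    (hbound : ∀ x ∈ Set.Icc lo hi, ∀ a, |partialDeriv a f x| ≤ L) (hfx : 2 * g ≤ |f x₀|)
    (hLt : Fintype.card ι * L * t ≤ g) :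
    t ^ Fintype.card ι * g ^ 2 ≤ ∫ x in Set.Icc lo hi, f x ^ 2 := by
  set cube := Set.Icc x₀ fun a => x₀ a + t with hcube
  have hsub : cube ⊆ Set.Icc lo hi := Set.Icc_subset_Icc hlo hhi
  have hmem : x₀ ∈ cube := ⟨le_rfl, fun a => by simpa using ht⟩
  have hint : IntegrableOn (fun x => f x ^ 2) (Set.Icc lo hi) :=
    (hf.continuous.pow 2).continuousOn.integrableOn_compact isCompact_Icc
  have hvol : volume.real cube = t ^ Fintype.card ι := by
    simp [hcube, Measure.real, Real.volume_Icc_pi, ENNReal.toReal_ofReal ht]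
  have hlower (x) (hx : x ∈ cube) : g ^ 2 ≤ f x ^ 2 := by
    have hdist : ‖x - x₀‖ ≤ t := (pi_norm_le_iff_of_nonneg ht).2 fun a => by
      rw [Real.norm_eq_abs, abs_le, Pi.sub_apply]
      constructor <;> linarith [hx.1 a, hx.2 a]
    have hlip : |f x - f x₀| ≤ Fintype.card ι * L * ‖x - x₀‖ :=
      (convex_Icc lo hi).norm_image_sub_le_of_norm_fderiv_le
        (fun y _ => differentiable_of_smooth hf y)
        (fun y hy => norm_fderiv_le_of_abs_partialDeriv_le hL (hbound y hy)) (hsub hmem) (hsub hx)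
    have hclose : |f x - f x₀| ≤ g :=
      hlip.trans ((mul_le_mul_of_nonneg_left hdist (by positivity)).trans hLt)
    rw [abs_sub_comm] at hclose
    have hge : g ≤ |f x| := by linarith [abs_sub_abs_le_abs_sub (f x₀) (f x)]
    exact sq_abs (f x) ▸ pow_le_pow_left₀ hg hge 2
  calc t ^ Fintype.card ι * g ^ 2 = ∫ _ in cube, g ^ 2 := by
        rw [setIntegral_const, hvol, smul_eq_mul]
    _ ≤ ∫ x in cube, f x ^ 2 := setIntegral_mono_on
        (continuous_const.continuousOn.integrableOn_compact isCompact_Icc) (hint.mono_set hsub)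
        measurableSet_Icc hlower
    _ ≤ ∫ x in Set.Icc lo hi, f x ^ 2 := setIntegral_mono_set hint
        (Filter.Eventually.of_forall fun x => sq_nonneg _) hsub.eventuallyLE

section Contraction

variable {ι : Type*} [Fintype ι]

theorem contract_sq_le (C G : ι → ι → ι → ι → ℝ) :
    contract C G ^ 2 ≤ contract C C * contract G G := by
  have h := Finset.sum_mul_sq_le_sq_mul_sq Finset.univ
    (fun q : ι × ι × ι × ι => C q.1 q.2.1 q.2.2.1 q.2.2.2)
    (fun q => G q.1 q.2.1 q.2.2.1 q.2.2.2)
  simpa only [contract, ← sq, Fintype.sum_prod_type] using h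

theorem contract_self_tensor (v : ι → ℝ) (D : ι → ι → ι → ℝ) :
    contract (fun c a d b => v d * D a b c) (fun c a d b => v d * D a b c)
      = (∑ d, v d ^ 2) * ∑ a, ∑ b, ∑ c, D a b c ^ 2 := by
  have hinner (c a : ι) : ∑ d, ∑ b, v d * D a b c * (v d * D a b c)
      = (∑ d, v d ^ 2) * ∑ b, D a b c ^ 2 := by
    simp only [Finset.sum_mul_sum, ← sq, mul_pow]
  simp only [contract, hinner, ← Finset.mul_sum]
  rw [Finset.sum_comm]
  exact congrArg _ (Finset.sum_congr rfl fun a _ => Finset.sum_comm)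

theorem contract_self_nonneg (C : ι → ι → ι → ι → ℝ) : 0 ≤ contract C C :=
  Finset.sum_nonneg fun _ _ => Finset.sum_nonneg fun _ _ => Finset.sum_nonneg fun _ _ =>
    Finset.sum_nonneg fun _ _ => mul_self_nonneg _

theorem integral_contract {X : Type*} [MeasurableSpace X] {μ : Measure X} (C : ι → ι → ι → ι → ℝ)
    {G : ι → ι → ι → ι → X → ℝ} (hG : ∀ c a d b, Integrable (G c a d b) μ) :
    ∫ x, contract C (fun c a d b => G c a d b x) ∂μ
      = contract C (fun c a d b => ∫ x, G c a d b x ∂μ) := by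
  have h := integral_finsetSum Finset.univ
    (f := fun (q : ι × ι × ι × ι) x =>
      C q.1 q.2.1 q.2.2.1 q.2.2.2 * G q.1 q.2.1 q.2.2.1 q.2.2.2 x)
    fun q _ => (hG _ _ _ _).const_mul _
  simpa only [contract, Fintype.sum_prod_type, integral_const_mul] using h

end Contraction

section WeightedDerivSq

variable {ι : Type*} [Fintype ι] [DecidableEq ι]

/-- The squared norm of the three-tensor `weightedDeriv w T`. -/
noncomputable def weightedDerivSq (w : (ι → ℝ) → ℝ) (T : ι → ι → (ι → ℝ) → ℝ) (y : ι → ℝ) : ℝ :=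
  ∑ a, ∑ b, ∑ c, weightedDeriv w T a b c y ^ 2

variable {w : (ι → ℝ) → ℝ} {T : ι → ι → (ι → ℝ) → ℝ}

theorem weightedDerivSq_nonneg (w : (ι → ℝ) → ℝ) (T : ι → ι → (ι → ℝ) → ℝ) (y : ι → ℝ) :
    0 ≤ weightedDerivSq w T y :=
  Finset.sum_nonneg fun _ _ => Finset.sum_nonneg fun _ _ => Finset.sum_nonneg fun _ _ => sq_nonneg _

theorem continuous_weightedDerivSq (hw : ContDiff ℝ ∞ w) (hT : ∀ a b, ContDiff ℝ ∞ (T a b)) :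
    Continuous (weightedDerivSq w T) :=
  continuous_finsetSum _ fun a _ => continuous_finsetSum _ fun b _ => continuous_finsetSum _
    fun c _ => (contDiff_weightedDeriv hw hT a b c).continuous.pow 2

theorem weightedDeriv_sq_le (w : (ι → ℝ) → ℝ) (T : ι → ι → (ι → ℝ) → ℝ) (a b c : ι) (y : ι → ℝ) :
    weightedDeriv w T a b c y ^ 2 ≤ weightedDerivSq w T y := by
  have h := Finset.single_le_sum (f := fun q : ι × ι × ι => weightedDeriv w T q.1 q.2.1 q.2.2 y ^ 2)
    (fun _ _ => sq_nonneg _) (Finset.mem_univ (a, b, c))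
  simpa only [weightedDerivSq, Fintype.sum_prod_type] using h

theorem integral_mul_contract_eq_neg {C : ι → ι → ι → ι → ℝ} (h : IsWeyl C) (hw : ContDiff ℝ ∞ w)
    {κ : ℝ} (hw2 : ∀ d a y, partialDeriv d (partialDeriv a w) y = κ * delta d a)
    (hT : ∀ a b, ContDiff ℝ ∞ (T a b)) (hs : ∀ a b, T a b = T b a) {ψ : (ι → ℝ) → ℝ}
    (hψ : ContDiff ℝ ∞ ψ) (hc : HasCompactSupport ψ) :
    ∫ x, ψ x * (w x * contract C fun c a d b => partialDeriv c (partialDeriv d (T a b)) x)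
      = -∫ x, contract C fun c a d b => partialDeriv d ψ x * weightedDeriv w T a b c x := by
  have hD (a b c : ι) := contDiff_weightedDeriv hw hT a b c
  have hint (c a d b : ι) : Integrable fun x => ψ x * partialDeriv d (weightedDeriv w T a b c) x :=
    (hψ.continuous.mul (contDiff_partialDeriv (hD a b c) d).continuous)
      |>.integrable_of_hasCompactSupport hc.mul_right
  have hint' (c a d b : ι) : Integrable fun x => partialDeriv d ψ x * weightedDeriv w T a b c x :=
    ((contDiff_partialDeriv hψ d).continuous.mul (hD a b c).continuous)
      |>.integrable_of_hasCompactSupport (hc.fderiv_apply ℝ _).mul_right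
  simp only [← contract_partialDeriv_weightedDeriv h hw hw2 hT hs, ← contract_const_mul]
  rw [integral_contract C hint, integral_contract C hint', ← neg_one_mul, ← contract_const_mul]
  simp only [integral_mul_partialDeriv (hD _ _ _) hψ hc, neg_one_mul]

theorem exists_sq_setIntegral_mul_contract_le {C : ι → ι → ι → ι → ℝ} (h : IsWeyl C)
    {K : Set (ι → ℝ)} (hK : IsCompact K) {ψ : (ι → ℝ) → ℝ} (hψ : ContDiff ℝ ∞ ψ)
    (hc : HasCompactSupport ψ) (hsupp : tsupport ψ ⊆ K) :
    ∃ A : ℝ, 0 ≤ A ∧ ∀ (w : (ι → ℝ) → ℝ) (κ : ℝ) (T : ι → ι → (ι → ℝ) → ℝ), ContDiff ℝ ∞ w →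
      (∀ d a y, partialDeriv d (partialDeriv a w) y = κ * delta d a) →
      (∀ a b, ContDiff ℝ ∞ (T a b)) → (∀ a b, T a b = T b a) →
      (∫ x in K, ψ x *
          (w x * contract C fun c a d b => partialDeriv c (partialDeriv d (T a b)) x)) ^ 2
        ≤ A * ∫ x in K, weightedDerivSq w T x := by
  have hψ' (d : ι) := (contDiff_partialDeriv hψ d).continuous
  obtain ⟨B, hB⟩ := hK.exists_bound_of_continuousOn (f := fun x => ∑ d, partialDeriv d ψ x ^ 2)
    (by fun_prop)
  refine ⟨volume.real K * (contract C C * |B|),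
    mul_nonneg measureReal_nonneg (mul_nonneg (contract_self_nonneg C) (abs_nonneg B)),
    fun w κ T hw hw2 hT hs => ?_⟩
  have hD (a b c : ι) := (contDiff_weightedDeriv hw hT a b c).continuous
  set F := fun x => contract C fun c a d b => partialDeriv d ψ x * weightedDeriv w T a b c x
    with hF
  have hFcont : Continuous F := by unfold F contract; fun_prop
  have hFzero (x) (hx : x ∉ K) : F x = 0 := by
    have : fderiv ℝ ψ x = 0 := by_contra fun h' => hx (hsupp (support_fderiv_subset ℝ h'))
    simp [hF, contract, partialDeriv, this]
  have hparts : (∫ x in K, ψ x *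
      (w x * contract C fun c a d b => partialDeriv c (partialDeriv d (T a b)) x))
        = -∫ x in K, F x := by
    rw [setIntegral_eq_integral_of_forall_compl_eq_zero hFzero,
      setIntegral_eq_integral_of_forall_compl_eq_zero fun x hx => by
        rw [image_eq_zero_of_notMem_tsupport fun h' => hx (hsupp h'), zero_mul]]
    exact integral_mul_contract_eq_neg h hw hw2 hT hs hψ hc
  have hpoint (x) (hx : x ∈ K) : F x ^ 2 ≤ contract C C * |B| * weightedDerivSq w T x := by
    have hB' := (le_abs_self _).trans ((hB x hx).trans (le_abs_self B))
    refine (contract_sq_le _ _).trans ?_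
    rw [contract_self_tensor, mul_assoc]
    exact mul_le_mul_of_nonneg_left
      (mul_le_mul_of_nonneg_right hB' (weightedDerivSq_nonneg w T x)) (contract_self_nonneg C)
  rw [hparts, neg_sq, mul_assoc, ← integral_const_mul]
  refine (sq_setIntegral_le hK.measure_lt_top.ne (hFcont.continuousOn.integrableOn_compact hK)
    ((hFcont.pow 2).continuousOn.integrableOn_compact hK)).trans ?_
  exact mul_le_mul_of_nonneg_left (setIntegral_mono_on
    ((hFcont.pow 2).continuousOn.integrableOn_compact hK)
    ((continuous_const.mul (continuous_weightedDerivSq hw hT)).continuousOn.integrableOn_compact hK)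
    hK.measurableSet hpoint) measureReal_nonneg

end WeightedDerivSq

end IntegralEstimates

section ReferenceBox

open scoped ContDiff

variable {m : ℕ} {δ : ℝ} {y : Fin (m + 1) → ℝ}

/-- The squared distance `|ȳ|² + (δ + yₙ)²` to the pole `(0, -δ)` of the bubble; the bubble itself
is `(δ / weight δ) ^ ((n - 2) / 2)`. -/
noncomputable def weight (δ : ℝ) (y : Fin (m + 1) → ℝ) : ℝ :=
  ∑ a, y a ^ 2 + 2 * δ * y (Fin.last m) + δ ^ 2

theorem contDiff_weight (δ : ℝ) : ContDiff ℝ ∞ (weight (m := m) δ) := by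
  unfold weight
  fun_prop

theorem partialDeriv_weight (δ : ℝ) (a : Fin (m + 1)) :
    partialDeriv a (weight δ) = fun y => 2 * y a + 2 * δ * delta a (Fin.last m) := by
  have dsq (b : Fin (m + 1)) : Differentiable ℝ fun y : Fin (m + 1) → ℝ => y b ^ 2 := by fun_prop
  have hsq (b : Fin (m + 1)) (y : Fin (m + 1) → ℝ) :
      partialDeriv a (fun y => y b ^ 2) y = delta a b * (2 * y b) := by
    simp only [sq]
    rw [partialDeriv_mul (by fun_prop) (by fun_prop), partialDeriv_apply]
    ring
  funext y
  unfold weight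
  rw [partialDeriv_add (by fun_prop) (by fun_prop), partialDeriv_add (by fun_prop) (by fun_prop),
    partialDeriv_sum fun b => dsq b y, partialDeriv_const, partialDeriv_const_mul _ (by fun_prop),
    partialDeriv_apply]
  simp [hsq, delta]

theorem partialDeriv_partialDeriv_weight (δ : ℝ) (d a : Fin (m + 1)) (y : Fin (m + 1) → ℝ) :
    partialDeriv d (partialDeriv a (weight δ)) y = 2 * delta d a := by
  rw [partialDeriv_weight, partialDeriv_add (by fun_prop) (by fun_prop), partialDeriv_const,
    partialDeriv_const_mul _ (by fun_prop), partialDeriv_apply, add_zero]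

/-- The lower corner of the reference box. -/
noncomputable def boxLower (m : ℕ) (a : Fin (m + 1)) : ℝ := if a = 0 then 3 / 4 else 0

/-- The side length of the reference box. -/
noncomputable def boxSide (m : ℕ) : ℝ := 1 / (8 * (m + 1))

/-- The upper corner of the reference box. -/
noncomputable def boxUpper (m : ℕ) (a : Fin (m + 1)) : ℝ := boxLower m a + boxSide m

/-- A box inside the half-annulus `1 / 2 ≤ |y| < 1`, `0 ≤ yₙ`, with one face on the boundary
`yₙ = 0`. All estimates at unit scale are carried out on it. -/
def box (m : ℕ) : Set (Fin (m + 1) → ℝ) := Set.Icc (boxLower m) (boxUpper m)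

/-- The points of the boundary face of the box from which a cube of half its side still fits. -/
def boxFace (m : ℕ) : Set (Fin (m + 1) → ℝ) :=
  {x | boxLower m ≤ x ∧ (∀ a, x a + boxSide m / 2 ≤ boxUpper m a) ∧ x (Fin.last m) = 0}

theorem boxSide_pos : 0 < boxSide m := by
  unfold boxSide
  positivity

theorem boxSide_le : boxSide m ≤ 1 / 8 :=
  one_div_le_one_div_of_le (by norm_num) (by linarith [m.cast_nonneg (α := ℝ)])

theorem boxLower_last (hm : m ≠ 0) : boxLower m (Fin.last m) = 0 :=
  if_neg fun h => hm (by simpa using congrArg Fin.val h)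

theorem boxLower_lt_boxUpper (a : Fin (m + 1)) : boxLower m a < boxUpper m a :=
  lt_add_of_pos_right _ boxSide_pos

theorem isCompact_box : IsCompact (box m) := isCompact_Icc

theorem boxFace_subset_box : boxFace m ⊆ box m := fun _ hx =>
  ⟨hx.1, fun a => by linarith [hx.2.1 a, boxSide_pos (m := m)]⟩

theorem snoc_mem_boxFace (hm : m ≠ 0) {x : Fin m → ℝ} (hx : ∀ i : Fin m,
    x i ∈ Set.Icc (boxLower m i.castSucc) (boxLower m i.castSucc + boxSide m / 2)) :
    Fin.snoc (α := fun _ => ℝ) x 0 ∈ boxFace m := by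
  have hside := boxSide_pos (m := m)
  refine ⟨fun a => ?_, fun a => ?_, Fin.snoc_last _ _⟩ <;> cases a using Fin.lastCases with
  | last => simp [boxUpper, boxLower_last hm]; try linarith
  | cast i => simp only [boxUpper, Fin.snoc_castSucc]; linarith [(hx i).1, (hx i).2]

theorem nonneg_of_mem_box (hy : y ∈ box m) (a : Fin (m + 1)) : 0 ≤ y a :=
  le_trans (by unfold boxLower; split_ifs <;> norm_num) (hy.1 a)

theorem sum_sq_ge_of_mem_box (hy : y ∈ box m) : 1 / 4 ≤ ∑ a, y a ^ 2 := by
  have hy0 : 3 / 4 ≤ y 0 := by simpa [boxLower] using hy.1 0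
  have hsum : y 0 ^ 2 ≤ ∑ a, y a ^ 2 :=
    Finset.single_le_sum (f := fun a => y a ^ 2) (fun _ _ => sq_nonneg _) (Finset.mem_univ 0)
  nlinarith

theorem sum_sq_lt_one_of_mem_box (hy : y ∈ box m) : ∑ a, y a ^ 2 < 1 := by
  have hside := boxSide_pos (m := m)
  have hside' := boxSide_le (m := m)
  have hy0 : y 0 ≤ 7 / 8 := by
    have := hy.2 0
    simp only [boxUpper, boxLower, if_true] at this
    linarith
  have hsucc (i : Fin m) : y i.succ ^ 2 ≤ boxSide m ^ 2 := by
    have := hy.2 i.succ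
    simp only [boxUpper, boxLower, Fin.succ_ne_zero, if_false, zero_add] at this
    exact pow_le_pow_left₀ (nonneg_of_mem_box hy _) this 2
  have hsum : ∑ i : Fin m, y i.succ ^ 2 ≤ m * boxSide m ^ 2 :=
    (Finset.sum_le_card_nsmul _ _ _ fun i _ => hsucc i).trans_eq (by simp)
  have hm : m * boxSide m ≤ 1 / 8 := by
    unfold boxSide
    rw [mul_one_div, div_le_div_iff₀ (by positivity) (by norm_num)]
    linarith
  rw [Fin.sum_univ_succ]
  nlinarith [nonneg_of_mem_box hy 0]

theorem le_one_of_mem_box (hy : y ∈ box m) (a : Fin (m + 1)) : y a ≤ 1 := by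
  have hsum : y a ^ 2 ≤ ∑ a, y a ^ 2 :=
    Finset.single_le_sum (f := fun a => y a ^ 2) (fun _ _ => sq_nonneg _) (Finset.mem_univ a)
  nlinarith [sum_sq_lt_one_of_mem_box hy]

theorem le_weight_of_mem_box (hδ : 0 ≤ δ) (hy : y ∈ box m) : 1 / 4 ≤ weight δ y := by
  have := mul_nonneg hδ (nonneg_of_mem_box hy (Fin.last m))
  unfold weight
  nlinarith [sum_sq_ge_of_mem_box hy]

theorem abs_weight_le_of_mem_box (hδ : 0 ≤ δ) (hδ' : δ ≤ 1) (hy : y ∈ box m) :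
    |weight δ y| ≤ 4 := by
  rw [abs_of_nonneg (by linarith [le_weight_of_mem_box hδ hy])]
  have := mul_le_mul hδ' (le_one_of_mem_box hy (Fin.last m)) (nonneg_of_mem_box hy _) zero_le_one
  unfold weight
  nlinarith [sum_sq_lt_one_of_mem_box hy]

theorem abs_partialDeriv_weight_le_of_mem_box (hδ : 0 ≤ δ) (hδ' : δ ≤ 1) (hy : y ∈ box m)
    (a : Fin (m + 1)) : |partialDeriv a (weight δ) y| ≤ 4 := by
  have h0 := nonneg_of_mem_box hy a
  have h1 := le_one_of_mem_box hy a
  simp only [partialDeriv_weight, delta]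
  rw [abs_le]
  split_ifs <;> constructor <;> linarith

end ReferenceBox

section BoundaryEstimate

open scoped ContDiff

variable {m : ℕ}

/-- The algebraic conditions on `H`: symmetric, trace-free, without normal components, and
annihilated by the position vector on the boundary (written `Fin.snoc x 0`). -/
structure IsFermiGauge (H : Fin (m + 1) → Fin (m + 1) → MvPolynomial (Fin (m + 1)) ℝ) : Prop where
  symm : ∀ a b, H a b = H b a
  trace : ∑ a, H a a = 0
  normal : ∀ a, H a (Fin.last m) = 0
  radial : ∀ (i : Fin m) (x : Fin m → ℝ), ∑ j : Fin m, x j *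
    MvPolynomial.eval (Fin.snoc (α := fun _ => ℝ) x 0) (H i.castSucc j.castSucc) = 0

/-- The properties of `T = H - S`, with `S` a conformal Killing deformation, that are stable under
rescaling: the linearised Weyl tensors of `T` and `H` agree, on the boundary `T` has no mixed
components and its normal derivative is that of `H` up to a pure trace, and `M` bounds `T` in `C²`
on the reference box. -/
structure IsAdmissible (M : ℝ) (H : Fin (m + 1) → Fin (m + 1) → MvPolynomial (Fin (m + 1)) ℝ)
    (T : Fin (m + 1) → Fin (m + 1) → (Fin (m + 1) → ℝ) → ℝ) : Prop where
  contDiff : ∀ a b, ContDiff ℝ ∞ (T a b)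
  symm : ∀ a b, T a b = T b a
  weyl : ∀ C, IsWeyl C → ∀ y, contract C (fun c a d b => partialDeriv c (partialDeriv d (T a b)) y)
    = contract C fun c a d b =>
        MvPolynomial.eval y (MvPolynomial.pderiv c (MvPolynomial.pderiv d (H a b)))
  mixed : ∀ (i : Fin m) (y : Fin (m + 1) → ℝ), y (Fin.last m) = 0 →
    T i.castSucc (Fin.last m) y = 0
  normalDeriv : ∀ y : Fin (m + 1) → ℝ, y (Fin.last m) = 0 → ∃ κ : ℝ, ∀ i j : Fin m,
    partialDeriv (Fin.last m) (T i.castSucc j.castSucc) y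
      = MvPolynomial.eval y (MvPolynomial.pderiv (Fin.last m) (H i.castSucc j.castSucc))
        + κ * delta i j
  bound : ∀ l : List (Fin (m + 1)), l.length ≤ 2 → ∀ a b, ∀ y ∈ box m,
    |iteratedPartialDeriv l (T a b) y| ≤ M

theorem exists_le_abs_add_mul_delta {ι : Type*} [Fintype ι] [DecidableEq ι] {P : ι → ι → ℝ}
    (htr : ∑ i, P i i = 0) {g : ℝ} {i₀ j₀ : ι} (hP : 2 * g ≤ |P i₀ j₀|) (κ : ℝ) :
    ∃ i j, g ≤ |P i j + κ * delta i j| := by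
  by_contra! hlt
  have hcard : (0 : ℝ) < Fintype.card ι := Nat.cast_pos.2 (Fintype.card_pos_iff.2 ⟨i₀⟩)
  have hκ : |κ| ≤ g := by
    refine le_of_mul_le_mul_left ?_ hcard
    calc Fintype.card ι * |κ| = |∑ i, (P i i + κ * delta i i)| := by
          simp [Finset.sum_add_distrib, htr, delta_self, abs_mul]
      _ ≤ ∑ _i : ι, g := Finset.abs_sum_le_sum_abs _ _ |>.trans
          (Finset.sum_le_sum fun i _ => (hlt i i).le)
      _ = Fintype.card ι * g := by simp
  have hκδ : |κ * delta i₀ j₀| ≤ |κ| := by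
    rw [abs_mul]
    exact mul_le_of_le_one_right (abs_nonneg κ) (abs_delta_le_one i₀ j₀)
  have htriangle := abs_sub_abs_le_abs_add (P i₀ j₀) (κ * delta i₀ j₀)
  linarith [hlt i₀ j₀]

theorem weightedDeriv_castSucc_castSucc_last (w : (Fin (m + 1) → ℝ) → ℝ)
    (T : Fin (m + 1) → Fin (m + 1) → (Fin (m + 1) → ℝ) → ℝ) (i j : Fin m) :
    weightedDeriv w T i.castSucc j.castSucc (Fin.last m) = fun y =>
      w y * partialDeriv (Fin.last m) (T i.castSucc j.castSucc) y
        + partialDeriv i.castSucc w y * T j.castSucc (Fin.last m) y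
        + partialDeriv j.castSucc w y * T i.castSucc (Fin.last m) y := by
  funext y
  simp only [weightedDeriv, delta, (Fin.castSucc_lt_last _).ne, if_false, mul_zero, sub_zero]

variable {M δ : ℝ} {H : Fin (m + 1) → Fin (m + 1) → MvPolynomial (Fin (m + 1)) ℝ}
  {T : Fin (m + 1) → Fin (m + 1) → (Fin (m + 1) → ℝ) → ℝ}

theorem IsFermiGauge.tangential_trace (hH : IsFermiGauge H) :
    ∑ i : Fin m, H i.castSucc i.castSucc = 0 := by
  simpa only [Fin.sum_univ_castSucc, hH.normal, add_zero] using hH.trace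

theorem abs_mul_le_mul {x y X Y : ℝ} (hx : |x| ≤ X) (hy : |y| ≤ Y) : |x * y| ≤ X * Y := by
  rw [abs_mul]
  exact mul_le_mul hx hy (abs_nonneg y) ((abs_nonneg x).trans hx)

theorem IsAdmissible.abs_partialDeriv_weightedDeriv_le (hT : IsAdmissible M H T) (hδ : 0 ≤ δ)
    (hδ' : δ ≤ 1) (i j : Fin m) {y : Fin (m + 1) → ℝ} (hy : y ∈ box m) (d : Fin (m + 1)) :
    |partialDeriv d (weightedDeriv (weight δ) T i.castSucc j.castSucc (Fin.last m)) y|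
      ≤ 20 * M := by
  have dw := differentiable_of_smooth (contDiff_weight (m := m) δ)
  have dw' (a) := differentiable_of_smooth (contDiff_partialDeriv (contDiff_weight (m := m) δ) a)
  have dT (a b) := differentiable_of_smooth (hT.contDiff a b)
  have dT' (a b c) := differentiable_of_smooth (contDiff_partialDeriv (hT.contDiff a b) c)
  rw [weightedDeriv_castSucc_castSucc_last, partialDeriv_add (by fun_prop) (by fun_prop),
    partialDeriv_add (by fun_prop) (by fun_prop), partialDeriv_mul (dw y) (dT' _ _ _ y),
    partialDeriv_mul (dw' _ y) (dT _ _ y), partialDeriv_mul (dw' _ y) (dT _ _ y)]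
  have hw := abs_weight_le_of_mem_box hδ hδ' hy
  have hw' := abs_partialDeriv_weight_le_of_mem_box hδ hδ' hy
  have hw'' (a : Fin (m + 1)) : |partialDeriv d (partialDeriv a (weight δ)) y| ≤ 2 := by
    rw [partialDeriv_partialDeriv_weight, abs_mul, abs_two]
    linarith [abs_delta_le_one d a]
  have hT0 (a b) := hT.bound [] (by simp) a b y hy
  have hT1 (c a b) := hT.bound [c] (by simp) a b y hy
  have hT2 (d c a b) := hT.bound [d, c] (by simp) a b y hy
  refine (abs_add_le _ _).trans <| (add_le_add ((abs_add_le _ _).trans <| add_le_add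
    ((abs_add_le _ _).trans <| add_le_add (abs_mul_le_mul (hw' d) (hT1 _ _ _))
      (abs_mul_le_mul hw (hT2 d _ _ _)))
    ((abs_add_le _ _).trans <| add_le_add (abs_mul_le_mul (hw'' _) (hT0 _ _))
      (abs_mul_le_mul (hw' _) (hT1 d _ _))))
    ((abs_add_le _ _).trans <| add_le_add (abs_mul_le_mul (hw'' _) (hT0 _ _))
      (abs_mul_le_mul (hw' _) (hT1 d _ _)))).trans_eq (by ring)

theorem IsAdmissible.exists_le_abs_weightedDeriv (hT : IsAdmissible M H T) (hH : IsFermiGauge H)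
    (hδ : 0 ≤ δ) {x₀ : Fin (m + 1) → ℝ} (hx₀ : x₀ ∈ boxFace m) {g : ℝ} {i₀ j₀ : Fin m}
    (hbig : 2 * g ≤ |MvPolynomial.eval x₀
      (MvPolynomial.pderiv (Fin.last m) (H i₀.castSucc j₀.castSucc))|) :
    ∃ i j : Fin m,
      g / 4 ≤ |weightedDeriv (weight δ) T i.castSucc j.castSucc (Fin.last m) x₀| := by
  obtain ⟨κ, hκ⟩ := hT.normalDeriv x₀ hx₀.2.2
  set P : Fin m → Fin m → ℝ := fun i j => MvPolynomial.eval x₀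
    (MvPolynomial.pderiv (Fin.last m) (H i.castSucc j.castSucc)) with hP
  have htr : ∑ i, P i i = 0 := by
    simp only [hP]
    rw [← map_sum, ← map_sum, hH.tangential_trace, map_zero, map_zero]
  obtain ⟨i, j, hij⟩ := exists_le_abs_add_mul_delta htr hbig κ
  rw [← hκ] at hij
  refine ⟨i, j, ?_⟩
  have hw := le_weight_of_mem_box hδ (boxFace_subset_box hx₀)
  simp only [weightedDeriv_castSucc_castSucc_last, hT.mixed _ x₀ hx₀.2.2, mul_zero, add_zero]
  rw [abs_mul, abs_of_nonneg (by linarith)]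
  nlinarith [abs_nonneg (partialDeriv (Fin.last m) (T i.castSucc j.castSucc) x₀)]

theorem exists_le_setIntegral_of_normalDeriv (hM : 0 < M) {g : ℝ} (hg : 0 < g)
    {x₀ : Fin (m + 1) → ℝ} (hx₀ : x₀ ∈ boxFace m) :
    ∃ c > 0, ∀ H δ T, IsFermiGauge H → 0 ≤ δ → δ ≤ 1 → IsAdmissible M H T → ∀ i j : Fin m,
      2 * g ≤ |MvPolynomial.eval x₀
        (MvPolynomial.pderiv (Fin.last m) (H i.castSucc j.castSucc))| →
      c ≤ ∫ y in box m, weightedDerivSq (weight δ) T y := by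
  set t := min (boxSide m / 2) (g / 8 / ((m + 1 : ℕ) * (20 * M)))
  have htside : t ≤ boxSide m / 2 := min_le_left _ _
  have htpos : 0 < t := lt_min (half_pos boxSide_pos) (by positivity)
  have htL : ((m + 1 : ℕ) : ℝ) * (20 * M) * t ≤ g / 8 := by
    rw [← le_div_iff₀' (by positivity)]
    exact min_le_right _ _
  refine ⟨t ^ (m + 1) * (g / 8) ^ 2, by positivity, fun H δ T hH hδ hδ' hT i₀ j₀ hbig => ?_⟩
  obtain ⟨i, j, hij⟩ := hT.exists_le_abs_weightedDeriv hH hδ hx₀ hbig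
  have hD := contDiff_weightedDeriv (contDiff_weight δ) hT.contDiff i.castSucc j.castSucc
    (Fin.last m)
  have hcube := pow_mul_sq_le_setIntegral_sq hD (L := 20 * M) (by positivity) htpos.le
    (by positivity : 0 ≤ g / 8) hx₀.1
    (fun a => by linarith [hx₀.2.1 a])
    (fun x hx a => hT.abs_partialDeriv_weightedDeriv_le hδ hδ' i j hx a) (by linarith)
    (by simpa using htL)
  rw [Fintype.card_fin] at hcube
  exact hcube.trans <| setIntegral_mono_on
    ((hD.continuous.pow 2).continuousOn.integrableOn_compact isCompact_box)
    ((continuous_weightedDerivSq (contDiff_weight δ) hT.contDiff).continuousOn.integrableOn_compact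
      isCompact_box) measurableSet_Icc fun x _ => weightedDeriv_sq_le _ _ _ _ _ x

end BoundaryEstimate

section Compactness

open scoped ContDiff Topology
open MvPolynomial (eval pderiv monomial coeff)

/-- The polynomial two-tensor with prescribed coefficients on a finite set `s` of multi-indices. -/
noncomputable def polyTensor {ι : Type*} {s : Finset (ι →₀ ℕ)} (h : ι → ι → s → ℝ) (a b : ι) :
    MvPolynomial ι ℝ :=
  ∑ μ : s, monomial (μ : ι →₀ ℕ) (h a b μ)

section PolyTensor

variable {ι : Type*} {s : Finset (ι →₀ ℕ)}

theorem coeff_polyTensor (h : ι → ι → s → ℝ) (a b : ι) (μ : s) :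
    coeff μ (polyTensor h a b) = h a b μ := by
  classical simp [polyTensor, MvPolynomial.coeff_sum, MvPolynomial.coeff_monomial]

theorem coeff_polyTensor_of_notMem (h : ι → ι → s → ℝ) (a b : ι) {μ : ι →₀ ℕ} (hμ : μ ∉ s) :
    coeff μ (polyTensor h a b) = 0 := by
  classical
  rw [polyTensor, MvPolynomial.coeff_sum]
  refine Finset.sum_eq_zero fun ν _ => ?_
  rw [MvPolynomial.coeff_monomial, if_neg (ne_of_mem_of_not_mem ν.2 hμ)]

theorem eval_map_polyTensor (D : MvPolynomial ι ℝ →ₗ[ℝ] MvPolynomial ι ℝ) (h : ι → ι → s → ℝ)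
    (a b : ι) (y : ι → ℝ) :
    eval y (D (polyTensor h a b))
      = ∑ μ : s, h a b μ * eval y (D (monomial (μ : ι →₀ ℕ) 1)) := by
  rw [polyTensor, map_sum, map_sum]
  refine Finset.sum_congr rfl fun μ _ => ?_
  rw [← mul_one (h a b μ), ← smul_eq_mul, ← MvPolynomial.smul_monomial, map_smul,
    MvPolynomial.smul_eval, smul_eq_mul, mul_one]

theorem continuous_eval_map_polyTensor {X : Type*} [TopologicalSpace X]
    (D : MvPolynomial ι ℝ →ₗ[ℝ] MvPolynomial ι ℝ) {h : X → ι → ι → s → ℝ} (hh : Continuous h)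
    {y : X → ι → ℝ} (hy : Continuous y) (a b : ι) :
    Continuous fun x => eval (y x) (D (polyTensor (h x) a b)) := by
  simp only [eval_map_polyTensor]
  exact continuous_finsetSum _ fun μ _ => Continuous.mul (by fun_prop)
    ((MvPolynomial.continuous_eval _).comp hy)

theorem continuous_eval_polyTensor (a b : ι) (y : ι → ℝ) :
    Continuous fun h : ι → ι → s → ℝ => eval y (polyTensor h a b) :=
  continuous_eval_map_polyTensor LinearMap.id continuous_id continuous_const a b

end PolyTensor

theorem exists_pos_le_of_isCompact {X : Type*} [TopologicalSpace X] {Z : Set X} (hZ : IsCompact Z)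
    {F : X → Set ℝ} (hF : ∀ z ∈ Z, ∃ c > 0, ∀ᶠ x in 𝓝[Z] z, c ∈ lowerBounds (F x)) :
    ∃ c > 0, ∀ z ∈ Z, c ∈ lowerBounds (F z) := by
  refine hZ.induction_on (p := fun t => ∃ c > 0, ∀ z ∈ t, c ∈ lowerBounds (F z))
    ⟨1, one_pos, fun z hz => hz.elim⟩ ?_ ?_ ?_
  · rintro t u htu ⟨c, hc, hle⟩
    exact ⟨c, hc, fun z hz => hle z (htu hz)⟩
  · rintro t u ⟨c, hc, hle⟩ ⟨c', hc', hle'⟩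
    refine ⟨min c c', lt_min hc hc', fun z hz v hv => ?_⟩
    rcases hz with hz | hz
    · exact (min_le_left _ _).trans (hle z hz hv)
    · exact (min_le_right _ _).trans (hle' z hz hv)
  · intro z hz
    obtain ⟨c, hc, hev⟩ := hF z hz
    exact ⟨_, hev, c, hc, fun _ hx => hx⟩

theorem eq_zero_of_forall_setIntegral_mul_eval_eq_zero {ι : Type*} [Fintype ι] {lo hi : ι → ℝ}
    (hlt : ∀ a, lo a < hi a) {w : (ι → ℝ) → ℝ} (hw : Continuous w)
    (hw0 : ∀ y ∈ Set.Icc lo hi, w y ≠ 0) {p : MvPolynomial ι ℝ}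
    (hp : ∀ ψ : (ι → ℝ) → ℝ, ContDiff ℝ ∞ ψ → HasCompactSupport ψ →
      tsupport ψ ⊆ interior (Set.Icc lo hi) → ∫ y in Set.Icc lo hi, ψ y * (w y * eval y p) = 0) :
    p = 0 := by
  have hcont : Continuous fun y => w y * eval y p := hw.mul (MvPolynomial.continuous_eval p)
  have hae := isOpen_interior.ae_eq_zero_of_integral_contDiff_smul_eq_zero (μ := volume)
    (hcont.locallyIntegrable.locallyIntegrableOn (interior (Set.Icc lo hi)))
    fun ψ hψ hc hsupp => by
      rw [← hp ψ hψ hc hsupp]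
      refine (setIntegral_eq_integral_of_forall_compl_eq_zero fun x hx => ?_).symm
      rw [image_eq_zero_of_notMem_tsupport fun hx' => hx (interior_subset (hsupp hx')), zero_smul]
  have heq : Set.EqOn (fun y => w y * eval y p) (fun _ => 0) (interior (Set.Icc lo hi)) :=
    Measure.eqOn_open_of_ae_eq ((ae_restrict_iff' isOpen_interior.measurableSet).2 hae)
      isOpen_interior hcont.continuousOn continuousOn_const
  refine MvPolynomial.funext_set (fun a => Set.Ioo (lo a) (hi a))
    (fun a => Set.Ioo_infinite (hlt a)) fun x hx => ?_
  have hx' : x ∈ interior (Set.Icc lo hi) := by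
    rw [← Set.pi_univ_Icc, interior_pi_set Set.finite_univ]
    simpa only [interior_Icc] using hx
  rw [map_zero]
  exact (mul_eq_zero.1 (heq hx')).resolve_left (hw0 x (interior_subset hx'))

/-- The contraction of the second derivatives of a polynomial tensor with a four-tensor, as a
polynomial. -/
noncomputable def weylPairing {ι : Type*} [Fintype ι] (C : ι → ι → ι → ι → ℝ)
    (H : ι → ι → MvPolynomial ι ℝ) : MvPolynomial ι ℝ :=
  ∑ c, ∑ a, ∑ d, ∑ b, MvPolynomial.C (C c a d b) * pderiv c (pderiv d (H a b))

theorem eval_weylPairing {ι : Type*} [Fintype ι] (C : ι → ι → ι → ι → ℝ)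
    (H : ι → ι → MvPolynomial ι ℝ) (y : ι → ℝ) :
    eval y (weylPairing C H) = contract C fun c a d b => eval y (pderiv c (pderiv d (H a b))) := by
  simp only [weylPairing, contract, map_sum, map_mul, MvPolynomial.eval_C]

variable {m : ℕ} {M δ : ℝ} {s : Finset (Fin (m + 1) →₀ ℕ)}
  {H : Fin (m + 1) → Fin (m + 1) → MvPolynomial (Fin (m + 1)) ℝ}

theorem isFermiGauge_iff_eval : IsFermiGauge H ↔
    (∀ y a b, eval y (H a b) = eval y (H b a)) ∧ (∀ y, ∑ a, eval y (H a a) = 0) ∧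
      (∀ y a, eval y (H a (Fin.last m)) = 0) ∧ ∀ (i : Fin m) (x : Fin m → ℝ), ∑ j : Fin m,
        x j * eval (Fin.snoc (α := fun _ => ℝ) x 0) (H i.castSucc j.castSucc) = 0 := by
  constructor
  · intro hH
    exact ⟨fun y a b => by rw [hH.symm], fun y => by rw [← map_sum, hH.trace, map_zero],
      fun y a => by rw [hH.normal, map_zero], hH.radial⟩
  · rintro ⟨hsymm, htrace, hnormal, hradial⟩
    exact ⟨fun a b => MvPolynomial.funext fun y => hsymm y a b,
      MvPolynomial.funext fun y => by rw [map_sum, htrace, map_zero],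
      fun a => MvPolynomial.funext fun y => by rw [hnormal, map_zero], hradial⟩

theorem isClosed_setOf_isFermiGauge : IsClosed
    {h : Fin (m + 1) → Fin (m + 1) → s → ℝ | IsFermiGauge (polyTensor h)} := by
  have hcont := continuous_eval_polyTensor (s := s)
  simp only [isFermiGauge_iff_eval, Set.ofPred_and, Set.ofPred_forall]
  refine .inter ?_ (.inter ?_ (.inter ?_ ?_))
  · exact isClosed_iInter fun y => isClosed_iInter fun a => isClosed_iInter fun b =>
      isClosed_eq (hcont a b y) (hcont b a y)
  · exact isClosed_iInter fun y => isClosed_eq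
      (continuous_finsetSum _ fun a _ => hcont a a y) continuous_const
  · exact isClosed_iInter fun y => isClosed_iInter fun a =>
      isClosed_eq (hcont a (Fin.last m) y) continuous_const
  · exact isClosed_iInter fun i => isClosed_iInter fun x => isClosed_eq
      (continuous_finsetSum _ fun j _ => continuous_const.mul (hcont _ _ _)) continuous_const

theorem continuous_setIntegral_weylPairing (C : Fin (m + 1) → Fin (m + 1) → Fin (m + 1) →
    Fin (m + 1) → ℝ) {ψ : (Fin (m + 1) → ℝ) → ℝ} (hψ : Continuous ψ) :
    Continuous fun z : (Fin (m + 1) → Fin (m + 1) → s → ℝ) × ℝ =>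
      ∫ y in box m, ψ y * (weight z.2 y * eval y (weylPairing C (polyTensor z.1))) := by
  have hsecond (c a d b : Fin (m + 1)) :
      Continuous fun z : ((Fin (m + 1) → Fin (m + 1) → s → ℝ) × ℝ) × (Fin (m + 1) → ℝ) =>
        eval z.2 (pderiv c (pderiv d (polyTensor z.1.1 a b))) :=
    continuous_eval_map_polyTensor ((pderiv c).toLinearMap ∘ₗ (pderiv d).toLinearMap)
      (by fun_prop) continuous_snd a b
  refine continuous_parametric_integral_of_continuous ?_ isCompact_box
  simp only [Function.uncurry_def, eval_weylPairing, contract, weight]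
  fun_prop

theorem exists_le_setIntegral_of_weylPairing
    {C : Fin (m + 1) → Fin (m + 1) → Fin (m + 1) → Fin (m + 1) → ℝ} (hC : IsWeyl C)
    {ψ : (Fin (m + 1) → ℝ) → ℝ} (hψ : ContDiff ℝ ∞ ψ) (hc : HasCompactSupport ψ)
    (hsupp : tsupport ψ ⊆ box m) {g : ℝ} (hg : 0 < g) :
    ∃ c > 0, ∀ M H δ T, IsAdmissible M H T →
      g ≤ |∫ y in box m, ψ y * (weight δ y * eval y (weylPairing C H))| →
      c ≤ ∫ y in box m, weightedDerivSq (weight δ) T y := by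
  obtain ⟨A, hA, hle⟩ := exists_sq_setIntegral_mul_contract_le hC isCompact_box hψ hc hsupp
  refine ⟨g ^ 2 / (A + 1), by positivity, fun M H δ T hT hbig => ?_⟩
  have hsq := hle (weight δ) 2 T (contDiff_weight δ) (partialDeriv_partialDeriv_weight δ)
    hT.contDiff hT.symm
  simp only [hT.weyl C hC, ← eval_weylPairing] at hsq
  have hnonneg : 0 ≤ ∫ y in box m, weightedDerivSq (weight δ) T y :=
    integral_nonneg fun y => weightedDerivSq_nonneg _ _ y
  have hg2 := pow_le_pow_left₀ hg.le hbig 2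
  rw [sq_abs] at hg2
  rw [div_le_iff₀' (by positivity)]
  linarith

theorem IsFermiGauge.eq_zero (hm : 3 ≤ m) (hH : IsFermiGauge H) (h0 : ∀ a b, coeff 0 (H a b) = 0)
    (hδ : 0 ≤ δ)
    (hnormal : ∀ (i j : Fin m), ∀ x ∈ boxFace m,
      eval x (pderiv (Fin.last m) (H i.castSucc j.castSucc)) = 0)
    (hweyl : ∀ C, IsWeyl C → ∀ ψ : (Fin (m + 1) → ℝ) → ℝ, ContDiff ℝ ∞ ψ → HasCompactSupport ψ →
      tsupport ψ ⊆ interior (box m) →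
      ∫ y in box m, ψ y * (weight δ y * eval y (weylPairing C H)) = 0) (a b : Fin (m + 1)) :
    H a b = 0 := by
  refine eq_zero_of_contract_pderiv_pderiv_eq_zero hm hH.symm hH.trace hH.normal h0
    (fun C hC y => ?_) (fun i => MvPolynomial.funext fun x => ?_) (fun i j => ?_) a b
  · rw [← eval_weylPairing, eq_zero_of_forall_setIntegral_mul_eval_eq_zero boxLower_lt_boxUpper
      (contDiff_weight δ).continuous
      (fun y hy => (lt_of_lt_of_le (by norm_num) (le_weight_of_mem_box hδ hy)).ne') (hweyl C hC),
      map_zero]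
  · simpa [eval_normalDeriv_zero] using hH.radial i x
  · refine MvPolynomial.funext_set
      (fun i : Fin m => Set.Icc (boxLower m i.castSucc) (boxLower m i.castSucc + boxSide m / 2))
      (fun i => Set.Icc_infinite (by linarith [boxSide_pos (m := m)])) fun x hx => ?_
    rw [← normalDeriv_pderiv_last, eval_normalDeriv_zero, map_zero]
    exact hnormal i j _ (snoc_mem_boxFace (by omega) fun i => hx i trivial)

theorem exists_eventually_le_setIntegral_weightedDerivSq (hm : 3 ≤ m) (hs : 0 ∉ s) (hM : 0 < M)
    {h₀ : Fin (m + 1) → Fin (m + 1) → s → ℝ} (hne : h₀ ≠ 0) (hH : IsFermiGauge (polyTensor h₀))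
    (hδ : 0 ≤ δ) :
    ∃ c > 0, ∀ᶠ z : (Fin (m + 1) → Fin (m + 1) → s → ℝ) × ℝ in 𝓝 (h₀, δ),
      ∀ T, IsFermiGauge (polyTensor z.1) → 0 ≤ z.2 → z.2 ≤ 1 → IsAdmissible M (polyTensor z.1) T →
        c ≤ ∫ y in box m, weightedDerivSq (weight z.2) T y := by
  by_cases hnormal : ∀ (i j : Fin m), ∀ x ∈ boxFace m,
    eval x (pderiv (Fin.last m) (polyTensor h₀ i.castSucc j.castSucc)) = 0
  · have hweyl := mt (hH.eq_zero hm (fun a b => coeff_polyTensor_of_notMem h₀ a b hs) hδ hnormal)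
      fun h0 => hne <| by
        funext a b μ
        rw [← coeff_polyTensor h₀, h0, MvPolynomial.coeff_zero, Pi.zero_apply, Pi.zero_apply,
          Pi.zero_apply]
    push Not at hweyl
    obtain ⟨C, hC, ψ, hψ, hc, hsupp, hint⟩ := hweyl
    have hpos := abs_pos.2 hint
    obtain ⟨c, hc0, hle⟩ := exists_le_setIntegral_of_weylPairing hC hψ hc
      (hsupp.trans interior_subset) (half_pos hpos)
    refine ⟨c, hc0, ?_⟩
    filter_upwards [(continuous_setIntegral_weylPairing C hψ.continuous).abs.continuousAt.eventually
      (lt_mem_nhds (half_lt_self hpos))] with z hz T _ _ _ hT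
    exact hle M _ z.2 T hT hz.le
  · push Not at hnormal
    obtain ⟨i, j, x, hx, hval⟩ := hnormal
    have hpos := abs_pos.2 hval
    obtain ⟨c, hc0, hle⟩ := exists_le_setIntegral_of_normalDeriv hM (half_pos (half_pos hpos)) hx
    have hcont : Continuous fun z : (Fin (m + 1) → Fin (m + 1) → s → ℝ) × ℝ =>
        |eval x (pderiv (Fin.last m) (polyTensor z.1 i.castSucc j.castSucc))| :=
      (continuous_eval_map_polyTensor (pderiv (Fin.last m)).toLinearMap continuous_fst
        continuous_const _ _).abs
    refine ⟨c, hc0, ?_⟩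
    filter_upwards [hcont.continuousAt.eventually (lt_mem_nhds (half_lt_self hpos))]
      with z hz T hH hδ hδ' hT
    exact hle _ z.2 T hH hδ hδ' hT i j (by linarith)

theorem exists_le_setIntegral_weightedDerivSq (hm : 3 ≤ m) (hs : 0 ∉ s) (hM : 0 < M) :
    ∃ c > 0, ∀ (h : Fin (m + 1) → Fin (m + 1) → s → ℝ) δ T, ‖h‖ = 1 → IsFermiGauge (polyTensor h) →
      0 ≤ δ → δ ≤ 1 → IsAdmissible M (polyTensor h) T →
      c ≤ ∫ y in box m, weightedDerivSq (weight δ) T y := by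
  set F : (Fin (m + 1) → Fin (m + 1) → s → ℝ) × ℝ → Set ℝ := fun z =>
    {v | ∃ T, IsAdmissible M (polyTensor z.1) T ∧
      v = ∫ y in box m, weightedDerivSq (weight z.2) T y}
  have hZ : IsCompact ((Metric.sphere (0 : Fin (m + 1) → Fin (m + 1) → s → ℝ) 1 ∩
      {h | IsFermiGauge (polyTensor h)}) ×ˢ Set.Icc (0 : ℝ) 1) :=
    ((isCompact_sphere _ _).inter_right isClosed_setOf_isFermiGauge).prod isCompact_Icc
  obtain ⟨c, hc, hle⟩ := exists_pos_le_of_isCompact hZ (F := F) <| by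
    rintro ⟨h₀, δ₀⟩ ⟨⟨hnorm, hH⟩, hδ, -⟩
    have hne : h₀ ≠ 0 := ne_zero_of_mem_unit_sphere ⟨h₀, hnorm⟩
    obtain ⟨c, hc, hev⟩ :=
      exists_eventually_le_setIntegral_weightedDerivSq hm hs hM hne hH hδ
    refine ⟨c, hc, ?_⟩
    filter_upwards [mem_nhdsWithin_of_mem_nhds hev, self_mem_nhdsWithin] with z hz hzZ
    rintro v ⟨T, hT, rfl⟩
    exact hz T hzZ.1.2 hzZ.2.1 hzZ.2.2 hT
  exact ⟨c, hc, fun h δ T hnorm hH hδ hδ' hT =>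
    hle (h, δ) ⟨⟨by simpa using hnorm, hH⟩, hδ, hδ'⟩ ⟨T, hT, rfl⟩⟩

end Compactness

section IteratedDerivatives

open scoped ContDiff
open MvPolynomial (eval pderiv)

variable {ι : Type*} [DecidableEq ι]

/-- The formal counterpart of `iteratedPartialDeriv` on polynomials. -/
noncomputable def iteratedPDeriv (l : List ι) : MvPolynomial ι ℝ →ₗ[ℝ] MvPolynomial ι ℝ :=
  l.foldr (fun a D => (pderiv a).toLinearMap ∘ₗ D) LinearMap.id

theorem iteratedPartialDeriv_eval [Finite ι] (l : List ι) (p : MvPolynomial ι ℝ) :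
    iteratedPartialDeriv l (fun x => eval x p) = fun x => eval x (iteratedPDeriv l p) := by
  induction l with
  | nil => rfl
  | cons a l ih => rw [iteratedPartialDeriv_cons, ih, partialDeriv_eval]; rfl

theorem partialDeriv_comp_smul [Finite ι] {f : (ι → ℝ) → ℝ} (hf : Differentiable ℝ f) (t r : ℝ)
    (a : ι) :
    partialDeriv a (fun y => t * f (r • y)) = fun y => t * r * partialDeriv a f (r • y) := by
  cases nonempty_fintype ι
  funext y
  rw [partialDeriv_const_mul (f := fun y => f (r • y)) t ((hf (r • y)).comp y (by fun_prop))]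
  simp only [partialDeriv, fderiv_comp_smul, smul_apply, smul_eq_mul, mul_assoc]

variable [Fintype ι]

theorem iteratedPartialDeriv_conformalKilling (r : ℝ) {V : ι → (ι → ℝ) → ℝ}
    (hV : ∀ a, ContDiff ℝ ∞ (V a)) (a b : ι) (l : List ι) :
    iteratedPartialDeriv l (conformalKilling r V a b)
      = conformalKilling r (fun b => iteratedPartialDeriv l (V b)) a b := by
  induction l with
  | nil => rfl
  | cons c l ih =>
    rw [iteratedPartialDeriv_cons, ih,
      partialDeriv_conformalKilling r fun b => contDiff_iteratedPartialDeriv (hV b) l]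
    rfl

theorem abs_conformalKilling_le {V : ι → (ι → ℝ) → ℝ} {x : ι → ℝ} {B : ℝ}
    (hB : ∀ a b, |partialDeriv a (V b) x| ≤ B) (a b : ι) :
    |conformalKilling (2 / Fintype.card ι) V a b x| ≤ 4 * B := by
  have hcard : (0 : ℝ) < Fintype.card ι := Nat.cast_pos.2 (Fintype.card_pos_iff.2 ⟨a⟩)
  have hdiv : |∑ c, partialDeriv c (V c) x| ≤ Fintype.card ι * B :=
    (Finset.abs_sum_le_sum_abs _ _).trans <|
      (Finset.sum_le_card_nsmul _ _ _ fun c _ => hB c c).trans_eq (by simp)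
  have htrace := abs_mul_le_mul
    (abs_mul_le_mul (abs_of_pos (div_pos two_pos hcard)).le hdiv) (abs_delta_le_one a b)
  unfold conformalKilling
  refine (abs_sub _ _).trans ((add_le_add ((abs_add_le _ _).trans (add_le_add (hB a b) (hB b a)))
    htrace).trans_eq ?_)
  field_simp
  ring

theorem iteratedPartialDeriv_comp_smul {f : (ι → ℝ) → ℝ} (hf : ContDiff ℝ ∞ f) (t r : ℝ)
    (l : List ι) :
    iteratedPartialDeriv l (fun y => t * f (r • y))
      = fun y => t * r ^ l.length * iteratedPartialDeriv l f (r • y) := by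
  induction l with
  | nil => simp [iteratedPartialDeriv]
  | cons a l ih =>
    rw [iteratedPartialDeriv_cons, ih, partialDeriv_comp_smul
      (differentiable_of_smooth (contDiff_iteratedPartialDeriv hf l)), List.length_cons, pow_succ,
      mul_assoc]
    rfl

theorem conformalKilling_comp_smul (q : ℝ) {V : ι → (ι → ℝ) → ℝ} (hV : ∀ a, ContDiff ℝ ∞ (V a))
    (t r : ℝ) (a b : ι) :
    conformalKilling q (fun b y => t * V b (r • y)) a b
      = fun y => t * r * conformalKilling q V a b (r • y) := by
  funext y
  simp only [conformalKilling, partialDeriv_comp_smul (differentiable_of_smooth (hV _)),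
    ← Finset.mul_sum]
  ring

end IteratedDerivatives

section EuclideanLength

variable {ι : Type*} [Fintype ι]

/-- The Euclidean length of a coordinate vector; the norm of `ι → ℝ` itself is the sup norm. -/
noncomputable def euclLength (x : ι → ℝ) : ℝ := √(∑ a, x a ^ 2)

theorem euclLength_nonneg (x : ι → ℝ) : 0 ≤ euclLength x := Real.sqrt_nonneg _

theorem sq_euclLength (x : ι → ℝ) : euclLength x ^ 2 = ∑ a, x a ^ 2 :=
  Real.sq_sqrt (Finset.sum_nonneg fun _ _ => sq_nonneg _)

theorem euclLength_smul {r : ℝ} (hr : 0 ≤ r) (x : ι → ℝ) :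
    euclLength (r • x) = r * euclLength x := by
  simp only [euclLength, Pi.smul_apply, smul_eq_mul, mul_pow, ← Finset.mul_sum]
  rw [Real.sqrt_mul (sq_nonneg r), Real.sqrt_sq hr]

theorem abs_le_euclLength (x : ι → ℝ) (a : ι) : |x a| ≤ euclLength x :=
  Real.abs_le_sqrt (Finset.single_le_sum (f := fun a => x a ^ 2) (fun _ _ => sq_nonneg _)
    (Finset.mem_univ a))

theorem continuous_euclLength : Continuous (euclLength : (ι → ℝ) → ℝ) := by
  unfold euclLength
  fun_prop

theorem half_le_euclLength_of_mem_box {m : ℕ} {y : Fin (m + 1) → ℝ} (hy : y ∈ box m) :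
    1 / 2 ≤ euclLength y :=
  Real.le_sqrt_of_sq_le (by linarith [sum_sq_ge_of_mem_box hy])

theorem euclLength_lt_one_of_mem_box {m : ℕ} {y : Fin (m + 1) → ℝ} (hy : y ∈ box m) :
    euclLength y < 1 := by
  rw [euclLength, Real.sqrt_lt' one_pos]
  linarith [sum_sq_lt_one_of_mem_box hy]

theorem zpow_le_pow_of_inv_le {q c : ℝ} (hc : 1 ≤ c) (hq : c⁻¹ ≤ q) (hq' : q ≤ c) {z : ℤ} {k : ℕ}
    (hz : |z| ≤ k) : q ^ z ≤ c ^ k := by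
  have hc0 : 0 < c := by linarith
  have hq0 : 0 < q := (inv_pos.2 hc0).trans_le hq
  have hnat {p : ℝ} (hp : 0 ≤ p) (hpc : p ≤ c) {j : ℕ} (hj : j ≤ k) : p ^ j ≤ c ^ k :=
    (pow_le_pow_left₀ hp hpc j).trans (pow_le_pow_right₀ hc hj)
  obtain ⟨j, rfl | rfl⟩ := z.eq_nat_or_neg
  · rw [zpow_natCast]
    exact hnat hq0.le hq' (by simpa using hz)
  · rw [zpow_neg, zpow_natCast, ← inv_pow]
    exact hnat (by positivity) (inv_le_of_inv_le₀ hc0 hq) (by simpa using hz)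

end EuclideanLength

section DeformedTensor

open scoped ContDiff
open MvPolynomial (eval pderiv coeff monomial)

variable {m : ℕ} {s : Finset (Fin (m + 1) →₀ ℕ)}
  {H : Fin (m + 1) → Fin (m + 1) → MvPolynomial (Fin (m + 1)) ℝ}
  {h : Fin (m + 1) → Fin (m + 1) → s → ℝ} {V : Fin (m + 1) → (Fin (m + 1) → ℝ) → ℝ} {C₀ ε δ : ℝ}

/-- The majorant `∑ |h_{ab,μ}| (δ + |x|) ^ (|μ| + 1 - k)` of the derivatives of order `k` of a
deformation field of `H`. -/
noncomputable def growthBound (δ : ℝ)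
    (H : Fin (m + 1) → Fin (m + 1) → MvPolynomial (Fin (m + 1)) ℝ) (k : ℤ) (x : Fin (m + 1) → ℝ) :
    ℝ :=
  ∑ a, ∑ b, ∑ μ ∈ (H a b).support,
    |coeff μ (H a b)| * (δ + euclLength x) ^ ((μ.degree : ℤ) + 1 - k)

/-- The properties of the vector field `V` deforming `H` that enter the estimate: the boundary
conditions, the umbilicity of its conformal Killing deformation on the boundary, and the bounds on
its derivatives of order one to three. -/
structure IsDeformationField (C₀ δ : ℝ)
    (H : Fin (m + 1) → Fin (m + 1) → MvPolynomial (Fin (m + 1)) ℝ)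
    (V : Fin (m + 1) → (Fin (m + 1) → ℝ) → ℝ) : Prop where
  contDiff : ∀ a, ContDiff ℝ ∞ (V a)
  normal : ∀ y : Fin (m + 1) → ℝ, y (Fin.last m) = 0 → V (Fin.last m) y = 0
  tangential : ∀ y : Fin (m + 1) → ℝ, y (Fin.last m) = 0 → ∀ i : Fin m,
    partialDeriv (Fin.last m) (V i.castSucc) y = 0
  umbilic : ∀ y : Fin (m + 1) → ℝ, y (Fin.last m) = 0 → ∃ κ : ℝ, ∀ i j : Fin m,
    partialDeriv (Fin.last m)
      (conformalKilling (2 / (m + 1 : ℕ)) V i.castSucc j.castSucc) y = κ * delta i j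
  bound : ∀ l : List (Fin (m + 1)), 1 ≤ l.length → l.length ≤ 3 → ∀ b, ∀ y : Fin (m + 1) → ℝ,
    0 ≤ y (Fin.last m) → |iteratedPartialDeriv l (V b) y| ≤ C₀ * growthBound δ H l.length y

/-- The tensor `T = H - S`, where `S` is the trace-free conformal Killing deformation by `V`. -/
noncomputable def deformedTensor (H : Fin (m + 1) → Fin (m + 1) → MvPolynomial (Fin (m + 1)) ℝ)
    (V : Fin (m + 1) → (Fin (m + 1) → ℝ) → ℝ) (a b : Fin (m + 1)) (x : Fin (m + 1) → ℝ) : ℝ :=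
  eval x (H a b) - conformalKilling (2 / (m + 1 : ℕ)) V a b x

theorem contDiff_deformedTensor (H : Fin (m + 1) → Fin (m + 1) → MvPolynomial (Fin (m + 1)) ℝ)
    (hV : ∀ a, ContDiff ℝ ∞ (V a)) (a b : Fin (m + 1)) : ContDiff ℝ ∞ (deformedTensor H V a b) :=
  (contDiff_eval _).sub (contDiff_conformalKilling _ hV a b)

theorem iteratedPartialDeriv_deformedTensor
    (H : Fin (m + 1) → Fin (m + 1) → MvPolynomial (Fin (m + 1)) ℝ)
    (hV : ∀ a, ContDiff ℝ ∞ (V a)) (a b : Fin (m + 1)) (l : List (Fin (m + 1))) :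
    iteratedPartialDeriv l (deformedTensor H V a b) = fun x => eval x (iteratedPDeriv l (H a b))
      - iteratedPartialDeriv l (conformalKilling (2 / (m + 1 : ℕ)) V a b) x := by
  simp only [← congrFun (iteratedPartialDeriv_eval l (H a b))]
  exact iteratedPartialDeriv_sub (contDiff_eval _) (contDiff_conformalKilling _ hV a b) l

theorem deformedTensor_symm (hH : ∀ a b, H a b = H b a) (a b : Fin (m + 1)) :
    deformedTensor H V a b = deformedTensor H V b a := by
  funext x
  simp only [deformedTensor, conformalKilling, hH a b, delta_comm a b]
  ring

theorem contract_partialDeriv_deformedTensor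
    (H : Fin (m + 1) → Fin (m + 1) → MvPolynomial (Fin (m + 1)) ℝ)
    (hV : ∀ a, ContDiff ℝ ∞ (V a)) {C : Fin (m + 1) → Fin (m + 1) → Fin (m + 1) → Fin (m + 1) → ℝ}
    (hC : IsWeyl C) (y : Fin (m + 1) → ℝ) :
    contract C (fun c a d b => partialDeriv c (partialDeriv d (deformedTensor H V a b)) y)
      = contract C fun c a d b => eval y (pderiv c (pderiv d (H a b))) := by
  have hsecond (c a d b : Fin (m + 1)) :
      partialDeriv c (partialDeriv d (deformedTensor H V a b)) y
        = eval y (pderiv c (pderiv d (H a b)))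
        - partialDeriv c (partialDeriv d (conformalKilling (2 / (m + 1 : ℕ)) V a b)) y :=
    congrFun (iteratedPartialDeriv_deformedTensor H hV a b [c, d]) y
  simp only [hsecond, contract_sub, contract_partialDeriv_conformalKilling hC _ hV, sub_zero]

theorem partialDeriv_eq_zero_of_eqOn_boundary {f : (Fin (m + 1) → ℝ) → ℝ} (hf : Differentiable ℝ f)
    (hf0 : ∀ y : Fin (m + 1) → ℝ, y (Fin.last m) = 0 → f y = 0) {y : Fin (m + 1) → ℝ}
    (hy : y (Fin.last m) = 0) (i : Fin m) : partialDeriv i.castSucc f y = 0 := by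
  have hline : HasDerivAt (fun t : ℝ => f (y + t • Pi.single i.castSucc 1))
      (partialDeriv i.castSucc f y) 0 := (hf y).hasFDerivAt.hasLineDerivAt _
  have hzero (t : ℝ) : f (y + t • Pi.single i.castSucc 1) = 0 :=
    hf0 _ (by simp [hy, (Fin.castSucc_lt_last i).ne'])
  simp only [hzero] at hline
  exact hline.unique (hasDerivAt_const _ _)

theorem IsDeformationField.deformedTensor_mixed (hV : IsDeformationField C₀ δ H V)
    (hH : ∀ a, H a (Fin.last m) = 0) (i : Fin m) {y : Fin (m + 1) → ℝ} (hy : y (Fin.last m) = 0) :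
    deformedTensor H V i.castSucc (Fin.last m) y = 0 := by
  have hnormal := partialDeriv_eq_zero_of_eqOn_boundary
    (differentiable_of_smooth (hV.contDiff (Fin.last m))) hV.normal hy i
  simp [deformedTensor, conformalKilling, hH, hnormal, hV.tangential y hy i, delta,
    (Fin.castSucc_lt_last i).ne]

theorem IsDeformationField.exists_partialDeriv_deformedTensor (hV : IsDeformationField C₀ δ H V)
    {y : Fin (m + 1) → ℝ} (hy : y (Fin.last m) = 0) :
    ∃ κ : ℝ, ∀ i j : Fin m, partialDeriv (Fin.last m) (deformedTensor H V i.castSucc j.castSucc) y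
      = eval y (pderiv (Fin.last m) (H i.castSucc j.castSucc)) + κ * delta i j := by
  obtain ⟨κ, hκ⟩ := hV.umbilic y hy
  refine ⟨-κ, fun i j => ?_⟩
  rw [neg_mul, ← sub_eq_add_neg, ← hκ]
  exact congrFun (iteratedPartialDeriv_deformedTensor H hV.contDiff _ _ [Fin.last m]) y

theorem sum_support_polyTensor {ι : Type*} {s : Finset (ι →₀ ℕ)} (h : ι → ι → s → ℝ) (a b : ι)
    {f : ℝ → (ι →₀ ℕ) → ℝ} (hf : ∀ μ, f 0 μ = 0) :
    ∑ μ ∈ (polyTensor h a b).support, f (coeff μ (polyTensor h a b)) μ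
      = ∑ μ : s, f (h a b μ) μ := by
  have hsub : (polyTensor h a b).support ⊆ s := fun μ hμ => by
    by_contra hμs
    exact MvPolynomial.mem_support_iff.1 hμ (coeff_polyTensor_of_notMem h a b hμs)
  rw [Finset.sum_subset hsub fun μ _ hμ => by rw [MvPolynomial.notMem_support_iff.1 hμ, hf],
    ← Finset.sum_coe_sort]
  simp only [coeff_polyTensor]

theorem growthBound_polyTensor (δ : ℝ) (h : Fin (m + 1) → Fin (m + 1) → s → ℝ) (k : ℤ)
    (x : Fin (m + 1) → ℝ) :
    growthBound δ (polyTensor h) k x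
      = ∑ a, ∑ b, ∑ μ : s, |h a b μ| * (δ + euclLength x) ^ ((μ.1.degree : ℤ) + 1 - k) := by
  refine Finset.sum_congr rfl fun a _ => Finset.sum_congr rfl fun b _ => ?_
  exact sum_support_polyTensor h a b
    (f := fun t μ => |t| * (δ + euclLength x) ^ ((μ.degree : ℤ) + 1 - k)) fun μ => by simp

theorem abs_le_norm_pi_pi {ι κ : Type*} [Fintype ι] [Fintype κ] (h : ι → ι → κ → ℝ) (a b : ι)
    (k : κ) : |h a b k| ≤ ‖h‖ :=
  (norm_le_pi_norm (h a b) k).trans ((norm_le_pi_norm (h a) b).trans (norm_le_pi_norm h a))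

theorem growthBound_le_of_mem_box (hδ : 0 ≤ δ) (hδ' : δ ≤ 1) (hh : ‖h‖ ≤ 1) {k : ℤ} (hk : 0 ≤ k)
    (hk' : k ≤ 3) {y : Fin (m + 1) → ℝ} (hy : y ∈ box m) :
    growthBound δ (polyTensor h) k y
      ≤ ∑ _a : Fin (m + 1), ∑ _b : Fin (m + 1), ∑ μ : s, 2 ^ (μ.1.degree + 2) := by
  have hlow := half_le_euclLength_of_mem_box hy
  have hupp := euclLength_lt_one_of_mem_box hy
  rw [growthBound_polyTensor]
  refine Finset.sum_le_sum fun a _ => Finset.sum_le_sum fun b _ => Finset.sum_le_sum fun μ _ => ?_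
  have hpow : (δ + euclLength y) ^ ((μ.1.degree : ℤ) + 1 - k) ≤ 2 ^ (μ.1.degree + 2) :=
    zpow_le_pow_of_inv_le one_le_two (by linarith) (by linarith)
      (by rw [abs_le]; push_cast; constructor <;> omega)
  calc |h a b μ| * (δ + euclLength y) ^ ((μ.1.degree : ℤ) + 1 - k)
      ≤ 1 * 2 ^ (μ.1.degree + 2) :=
        mul_le_mul ((abs_le_norm_pi_pi h a b μ).trans hh) hpow (zpow_nonneg (by linarith) _)
          zero_le_one
    _ = 2 ^ (μ.1.degree + 2) := one_mul _

theorem exists_abs_eval_iteratedPDeriv_le (s : Finset (Fin (m + 1) →₀ ℕ)) (k : ℕ) :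
    ∃ B, ∀ l : List (Fin (m + 1)), l.length ≤ k → ∀ h : Fin (m + 1) → Fin (m + 1) → s → ℝ,
      ‖h‖ ≤ 1 → ∀ y ∈ box m, ∀ a b, |eval y (iteratedPDeriv l (polyTensor h a b))| ≤ B := by
  have hcpt := (isCompact_closedBall (0 : Fin (m + 1) → Fin (m + 1) → s → ℝ) 1).prod
    (isCompact_box (m := m))
  have hbound (l : List (Fin (m + 1))) := hcpt.exists_bound_of_continuousOn
    (f := fun z a b => eval z.2 (iteratedPDeriv l (polyTensor z.1 a b)))
    (continuous_pi fun a => continuous_pi fun b =>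
      continuous_eval_map_polyTensor _ continuous_fst continuous_snd a b).continuousOn
  choose B hB using hbound
  obtain ⟨B', hB'⟩ := ((List.finite_length_le (Fin (m + 1)) k).image B).bddAbove
  refine ⟨B', fun l hl h hh y hy a b => ?_⟩
  calc |eval y (iteratedPDeriv l (polyTensor h a b))|
      ≤ ‖fun a b => eval y (iteratedPDeriv l (polyTensor h a b))‖ :=
        (norm_le_pi_norm (fun b => eval y (iteratedPDeriv l (polyTensor h a b))) b).trans
          (norm_le_pi_norm (fun a b => eval y (iteratedPDeriv l (polyTensor h a b))) a)
    _ ≤ B l := hB l (h, y) ⟨by simpa using hh, hy⟩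
    _ ≤ B' := hB' ⟨l, hl, rfl⟩

theorem exists_isAdmissible_deformedTensor (s : Finset (Fin (m + 1) →₀ ℕ)) (C₀ : ℝ) :
    ∃ M > 0, ∀ (h : Fin (m + 1) → Fin (m + 1) → s → ℝ) δ V, 0 ≤ δ → δ ≤ 1 → ‖h‖ ≤ 1 →
      IsFermiGauge (polyTensor h) → IsDeformationField C₀ δ (polyTensor h) V →
      IsAdmissible M (polyTensor h) (deformedTensor (polyTensor h) V) := by
  obtain ⟨B, hB⟩ := exists_abs_eval_iteratedPDeriv_le s 2
  set R : ℝ := ∑ _a : Fin (m + 1), ∑ _b : Fin (m + 1), ∑ μ : s, 2 ^ (μ.1.degree + 2)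
  refine ⟨|B| + 4 * (|C₀| * R) + 1, by positivity, fun h δ V hδ hδ' hh hH hV => ?_⟩
  refine ⟨contDiff_deformedTensor _ hV.contDiff, deformedTensor_symm hH.symm,
    fun C hC y => contract_partialDeriv_deformedTensor _ hV.contDiff hC y,
    fun i y hy => hV.deformedTensor_mixed hH.normal i hy,
    fun y hy => hV.exists_partialDeriv_deformedTensor hy, fun l hl a b y hy => ?_⟩
  have hderiv (a b : Fin (m + 1)) :
      |partialDeriv a (iteratedPartialDeriv l (V b)) y| ≤ |C₀| * R := by
    have hlen : (a :: l).length ≤ 3 := Nat.succ_le_succ hl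
    refine (hV.bound (a :: l) (Nat.succ_pos _) hlen b y (nonneg_of_mem_box hy _)).trans ?_
    have hR := growthBound_le_of_mem_box hδ hδ' hh (k := (a :: l).length) (Nat.cast_nonneg _)
      (by exact_mod_cast hlen) hy
    have hnonneg : 0 ≤ growthBound δ (polyTensor h) (a :: l).length y := by
      have := euclLength_nonneg y
      unfold growthBound
      positivity
    exact mul_le_mul (le_abs_self _) hR hnonneg (abs_nonneg _)
  have hkilling := abs_conformalKilling_le hderiv a b
  rw [Fintype.card_fin] at hkilling
  rw [iteratedPartialDeriv_deformedTensor _ hV.contDiff,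
    iteratedPartialDeriv_conformalKilling _ hV.contDiff]
  have hpoly := (hB l hl h hh y hy a b).trans (le_abs_self B)
  linarith [abs_sub (eval y (iteratedPDeriv l (polyTensor h a b)))
    (conformalKilling (2 / (m + 1 : ℕ)) (fun b => iteratedPartialDeriv l (V b)) a b y)]

end DeformedTensor

section Scaling

open scoped ContDiff
open MvPolynomial (eval monomial)

variable {m : ℕ} {s : Finset (Fin (m + 1) →₀ ℕ)} {h : Fin (m + 1) → Fin (m + 1) → s → ℝ}
  {V : Fin (m + 1) → (Fin (m + 1) → ℝ) → ℝ} {C₀ ε r t : ℝ}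

/-- The coefficients of `y ↦ t * H (r • y)`, given those of `H`. -/
noncomputable def scaleCoeff {ι : Type*} {s : Finset (ι →₀ ℕ)} (t r : ℝ) (h : ι → ι → s → ℝ)
    (a b : ι) (μ : s) : ℝ :=
  t * r ^ μ.1.degree * h a b μ

/-- The deformation field of `y ↦ t * H (r • y)`, given that of `H`. -/
noncomputable def scaleField {ι : Type*} (t r : ℝ) (V : ι → (ι → ℝ) → ℝ) (b : ι) (y : ι → ℝ) : ℝ :=
  t / r * V b (r • y)

theorem eval_smul_monomial {ι : Type*} (r : ℝ) (y : ι → ℝ) (μ : ι →₀ ℕ) :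
    eval (r • y) (monomial μ (1 : ℝ)) = r ^ μ.degree * eval y (monomial μ 1) := by
  simp only [MvPolynomial.eval_monomial, one_mul, Finsupp.prod, Pi.smul_apply, smul_eq_mul, mul_pow,
    Finset.prod_mul_distrib, Finset.prod_pow_eq_pow_sum, Finsupp.degree_apply]

theorem eval_polyTensor_scaleCoeff {ι : Type*} {s : Finset (ι →₀ ℕ)} (t r : ℝ) (h : ι → ι → s → ℝ)
    (a b : ι) (y : ι → ℝ) :
    eval y (polyTensor (scaleCoeff t r h) a b) = t * eval (r • y) (polyTensor h a b) := by
  have heval (h : ι → ι → s → ℝ) (y : ι → ℝ) := eval_map_polyTensor LinearMap.id h a b y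
  simp only [LinearMap.id_apply] at heval
  simp only [heval, eval_smul_monomial, scaleCoeff, Finset.mul_sum]
  exact Finset.sum_congr rfl fun μ _ => by ring

theorem IsFermiGauge.scale (hH : IsFermiGauge (polyTensor h)) (t : ℝ) (hr : r ≠ 0) :
    IsFermiGauge (polyTensor (scaleCoeff t r h)) := by
  have heq {p : MvPolynomial (Fin (m + 1)) ℝ} (hp : ∀ y, eval y p = 0) : p = 0 :=
    MvPolynomial.funext fun y => by rw [hp, map_zero]
  refine ⟨fun a b => MvPolynomial.funext fun y => ?_, heq fun y => ?_, fun a => heq fun y => ?_,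
    fun i x => ?_⟩
  · simp only [eval_polyTensor_scaleCoeff, hH.symm a b]
  · simp only [map_sum, eval_polyTensor_scaleCoeff, ← Finset.mul_sum]
    rw [← map_sum, hH.trace, map_zero, mul_zero]
  · rw [eval_polyTensor_scaleCoeff, hH.normal, map_zero, mul_zero]
  · have hsnoc : r • (Fin.snoc (α := fun _ => ℝ) x 0 : Fin (m + 1) → ℝ)
        = Fin.snoc (α := fun _ => ℝ) (r • x) 0 := by
      funext a
      cases a using Fin.lastCases <;> simp
    refine (mul_eq_zero.1 ?_).resolve_left hr
    refine Eq.trans ?_ ((congrArg (t * ·) (hH.radial i (r • x))).trans (mul_zero t))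
    rw [Finset.mul_sum, Finset.mul_sum]
    refine Finset.sum_congr rfl fun j _ => ?_
    rw [eval_polyTensor_scaleCoeff, hsnoc, Pi.smul_apply, smul_eq_mul]
    ring

theorem growthBound_polyTensor_scaleCoeff (ht : 0 ≤ t) (hr : 0 < r)
    (h : Fin (m + 1) → Fin (m + 1) → s → ℝ) (k : ℕ) (y : Fin (m + 1) → ℝ) :
    r * growthBound (ε / r) (polyTensor (scaleCoeff t r h)) k y
      = t * r ^ k * growthBound ε (polyTensor h) k (r • y) := by
  simp only [growthBound_polyTensor, Finset.mul_sum, euclLength_smul hr.le]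
  refine Finset.sum_congr rfl fun a _ => Finset.sum_congr rfl fun b _ =>
    Finset.sum_congr rfl fun μ _ => ?_
  have hdist : ε + r * euclLength y = r * (ε / r + euclLength y) := by field_simp
  have hpow : r ^ k * r ^ ((μ.1.degree : ℤ) + 1 - k) = r ^ μ.1.degree * r := by
    rw [← zpow_natCast r k, ← zpow_add₀ hr.ne', ← pow_succ, ← zpow_natCast]
    congr 1
    push_cast
    ring
  rw [hdist, mul_zpow, scaleCoeff, abs_mul, abs_of_nonneg (by positivity : 0 ≤ t * r ^ μ.1.degree)]
  linear_combination -(t * |h a b μ| * (ε / r + euclLength y) ^ ((μ.1.degree : ℤ) + 1 - k)) * hpow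

theorem IsDeformationField.scale (hV : IsDeformationField C₀ ε (polyTensor h) V) (ht : 0 ≤ t)
    (hr : 0 < r) :
    IsDeformationField C₀ (ε / r) (polyTensor (scaleCoeff t r h)) (scaleField t r V) := by
  have hboundary {y : Fin (m + 1) → ℝ} (hy : y (Fin.last m) = 0) : (r • y) (Fin.last m) = 0 := by
    simp [hy]
  refine ⟨fun a => contDiff_const.mul ((hV.contDiff a).comp (contDiff_const_smul r)),
    fun y hy => ?_, fun y hy i => ?_, fun y hy => ?_, fun l hl hl' b y hy => ?_⟩
  · rw [scaleField, hV.normal _ (hboundary hy), mul_zero]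
  · unfold scaleField
    rw [partialDeriv_comp_smul (differentiable_of_smooth (hV.contDiff _))]
    simp only [hV.tangential _ (hboundary hy), mul_zero]
  · obtain ⟨κ, hκ⟩ := hV.umbilic _ (hboundary hy)
    refine ⟨t / r * r * r * κ, fun i j => ?_⟩
    unfold scaleField
    rw [conformalKilling_comp_smul _ hV.contDiff, partialDeriv_comp_smul
      (differentiable_of_smooth (contDiff_conformalKilling _ hV.contDiff _ _))]
    simp only [hκ, mul_assoc]
  · have hle := hV.bound l hl hl' b (r • y) (mul_nonneg hr.le hy)
    have hscale := growthBound_polyTensor_scaleCoeff (ε := ε) ht hr h l.length y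
    unfold scaleField
    rw [iteratedPartialDeriv_comp_smul (hV.contDiff b), abs_mul, abs_of_nonneg (by positivity)]
    calc t / r * r ^ l.length * |iteratedPartialDeriv l (V b) (r • y)|
        ≤ t / r * r ^ l.length * (C₀ * growthBound ε (polyTensor h) l.length (r • y)) := by gcongr
      _ = C₀ * growthBound (ε / r) (polyTensor (scaleCoeff t r h)) l.length y := by
          field_simp
          linear_combination -C₀ * hscale

theorem weight_div (ε : ℝ) (hr : r ≠ 0) (y : Fin (m + 1) → ℝ) :
    weight (ε / r) y = weight ε (r • y) / r ^ 2 := by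
  simp only [weight, Pi.smul_apply, smul_eq_mul, mul_pow, ← Finset.mul_sum]
  field_simp

theorem partialDeriv_weight_div (ε : ℝ) (hr : r ≠ 0) (a : Fin (m + 1)) (y : Fin (m + 1) → ℝ) :
    partialDeriv a (weight (ε / r)) y = partialDeriv a (weight ε) (r • y) / r := by
  simp only [partialDeriv_weight, Pi.smul_apply, smul_eq_mul]
  field_simp

theorem weightedDerivSq_deformedTensor_scale (ε : ℝ) (h : Fin (m + 1) → Fin (m + 1) → s → ℝ)
    (hV : ∀ a, ContDiff ℝ ∞ (V a)) (t : ℝ) (hr : r ≠ 0) (y : Fin (m + 1) → ℝ) :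
    weightedDerivSq (weight (ε / r))
        (deformedTensor (polyTensor (scaleCoeff t r h)) (scaleField t r V)) y
      = (t / r) ^ 2 * weightedDerivSq (weight ε) (deformedTensor (polyTensor h) V) (r • y) := by
  set T := deformedTensor (polyTensor h) V
  have htensor : deformedTensor (polyTensor (scaleCoeff t r h)) (scaleField t r V)
      = fun a b y => t * T a b (r • y) := by
    funext a b y
    unfold deformedTensor scaleField
    rw [eval_polyTensor_scaleCoeff, conformalKilling_comp_smul _ hV, div_mul_cancel₀ _ hr]
    exact (mul_sub _ _ _).symm
  have hsum (b : Fin (m + 1)) :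
      ∑ e, partialDeriv e (weight ε) (r • y) / r * (t * T b e (r • y))
        = t / r * ∑ e, partialDeriv e (weight ε) (r • y) * T b e (r • y) := by
    rw [Finset.mul_sum]
    exact Finset.sum_congr rfl fun e _ => by ring
  have hderiv (a b c : Fin (m + 1)) :
      weightedDeriv (weight (ε / r)) (fun a b y => t * T a b (r • y)) a b c y
        = t / r * weightedDeriv (weight ε) T a b c (r • y) := by
    simp only [weightedDeriv, weight_div ε hr, partialDeriv_weight_div ε hr, hsum,
      partialDeriv_comp_smul (differentiable_of_smooth (contDiff_deformedTensor _ hV a b)), T]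
    field_simp
  simp only [htensor, weightedDerivSq, hderiv, mul_pow, ← Finset.mul_sum]

end Scaling

section HalfBalls

variable {m : ℕ} {ρ : ℝ} {f : (Fin (m + 1) → ℝ) → ℝ}

/-- The half ball `B⁺_ρ(0)`, for the Euclidean length. -/
def halfBall (m : ℕ) (ρ : ℝ) : Set (Fin (m + 1) → ℝ) :=
  {x | 0 ≤ x (Fin.last m) ∧ euclLength x < ρ}

/-- The dyadic shell `B⁺_ρ(0) \ B⁺_{ρ/2}(0)`. -/
def halfAnnulus (m : ℕ) (ρ : ℝ) : Set (Fin (m + 1) → ℝ) :=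
  {x | 0 ≤ x (Fin.last m) ∧ ρ / 2 ≤ euclLength x ∧ euclLength x < ρ}

theorem halfAnnulus_subset_halfBall (ρ : ℝ) : halfAnnulus m ρ ⊆ halfBall m ρ :=
  fun _ hx => ⟨hx.1, hx.2.2⟩

theorem measurableSet_halfBall (ρ : ℝ) : MeasurableSet (halfBall m ρ) :=
  (measurableSet_le measurable_const (measurable_pi_apply _)).inter
    (measurableSet_lt continuous_euclLength.measurable measurable_const)

theorem measurableSet_halfAnnulus (ρ : ℝ) : MeasurableSet (halfAnnulus m ρ) :=
  (measurableSet_le measurable_const (measurable_pi_apply _)).inter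
    ((measurableSet_le measurable_const continuous_euclLength.measurable).inter
      (measurableSet_lt continuous_euclLength.measurable measurable_const))

theorem halfBall_subset_Icc (ρ : ℝ) : halfBall m ρ ⊆ Set.Icc (fun _ => -ρ) (fun _ => ρ) :=
  fun x hx =>
    have hle (a : Fin (m + 1)) := abs_le.1 ((abs_le_euclLength x a).trans hx.2.le)
    ⟨fun a => (hle a).1, fun a => (hle a).2⟩

theorem volume_lt_top_of_subset_halfBall {A : Set (Fin (m + 1) → ℝ)} (hA : A ⊆ halfBall m ρ) :
    volume A < ⊤ :=
  (measure_mono (hA.trans (halfBall_subset_Icc ρ))).trans_lt isCompact_Icc.measure_lt_top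

theorem volume_real_le_of_subset_halfBall (hρ : 0 ≤ ρ) {A : Set (Fin (m + 1) → ℝ)}
    (hA : A ⊆ halfBall m ρ) : volume.real A ≤ (2 * ρ) ^ (m + 1) := by
  calc volume.real A ≤ volume.real (Set.Icc (fun _ : Fin (m + 1) => -ρ) fun _ => ρ) :=
        measureReal_mono (hA.trans (halfBall_subset_Icc ρ)) isCompact_Icc.measure_ne_top
    _ = (2 * ρ) ^ (m + 1) := by
        rw [Measure.real, Real.volume_Icc_pi_toReal fun _ => by linarith]
        simp [two_mul]

theorem integrableOn_halfBall (hf : ContinuousOn f {x | 0 ≤ x (Fin.last m)}) (ρ : ℝ) :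
    IntegrableOn f (halfBall m ρ) := by
  have hK : IsCompact (Set.Icc (fun _ => -ρ) (fun _ => ρ) ∩ {x | 0 ≤ x (Fin.last m)}) :=
    isCompact_Icc.inter_right (isClosed_le continuous_const (continuous_apply _))
  exact ((hf.mono Set.inter_subset_right).integrableOn_compact hK).mono_set
    fun x hx => ⟨halfBall_subset_Icc ρ hx, hx.1⟩

theorem setIntegral_le_setIntegral_of_subset_halfBall {A B : Set (Fin (m + 1) → ℝ)} (hAB : A ⊆ B)
    (hB : B ⊆ halfBall m ρ) (hBm : MeasurableSet B)
    (hf : ContinuousOn f {x | 0 ≤ x (Fin.last m)}) (hf0 : ∀ x, 0 ≤ x (Fin.last m) → 0 ≤ f x) :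
    ∫ x in A, f x ≤ ∫ x in B, f x :=
  setIntegral_mono_set ((integrableOn_halfBall hf ρ).mono_set hB)
    (ae_restrict_of_forall_mem hBm fun x hx => hf0 x (hB hx).1) hAB.eventuallyLE

theorem setIntegral_halfBall_eq_add (hρ : 0 ≤ ρ) (hf : ContinuousOn f {x | 0 ≤ x (Fin.last m)}) :
    ∫ x in halfBall m ρ, f x
      = (∫ x in halfBall m (ρ / 2), f x) + ∫ x in halfAnnulus m ρ, f x := by
  have hunion : halfBall m ρ = halfBall m (ρ / 2) ∪ halfAnnulus m ρ := by
    ext x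
    refine ⟨fun hx => ?_, ?_⟩
    · exact (lt_or_ge (euclLength x) (ρ / 2)).imp (⟨hx.1, ·⟩) (⟨hx.1, ·, hx.2⟩)
    · rintro (hx | hx)
      · exact ⟨hx.1, hx.2.trans_le (half_le_self hρ)⟩
      · exact halfAnnulus_subset_halfBall ρ hx
  have hdisj : Disjoint (halfBall m (ρ / 2)) (halfAnnulus m ρ) :=
    Set.disjoint_left.2 fun x hx hx' => hx.2.not_ge hx'.2.1
  rw [hunion, setIntegral_union hdisj (measurableSet_halfAnnulus ρ) (integrableOn_halfBall hf _)
    ((integrableOn_halfBall hf ρ).mono_set (halfAnnulus_subset_halfBall ρ))]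

open scoped Pointwise in
theorem smul_box_subset_halfAnnulus {r : ℝ} (hr : 0 < r) : r • box m ⊆ halfAnnulus m r := by
  rintro _ ⟨y, hy, rfl⟩
  have hlower := half_le_euclLength_of_mem_box hy
  have hupper := euclLength_lt_one_of_mem_box hy
  refine ⟨mul_nonneg hr.le (nonneg_of_mem_box hy _), ?_, ?_⟩
  · simp only [euclLength_smul hr.le]
    nlinarith
  · simp only [euclLength_smul hr.le]
    nlinarith

end HalfBalls

section BubbleEnergy

open scoped ContDiff

variable {m : ℕ} {ε : ℝ} {x : Fin (m + 1) → ℝ}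
  {T : Fin (m + 1) → Fin (m + 1) → (Fin (m + 1) → ℝ) → ℝ}

/-- The density `|Q|²`: since `U = (ε / w) ^ ((m - 1) / 2)` for the weight `w`, the tensor `Q` is
`(U / w)` times the weighted derivative of `T`. -/
noncomputable def bubbleEnergy (ε : ℝ) (T : Fin (m + 1) → Fin (m + 1) → (Fin (m + 1) → ℝ) → ℝ)
    (x : Fin (m + 1) → ℝ) : ℝ :=
  ε ^ (m - 1) * weightedDerivSq (weight ε) T x / weight ε x ^ (m + 1)

theorem weight_pos (hε : 0 < ε) (hx : 0 ≤ x (Fin.last m)) : 0 < weight ε x := by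
  unfold weight
  positivity

theorem weight_le (hε : 0 ≤ ε) (x : Fin (m + 1) → ℝ) : weight ε x ≤ (ε + euclLength x) ^ 2 := by
  have hlast := (le_abs_self _).trans (abs_le_euclLength x (Fin.last m))
  rw [weight, ← sq_euclLength]
  nlinarith

theorem bubbleEnergy_nonneg (hε : 0 < ε) (T : Fin (m + 1) → Fin (m + 1) → (Fin (m + 1) → ℝ) → ℝ)
    (hx : 0 ≤ x (Fin.last m)) : 0 ≤ bubbleEnergy ε T x :=
  div_nonneg (mul_nonneg (pow_nonneg hε.le _) (weightedDerivSq_nonneg _ _ _))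
    (pow_nonneg (weight_pos hε hx).le _)

theorem continuousOn_bubbleEnergy (hε : 0 < ε) (hT : ∀ a b, ContDiff ℝ ∞ (T a b)) :
    ContinuousOn (bubbleEnergy ε T) {x | 0 ≤ x (Fin.last m)} :=
  (continuous_const.mul (continuous_weightedDerivSq (contDiff_weight ε) hT)).continuousOn.div
    ((contDiff_weight ε).continuous.pow _).continuousOn
    fun _ hx => pow_ne_zero _ (weight_pos hε hx).ne'

theorem mul_weightedDerivSq_le_bubbleEnergy {r : ℝ} (hε : 0 < ε) (hr : ε ≤ r)
    (hx : x ∈ halfAnnulus m r) :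
    ε ^ (m - 1) / (4 * r ^ 2) ^ (m + 1) * weightedDerivSq (weight ε) T x ≤ bubbleEnergy ε T x := by
  have hweight : weight ε x ≤ 4 * r ^ 2 :=
    (weight_le hε.le x).trans (by nlinarith [hx.2.2, euclLength_nonneg x])
  have hpos := weight_pos hε hx.1
  have hnonneg := weightedDerivSq_nonneg (weight ε) T x
  rw [bubbleEnergy, div_mul_eq_mul_div]
  gcongr

end BubbleEnergy

section Annulus

open scoped Pointwise ContDiff

variable {m : ℕ} {s : Finset (Fin (m + 1) →₀ ℕ)} {h : Fin (m + 1) → Fin (m + 1) → s → ℝ}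
  {T : Fin (m + 1) → Fin (m + 1) → (Fin (m + 1) → ℝ) → ℝ} {ε : ℝ}

theorem scaleCoeff_eq_smul (t r : ℝ) (h : Fin (m + 1) → Fin (m + 1) → s → ℝ) :
    scaleCoeff t r h = t • scaleCoeff 1 r h := by
  funext a b μ
  simp only [scaleCoeff, Pi.smul_apply, smul_eq_mul]
  ring

theorem mul_setIntegral_weightedDerivSq_le (hε : 0 < ε) (hT : ∀ a b, ContDiff ℝ ∞ (T a b)) {r : ℝ}
    (hr : ε ≤ r) :
    ε ^ (m - 1) / (4 * r ^ 2) ^ (m + 1) * ∫ x in r • box m, weightedDerivSq (weight ε) T x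
      ≤ ∫ x in halfAnnulus m r, bubbleEnergy ε T x := by
  have hr0 : 0 < r := hε.trans_le hr
  have hbox := smul_box_subset_halfAnnulus (m := m) hr0
  have hK : IsCompact (r • box m) := isCompact_box.smul r
  have hcont := continuousOn_bubbleEnergy hε hT
  rw [← integral_const_mul]
  refine le_trans (setIntegral_mono_on ?_ ?_ hK.measurableSet fun x hx =>
    mul_weightedDerivSq_le_bubbleEnergy hε hr (hbox hx)) ?_
  · exact (continuous_const.mul
      (continuous_weightedDerivSq (contDiff_weight ε) hT)).continuousOn.integrableOn_compact hK
  · exact (integrableOn_halfBall hcont r).mono_set (hbox.trans (halfAnnulus_subset_halfBall r))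
  · exact setIntegral_le_setIntegral_of_subset_halfBall hbox (halfAnnulus_subset_halfBall r)
      (measurableSet_halfAnnulus r) hcont fun x hx => bubbleEnergy_nonneg hε T hx

theorem exists_le_setIntegral_smul_box (hm : 3 ≤ m) (hs : 0 ∉ s) (C₀ : ℝ) :
    ∃ c > 0, ∀ ε (h : Fin (m + 1) → Fin (m + 1) → s → ℝ) V, 0 < ε → IsFermiGauge (polyTensor h) →
      IsDeformationField C₀ ε (polyTensor h) V → ∀ r, ε ≤ r →
      c * (‖scaleCoeff 1 r h‖ ^ 2 * r ^ 2 * r ^ (m + 1))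
        ≤ ∫ x in r • box m, weightedDerivSq (weight ε) (deformedTensor (polyTensor h) V) x := by
  obtain ⟨M, hM, hadm⟩ := exists_isAdmissible_deformedTensor s C₀
  obtain ⟨c, hc, hbox⟩ := exists_le_setIntegral_weightedDerivSq hm hs hM
  refine ⟨c, hc, fun ε h V hε hH hV r hr => ?_⟩
  have hr0 : 0 < r := hε.trans_le hr
  obtain hN | hN := (norm_nonneg (scaleCoeff 1 r h)).eq_or_lt
  · simp only [← hN, ne_eq, OfNat.ofNat_ne_zero, not_false_eq_true, zero_pow, zero_mul, mul_zero]
    exact integral_nonneg fun x => weightedDerivSq_nonneg _ _ x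
  set N := ‖scaleCoeff 1 r h‖ with hNdef
  have hnorm : ‖scaleCoeff (1 / N) r h‖ = 1 := by
    rw [scaleCoeff_eq_smul, norm_smul, Real.norm_of_nonneg (by positivity), ← hNdef,
      one_div_mul_cancel hN.ne']
  have hδ : ε / r ≤ 1 := (div_le_one hr0).2 hr
  have hH' := hH.scale (1 / N) hr0.ne'
  have hV' := hV.scale (t := 1 / N) (by positivity) hr0
  have hunit := hbox _ _ _ hnorm hH' (by positivity) hδ
    (hadm _ _ _ (by positivity) hδ hnorm.le hH' hV')
  simp only [weightedDerivSq_deformedTensor_scale ε h hV.contDiff (1 / N) hr0.ne'] at hunit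
  rw [integral_const_mul, Measure.setIntegral_comp_smul volume _ (box m) hr0.ne', smul_eq_mul,
    Module.finrank_fintype_fun_eq_card, Fintype.card_fin, abs_of_pos (by positivity)] at hunit
  refine (mul_le_mul_of_nonneg_right hunit (by positivity)).trans_eq ?_
  field_simp

theorem exists_le_setIntegral_halfAnnulus (hm : 3 ≤ m) (hs : 0 ∉ s) (C₀ : ℝ) :
    ∃ c > 0, ∀ ε (h : Fin (m + 1) → Fin (m + 1) → s → ℝ) V, 0 < ε → IsFermiGauge (polyTensor h) →
      IsDeformationField C₀ ε (polyTensor h) V → ∀ r, ε ≤ r →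
      c * ε ^ (m - 1) * (r ^ 2 / r ^ (m + 1)) * ‖scaleCoeff 1 r h‖ ^ 2
        ≤ ∫ x in halfAnnulus m r, bubbleEnergy ε (deformedTensor (polyTensor h) V) x := by
  obtain ⟨c, hc, hbox⟩ := exists_le_setIntegral_smul_box hm hs C₀
  refine ⟨c / 4 ^ (m + 1), by positivity, fun ε h V hε hH hV r hr => ?_⟩
  have hr0 : 0 < r := hε.trans_le hr
  refine le_trans ?_
    (mul_setIntegral_weightedDerivSq_le hε (contDiff_deformedTensor _ hV.contDiff) hr)
  refine le_trans (le_of_eq ?_) (mul_le_mul_of_nonneg_left (hbox ε h V hε hH hV r hr)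
    (by positivity))
  rw [mul_pow, ← pow_mul, mul_comm 2 (m + 1), pow_mul]
  field_simp

end Annulus

section DyadicSummation

open scoped ContDiff
open MvPolynomial (coeff)

variable {m : ℕ} {s : Finset (Fin (m + 1) →₀ ℕ)} {h : Fin (m + 1) → Fin (m + 1) → s → ℝ}
  {ε ρ : ℝ} {A : Set (Fin (m + 1) → ℝ)}

/-- The squares of the coefficients of `H`, weighted by the integrals over `A` which the coercivity
estimate attaches to their degrees. -/
noncomputable def coeffEnergy (ε : ℝ)
    (H : Fin (m + 1) → Fin (m + 1) → MvPolynomial (Fin (m + 1)) ℝ) (A : Set (Fin (m + 1) → ℝ)) :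
    ℝ :=
  ∑ a, ∑ b, ∑ μ ∈ (H a b).support, coeff μ (H a b) ^ 2 *
    ∫ x in A, (ε + euclLength x) ^ (2 * (μ.degree : ℤ) + 2 - 2 * (m + 1 : ℕ))

theorem coeffEnergy_polyTensor (ε : ℝ) (h : Fin (m + 1) → Fin (m + 1) → s → ℝ)
    (A : Set (Fin (m + 1) → ℝ)) :
    coeffEnergy ε (polyTensor h) A = ∑ a, ∑ b, ∑ μ : s, h a b μ ^ 2 *
      ∫ x in A, (ε + euclLength x) ^ (2 * (μ.1.degree : ℤ) + 2 - 2 * (m + 1 : ℕ)) :=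
  Finset.sum_congr rfl fun a _ => Finset.sum_congr rfl fun b _ =>
    sum_support_polyTensor h a b (f := fun c μ => c ^ 2 *
      ∫ x in A, (ε + euclLength x) ^ (2 * (μ.degree : ℤ) + 2 - 2 * (m + 1 : ℕ))) fun μ => by simp

theorem continuous_add_euclLength_zpow {ι : Type*} [Fintype ι] (hε : 0 < ε) (k : ℤ) :
    Continuous fun x : ι → ℝ => (ε + euclLength x) ^ k :=
  (continuous_const.add continuous_euclLength).zpow₀ k fun x =>
    Or.inl (add_pos_of_pos_of_nonneg hε (euclLength_nonneg x)).ne'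

theorem coeffEnergy_halfBall_eq_add (hε : 0 < ε) (hρ : 0 ≤ ρ)
    (H : Fin (m + 1) → Fin (m + 1) → MvPolynomial (Fin (m + 1)) ℝ) :
    coeffEnergy ε H (halfBall m ρ)
      = coeffEnergy ε H (halfBall m (ρ / 2)) + coeffEnergy ε H (halfAnnulus m ρ) := by
  simp only [coeffEnergy,
    setIntegral_halfBall_eq_add hρ (continuous_add_euclLength_zpow hε _).continuousOn,
    mul_add, Finset.sum_add_distrib]

theorem add_euclLength_zpow_le (hε : 0 < ε) (hρ : ε ≤ ρ) (hA : A ⊆ halfBall m ρ)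
    (hfar : ∀ x ∈ A, ρ / 4 ≤ ε + euclLength x) {k : ℤ} {p : ℕ} (hk : |k| ≤ p)
    {x : Fin (m + 1) → ℝ} (hx : x ∈ A) : (ε + euclLength x) ^ k ≤ 4 ^ p * ρ ^ k := by
  have hρ0 : 0 < ρ := hε.trans_le hρ
  have hratio : ((ε + euclLength x) / ρ) ^ k ≤ 4 ^ p := by
    refine zpow_le_pow_of_inv_le (by norm_num) ?_ ?_ hk
    · rw [le_div_iff₀ hρ0]
      linarith [hfar x hx]
    · rw [div_le_iff₀ hρ0]
      linarith [(hA hx).2]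
  rwa [div_zpow, div_le_iff₀ (zpow_pos hρ0 k)] at hratio

theorem setIntegral_add_euclLength_zpow_le (hε : 0 < ε) (hρ : ε ≤ ρ) (hA : A ⊆ halfBall m ρ)
    (hfar : ∀ x ∈ A, ρ / 4 ≤ ε + euclLength x) (d : ℕ) :
    ∫ x in A, (ε + euclLength x) ^ (2 * (d : ℤ) + 2 - 2 * (m + 1 : ℕ))
      ≤ 4 ^ (2 * d + 2 + 2 * (m + 1)) * 2 ^ (m + 1) * (ρ ^ 2 / ρ ^ (m + 1)) * (ρ ^ d) ^ 2 := by
  have hρ0 : 0 < ρ := hε.trans_le hρ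
  set k : ℤ := 2 * (d : ℤ) + 2 - 2 * (m + 1 : ℕ) with hk
  have hpow : ρ ^ k * ρ ^ (m + 1) = ρ ^ 2 / ρ ^ (m + 1) * (ρ ^ d) ^ 2 := by
    rw [eq_comm, div_mul_eq_mul_div, div_eq_iff (by positivity)]
    rw [← pow_mul, ← pow_add, ← zpow_natCast, ← zpow_natCast ρ (m + 1), mul_assoc,
      ← zpow_add₀ hρ0.ne', ← zpow_add₀ hρ0.ne']
    congr 1
    push_cast [hk]
    ring
  have hle := norm_setIntegral_le_of_norm_le_const (μ := volume)
    (f := fun x => (ε + euclLength x) ^ k) (C := 4 ^ (2 * d + 2 + 2 * (m + 1)) * ρ ^ k)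
    (volume_lt_top_of_subset_halfBall hA) fun x hx => by
      rw [Real.norm_of_nonneg (zpow_nonneg (add_nonneg hε.le (euclLength_nonneg x)) k)]
      exact add_euclLength_zpow_le hε hρ hA hfar (abs_le.2 (by push_cast; omega)) hx
  calc ∫ x in A, (ε + euclLength x) ^ k
      ≤ 4 ^ (2 * d + 2 + 2 * (m + 1)) * ρ ^ k * volume.real A := (le_abs_self _).trans hle
    _ ≤ 4 ^ (2 * d + 2 + 2 * (m + 1)) * ρ ^ k * (2 * ρ) ^ (m + 1) := by
        gcongr
        exact volume_real_le_of_subset_halfBall hρ0.le hA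
    _ = _ := by
        rw [mul_pow]
        linear_combination 4 ^ (2 * d + 2 + 2 * (m + 1)) * 2 ^ (m + 1) * hpow

theorem coeffEnergy_polyTensor_le (hε : 0 < ε) (hρ : ε ≤ ρ) (hA : A ⊆ halfBall m ρ)
    (hfar : ∀ x ∈ A, ρ / 4 ≤ ε + euclLength x) (h : Fin (m + 1) → Fin (m + 1) → s → ℝ) :
    coeffEnergy ε (polyTensor h) A
      ≤ (∑ _a : Fin (m + 1), ∑ _b : Fin (m + 1), ∑ μ : s,
          4 ^ (2 * μ.1.degree + 2 + 2 * (m + 1)) * 2 ^ (m + 1))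
        * (ρ ^ 2 / ρ ^ (m + 1) * ‖scaleCoeff 1 ρ h‖ ^ 2) := by
  have hρ0 : 0 < ρ := hε.trans_le hρ
  simp only [coeffEnergy_polyTensor, Finset.sum_mul]
  refine Finset.sum_le_sum fun a _ => Finset.sum_le_sum fun b _ => Finset.sum_le_sum fun μ _ => ?_
  have hentry : (ρ ^ μ.1.degree * h a b μ) ^ 2 ≤ ‖scaleCoeff 1 ρ h‖ ^ 2 := by
    refine sq_le_sq' (abs_le.1 ?_).1 (abs_le.1 ?_).2 <;>
      simpa only [scaleCoeff, one_mul] using abs_le_norm_pi_pi (scaleCoeff 1 ρ h) a b μ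
  calc h a b μ ^ 2 * ∫ x in A, (ε + euclLength x) ^ (2 * (μ.1.degree : ℤ) + 2 - 2 * (m + 1 : ℕ))
      ≤ h a b μ ^ 2 * (4 ^ (2 * μ.1.degree + 2 + 2 * (m + 1)) * 2 ^ (m + 1)
          * (ρ ^ 2 / ρ ^ (m + 1)) * (ρ ^ μ.1.degree) ^ 2) := by
        gcongr
        exact setIntegral_add_euclLength_zpow_le hε hρ hA hfar _
    _ = 4 ^ (2 * μ.1.degree + 2 + 2 * (m + 1)) * 2 ^ (m + 1)
          * (ρ ^ 2 / ρ ^ (m + 1) * (ρ ^ μ.1.degree * h a b μ) ^ 2) := by ring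
    _ ≤ _ := by gcongr

theorem exists_coeffEnergy_le_halfAnnulus (hm : 3 ≤ m) (hs : 0 ∉ s) (C₀ : ℝ) :
    ∃ K > 0, ∀ ε (h : Fin (m + 1) → Fin (m + 1) → s → ℝ) V, 0 < ε → IsFermiGauge (polyTensor h) →
      IsDeformationField C₀ ε (polyTensor h) V → ∀ ρ, ε ≤ ρ → ∀ A ⊆ halfBall m ρ,
      (∀ x ∈ A, ρ / 4 ≤ ε + euclLength x) →
      ε ^ (m - 1) * coeffEnergy ε (polyTensor h) A
        ≤ K * ∫ x in halfAnnulus m ρ, bubbleEnergy ε (deformedTensor (polyTensor h) V) x := by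
  obtain ⟨c, hc, hannulus⟩ := exists_le_setIntegral_halfAnnulus hm hs C₀
  set N : ℝ := ∑ _a : Fin (m + 1), ∑ _b : Fin (m + 1), ∑ μ : s,
    4 ^ (2 * μ.1.degree + 2 + 2 * (m + 1)) * 2 ^ (m + 1)
  have hN : 0 ≤ N := by positivity
  refine ⟨(N + 1) / c, by positivity, fun ε h V hε hH hV ρ hρ A hA hfar => ?_⟩
  have hρ0 : 0 < ρ := hε.trans_le hρ
  calc ε ^ (m - 1) * coeffEnergy ε (polyTensor h) A
      ≤ ε ^ (m - 1) * ((N + 1) * (ρ ^ 2 / ρ ^ (m + 1) * ‖scaleCoeff 1 ρ h‖ ^ 2)) := by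
        gcongr
        refine (coeffEnergy_polyTensor_le hε hρ hA hfar h).trans ?_
        gcongr
        linarith
    _ = (N + 1) / c * (c * ε ^ (m - 1) * (ρ ^ 2 / ρ ^ (m + 1)) * ‖scaleCoeff 1 ρ h‖ ^ 2) := by
        field_simp
    _ ≤ _ := by
        gcongr
        exact hannulus ε h V hε hH hV ρ hρ

theorem dyadic_induction {P : ℝ → Prop} (hε : 0 < ε) (base : ∀ ρ, 2 * ε ≤ ρ → ρ ≤ 4 * ε → P ρ)
    (step : ∀ ρ, 4 * ε ≤ ρ → P (ρ / 2) → P ρ) (hρ : 2 * ε ≤ ρ) : P ρ := by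
  obtain ⟨k, hk⟩ := pow_unbounded_of_one_lt (ρ / (4 * ε)) one_lt_two
  replace hk : ρ ≤ 2 ^ k * (4 * ε) := ((div_lt_iff₀ (by positivity)).1 hk).le
  induction k generalizing ρ with
  | zero => exact base ρ hρ (by simpa using hk)
  | succ k ih =>
    obtain hsmall | hlarge := le_total ρ (4 * ε)
    · exact base ρ hρ hsmall
    · exact step ρ hlarge (ih (by linarith) (by rw [pow_succ] at hk; linarith))

theorem exists_coeffEnergy_le_halfBall (hm : 3 ≤ m) (hs : 0 ∉ s) (C₀ : ℝ) :
    ∃ K > 0, ∀ ε (h : Fin (m + 1) → Fin (m + 1) → s → ℝ) V, 0 < ε → IsFermiGauge (polyTensor h) →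
      IsDeformationField C₀ ε (polyTensor h) V → ∀ ρ, 2 * ε ≤ ρ →
      ε ^ (m - 1) * coeffEnergy ε (polyTensor h) (halfBall m ρ)
        ≤ K * ∫ x in halfBall m ρ, bubbleEnergy ε (deformedTensor (polyTensor h) V) x := by
  obtain ⟨K, hK, hblock⟩ := exists_coeffEnergy_le_halfAnnulus hm hs C₀
  refine ⟨K, hK, fun ε h V hε hH hV ρ hρ => ?_⟩
  replace hblock := hblock ε h V hε hH hV
  have hcont := continuousOn_bubbleEnergy hε (contDiff_deformedTensor (polyTensor h) hV.contDiff)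
  refine dyadic_induction (P := fun ρ => ε ^ (m - 1) * coeffEnergy ε (polyTensor h) (halfBall m ρ)
    ≤ K * ∫ x in halfBall m ρ, bubbleEnergy ε (deformedTensor (polyTensor h) V) x) hε
    (fun ρ hρ hρ' => ?_) (fun ρ hρ ih => ?_) hρ
  · refine (hblock ρ (by linarith) _ subset_rfl fun x _ => ?_).trans
      (mul_le_mul_of_nonneg_left ?_ hK.le)
    · linarith [euclLength_nonneg x]
    · exact setIntegral_le_setIntegral_of_subset_halfBall (halfAnnulus_subset_halfBall ρ)
        subset_rfl (measurableSet_halfBall ρ) hcont fun x hx => bubbleEnergy_nonneg hε _ hx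
  · have hρ0 : 0 ≤ ρ := by linarith
    rw [coeffEnergy_halfBall_eq_add hε hρ0, setIntegral_halfBall_eq_add hρ0 hcont, mul_add, mul_add]
    refine add_le_add ih (hblock ρ (by linarith) _ (halfAnnulus_subset_halfBall ρ) fun x hx => ?_)
    linarith [hx.2.1]

end DyadicSummation

section Bubble

variable {m : ℕ} {ε : ℝ} {x : Fin (m + 1) → ℝ}

/-- The bubble `U_ε` on the half-space of dimension `m + 1`. -/
noncomputable def bubble (ε : ℝ) (y : Fin (m + 1) → ℝ) : ℝ :=
  (ε / weight ε y) ^ ((((m + 1 : ℕ) : ℝ) - 2) / 2)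

/-- The three-tensor `Q_{ab,c}` built from `T` and the bubble. -/
noncomputable def bubbleDeriv (ε : ℝ) (T : Fin (m + 1) → Fin (m + 1) → (Fin (m + 1) → ℝ) → ℝ)
    (a b c : Fin (m + 1)) (x : Fin (m + 1) → ℝ) : ℝ :=
  bubble ε x * partialDeriv c (T a b) x
    - 2 / (((m + 1 : ℕ) : ℝ) - 2) * partialDeriv a (bubble ε) x * T b c x
    - 2 / (((m + 1 : ℕ) : ℝ) - 2) * partialDeriv b (bubble ε) x * T a c x
    + 2 / (((m + 1 : ℕ) : ℝ) - 2) * (∑ e, partialDeriv e (bubble ε) x * T a e x) * delta b c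
    + 2 / (((m + 1 : ℕ) : ℝ) - 2) * (∑ e, partialDeriv e (bubble ε) x * T b e x) * delta a c

theorem weight_eq_add_sum_tangential (ε : ℝ) (y : Fin (m + 1) → ℝ) :
    weight ε y
      = (ε + y (Fin.last m)) ^ 2 + ∑ i : Fin (m + 1), if (i : ℕ) < m then y i ^ 2 else 0 := by
  simp only [weight, Fin.sum_univ_castSucc, Fin.val_castSucc, Fin.is_lt, if_true, Fin.val_last,
    lt_self_iff_false, if_false]
  ring

theorem bubble_nonneg (hε : 0 < ε) (hx : 0 ≤ x (Fin.last m)) : 0 ≤ bubble ε x :=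
  Real.rpow_nonneg (div_nonneg hε.le (weight_pos hε hx).le) _

theorem partialDeriv_bubble (hε : 0 < ε) (a : Fin (m + 1)) (hx : 0 ≤ x (Fin.last m)) :
    partialDeriv a (bubble ε) x
      = -((((m + 1 : ℕ) : ℝ) - 2) / 2) * (bubble ε x / weight ε x)
        * partialDeriv a (weight ε) x := by
  have hw := weight_pos hε hx
  have hinner : HasFDerivAt (fun y => ε / weight ε y)
      ((-ε / weight ε x ^ 2) • fderiv ℝ (weight ε) x) x := by
    have hinv : HasDerivAt (fun t : ℝ => ε / t) (-ε / weight ε x ^ 2) (weight ε x) :=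
      ((hasDerivAt_const (weight ε x) ε).div (hasDerivAt_id _) hw.ne').congr_deriv (by simp)
    exact hinv.comp_hasFDerivAt x
      (differentiable_of_smooth (contDiff_weight ε) x).hasFDerivAt
  have hbubble := hinner.rpow_const (p := (((m + 1 : ℕ) : ℝ) - 2) / 2)
    (Or.inl (div_pos hε hw).ne')
  unfold partialDeriv bubble
  rw [hbubble.fderiv, Real.rpow_sub_one (div_pos hε hw).ne']
  simp only [smul_apply, smul_eq_mul]
  field_simp

theorem partialDeriv_last_bubble_nonpos (hm : 1 ≤ m) (hε : 0 < ε) (hx : 0 ≤ x (Fin.last m)) :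
    partialDeriv (Fin.last m) (bubble ε) x ≤ 0 := by
  have hq : (0 : ℝ) ≤ (((m + 1 : ℕ) : ℝ) - 2) / 2 := by
    have : (1 : ℝ) ≤ m := by exact_mod_cast hm
    push_cast
    linarith
  have hratio := div_nonneg (bubble_nonneg hε hx) (weight_pos hε hx).le
  rw [partialDeriv_bubble hε _ hx, partialDeriv_weight, delta_self, neg_mul, neg_mul,
    Left.neg_nonpos_iff]
  positivity

theorem sq_bubble (hm : 1 ≤ m) (hε : 0 < ε) (hx : 0 ≤ x (Fin.last m)) :
    bubble ε x ^ 2 = (ε / weight ε x) ^ (m - 1) := by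
  rw [bubble, ← Real.rpow_natCast, ← Real.rpow_mul (div_pos hε (weight_pos hε hx)).le,
    ← Real.rpow_natCast, Nat.cast_sub hm]
  push_cast
  ring_nf

theorem bubbleDeriv_eq (hm : m ≠ 1) (hε : 0 < ε)
    (T : Fin (m + 1) → Fin (m + 1) → (Fin (m + 1) → ℝ) → ℝ) (a b c : Fin (m + 1))
    (hx : 0 ≤ x (Fin.last m)) :
    bubbleDeriv ε T a b c x = bubble ε x / weight ε x * weightedDeriv (weight ε) T a b c x := by
  have hw := (weight_pos hε hx).ne'
  have hn : ((m + 1 : ℕ) : ℝ) - 2 ≠ 0 := by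
    have : (m : ℝ) ≠ 1 := by exact_mod_cast hm
    push_cast
    contrapose! this
    linarith
  have hderiv (a : Fin (m + 1)) : 2 / (((m + 1 : ℕ) : ℝ) - 2) * partialDeriv a (bubble ε) x
      = -(bubble ε x / weight ε x) * partialDeriv a (weight ε) x := by
    rw [partialDeriv_bubble hε a hx]
    field_simp
  have hsum (a : Fin (m + 1)) :
      2 / (((m + 1 : ℕ) : ℝ) - 2) * ∑ e, partialDeriv e (bubble ε) x * T a e x
        = -(bubble ε x / weight ε x) * ∑ e, partialDeriv e (weight ε) x * T a e x := by
    simp only [Finset.mul_sum, ← mul_assoc, hderiv]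
  rw [bubbleDeriv, hderiv, hderiv, hsum, hsum, weightedDeriv]
  field_simp
  ring

theorem sum_sq_bubbleDeriv (hm : 1 < m) (hε : 0 < ε)
    (T : Fin (m + 1) → Fin (m + 1) → (Fin (m + 1) → ℝ) → ℝ) (hx : 0 ≤ x (Fin.last m)) :
    ∑ a, ∑ b, ∑ c, bubbleDeriv ε T a b c x ^ 2 = bubbleEnergy ε T x := by
  have hw := weight_pos hε hx
  have hpow : weight ε x ^ (m + 1) = weight ε x ^ (m - 1) * weight ε x ^ 2 := by
    rw [← pow_add]
    congr 1
    omega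
  simp only [bubbleDeriv_eq hm.ne' hε T _ _ _ hx, mul_pow, ← Finset.mul_sum]
  rw [div_pow, sq_bubble hm.le hε hx, div_pow, bubbleEnergy, hpow, weightedDerivSq]
  field_simp

theorem boundaryTerm_nonpos (hm : 1 ≤ m) (hε : 0 < ε) (A : Set (Fin m → ℝ))
    (f : (Fin (m + 1) → ℝ) → ℝ) :
    ((m + 1 : ℕ) : ℝ) ^ 2 / (2 * (((m + 1 : ℕ) : ℝ) - 1) * (((m + 1 : ℕ) : ℝ) - 2)) *
      ∫ x' in A, partialDeriv (Fin.last m) (bubble ε)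
          (fun a : Fin (m + 1) => if h : (a : ℕ) < m then x' ⟨a, h⟩ else 0)
        * bubble ε (fun a : Fin (m + 1) => if h : (a : ℕ) < m then x' ⟨a, h⟩ else 0)
        * f (fun a : Fin (m + 1) => if h : (a : ℕ) < m then x' ⟨a, h⟩ else 0) ^ 2 ≤ 0 := by
  have hm' : (1 : ℝ) ≤ m := by exact_mod_cast hm
  refine mul_nonpos_of_nonneg_of_nonpos ?_ (integral_nonpos fun x' => ?_)
  · push_cast
    exact div_nonneg (by positivity) (mul_nonneg (by linarith) (by linarith))
  · exact mul_nonpos_of_nonpos_of_nonneg (mul_nonpos_of_nonpos_of_nonneg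
      (partialDeriv_last_bubble_nonpos hm hε (by simp)) (bubble_nonneg hε (by simp))) (sq_nonneg _)

end Bubble

section Coercivity

open MvPolynomial (coeff)

variable {m : ℕ}

/-- The multi-indices of degree between `1` and `d`. -/
noncomputable def multiIndices (ι : Type*) [Fintype ι] [DecidableEq ι] (d : ℕ) : Finset (ι →₀ ℕ) :=
  (Finset.Icc 1 d).biUnion fun k => Finset.finsuppAntidiag Finset.univ k

theorem mem_multiIndices {ι : Type*} [Fintype ι] [DecidableEq ι] {d : ℕ} {μ : ι →₀ ℕ} :
    μ ∈ multiIndices ι d ↔ 1 ≤ μ.degree ∧ μ.degree ≤ d := by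
  simp [multiIndices, Finset.mem_finsuppAntidiag, Finsupp.degree_eq_sum]

theorem polyTensor_coeff {ι : Type*} {s : Finset (ι →₀ ℕ)} {H : ι → ι → MvPolynomial ι ℝ}
    (hH : ∀ a b, (H a b).support ⊆ s) : polyTensor (fun a b (μ : s) => coeff μ.1 (H a b)) = H := by
  funext a b
  ext μ
  by_cases hμ : μ ∈ s
  · exact coeff_polyTensor _ a b ⟨μ, hμ⟩
  · rw [coeff_polyTensor_of_notMem _ a b hμ, MvPolynomial.notMem_support_iff.1 (mt (@hH a b μ) hμ)]

theorem exists_mul_coeffEnergy_le (hm : 3 ≤ m) (d : ℕ) (C₀ : ℝ) :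
    ∃ lam > 0, ∀ ε ρ, 0 < ε → 2 * ε ≤ ρ → ∀ H : Fin (m + 1) → Fin (m + 1) → MvPolynomial _ ℝ,
      (∀ a b, ∀ μ ∈ (H a b).support, 1 ≤ μ.degree ∧ μ.degree ≤ d) → IsFermiGauge H →
      ∀ V, IsDeformationField C₀ ε H V →
      lam * ε ^ (m - 1) * coeffEnergy ε H (halfBall m ρ)
        ≤ 1 / 4 * ∫ x in halfBall m ρ,
            ∑ a, ∑ b, ∑ c, bubbleDeriv ε (deformedTensor H V) a b c x ^ 2 := by
  obtain ⟨K, hK, hle⟩ := exists_coeffEnergy_le_halfBall (s := multiIndices (Fin (m + 1)) d) hm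
    (fun h => absurd (mem_multiIndices.1 h).1 (by simp)) C₀
  refine ⟨1 / (4 * K), by positivity, fun ε ρ hε hρ H hdeg hH V hV => ?_⟩
  have hpoly := polyTensor_coeff fun a b μ hμ => mem_multiIndices.2 (hdeg a b μ hμ)
  have hmain := hle ε (fun a b μ => coeff μ.1 (H a b)) V hε
  rw [hpoly] at hmain
  rw [setIntegral_congr_fun (measurableSet_halfBall ρ) fun x hx =>
    sum_sq_bubbleDeriv (by omega) hε (deformedTensor H V) hx.1]
  calc 1 / (4 * K) * ε ^ (m - 1) * coeffEnergy ε H (halfBall m ρ)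
      = 1 / (4 * K) * (ε ^ (m - 1) * coeffEnergy ε H (halfBall m ρ)) := mul_assoc _ _ _
    _ ≤ 1 / (4 * K) * (K * ∫ x in halfBall m ρ, bubbleEnergy ε (deformedTensor H V) x) :=
        mul_le_mul_of_nonneg_left (hmain hH hV ρ hρ) (by positivity)
    _ = _ := by field_simp

end Coercivity

section TangentialIndices

open scoped ContDiff
open MvPolynomial (coeff eval)

variable {m : ℕ} {H : Fin (m + 1) → Fin (m + 1) → MvPolynomial (Fin (m + 1)) ℝ}

theorem sum_tangential {G : Fin (m + 1) → Fin (m + 1) → ℝ} (hrow : ∀ b, G (Fin.last m) b = 0)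
    (hcol : ∀ a, G a (Fin.last m) = 0) :
    (∑ i : Fin (m + 1), ∑ j : Fin (m + 1), if (i : ℕ) < m ∧ (j : ℕ) < m then G i j else 0)
      = ∑ a, ∑ b, G a b := by
  simp [Fin.sum_univ_castSucc, hrow, hcol]

theorem cast_degree {ι : Type*} (μ : ι →₀ ℕ) : (μ.degree : ℤ) = μ.sum fun _ e => (e : ℤ) := by
  simp [Finsupp.degree_apply, Finsupp.sum]

theorem growthBound_eq_sum_tangential (hH : IsFermiGauge H) (δ : ℝ) (k : ℤ) (x : Fin (m + 1) → ℝ) :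
    growthBound δ H k x = ∑ i : Fin (m + 1), ∑ j : Fin (m + 1), if (i : ℕ) < m ∧ (j : ℕ) < m then
      ∑ μ ∈ (H i j).support, |coeff μ (H i j)| *
        (δ + euclLength x) ^ ((μ.sum fun _ e => (e : ℤ)) + 1 - k) else 0 := by
  rw [sum_tangential (fun b => by simp [hH.symm _ b, hH.normal]) (fun a => by simp [hH.normal])]
  simp only [growthBound, cast_degree]

theorem coeffEnergy_eq_sum_tangential (hH : IsFermiGauge H) (ε : ℝ) (A : Set (Fin (m + 1) → ℝ)) :
    coeffEnergy ε H A = ∑ i : Fin (m + 1), ∑ j : Fin (m + 1), if (i : ℕ) < m ∧ (j : ℕ) < m then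
      ∑ μ ∈ (H i j).support, coeff μ (H i j) ^ 2 * ∫ x in A,
        (ε + euclLength x) ^ (2 * (μ.sum fun _ e => (e : ℤ)) + 2 - 2 * ((m + 1 : ℕ) : ℤ))
      else 0 := by
  rw [sum_tangential (fun b => by simp [hH.symm _ b, hH.normal]) (fun a => by simp [hH.normal])]
  simp only [coeffEnergy, cast_degree]

theorem isFermiGauge_of_radial (hsymm : ∀ a b, H a b = H b a) (htrace : ∑ a, H a a = 0)
    (hnormal : ∀ a, H a (Fin.last m) = 0)
    (hradial : ∀ i : Fin (m + 1), (i : ℕ) < m → ∀ x : Fin (m + 1) → ℝ, x (Fin.last m) = 0 →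
      (∑ j : Fin (m + 1), if (j : ℕ) < m then x j * eval x (H i j) else 0) = 0) :
    IsFermiGauge H :=
  ⟨hsymm, htrace, hnormal, fun i x => by
    simpa [Fin.sum_univ_castSucc] using
      hradial i.castSucc i.2 (Fin.snoc (α := fun _ => ℝ) x 0) (by simp)⟩

theorem iteratedFDeriv_single_apply {ι : Type*} [Fintype ι] [DecidableEq ι]
    {V : (ι → ℝ) → ι → ℝ} (hV : ContDiff ℝ ∞ V) (b : ι) (l : List ι) (x : ι → ℝ) :
    iteratedFDeriv ℝ l.length V x (fun k => Pi.single (l.get k) 1) b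
      = iteratedPartialDeriv l (fun y => V y b) x := by
  induction l generalizing x with
  | nil => simp [iteratedPartialDeriv]
  | cons a l ih =>
    have hdiff : DifferentiableAt ℝ (iteratedFDeriv ℝ l.length V) x :=
      hV.differentiable_iteratedFDeriv (by exact_mod_cast WithTop.coe_lt_top _) x
    have hcomp := ((ContinuousLinearMap.proj (R := ℝ) (φ := fun _ : ι => ℝ) b).comp
      (ContinuousMultilinearMap.apply ℝ (fun _ : Fin l.length => ι → ℝ) (ι → ℝ)
        fun k => Pi.single (l.get k) 1)).hasFDerivAt.comp x hdiff.hasFDerivAt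
    rw [iteratedPartialDeriv_cons, ← funext ih]
    exact (congrArg (· (Pi.single a 1)) hcomp.fderiv).symm

theorem isDeformationField_of_norm_iteratedFDeriv_le {C₀ ε : ℝ}
    {V : (Fin (m + 1) → ℝ) → Fin (m + 1) → ℝ} (hm : 0 < m) (hV : ContDiff ℝ ∞ V)
    (hboundary : ∀ i : Fin (m + 1), (i : ℕ) < m → ∀ x : Fin (m + 1) → ℝ, x (Fin.last m) = 0 →
      partialDeriv (Fin.last m) (fun w => V w i) x = 0 ∧ V x (Fin.last m) = 0)
    (hbound : ∀ k : ℕ, 1 ≤ k → k ≤ 3 → ∀ dirs : Fin k → Fin (m + 1), ∀ x : Fin (m + 1) → ℝ,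
      0 ≤ x (Fin.last m) → ‖iteratedFDeriv ℝ k V x (fun l => Pi.single (dirs l) 1)‖
        ≤ C₀ * growthBound ε H k x)
    (humbilic : ∀ x : Fin (m + 1) → ℝ, x (Fin.last m) = 0 → ∃ κ : ℝ, ∀ i j : Fin (m + 1),
      (i : ℕ) < m → (j : ℕ) < m → partialDeriv (Fin.last m)
        (conformalKilling (2 / (m + 1 : ℕ)) (fun b x => V x b) i j) x = κ * delta i j) :
    IsDeformationField C₀ ε H fun b x => V x b := by
  refine ⟨contDiff_pi.1 hV, fun y hy => (hboundary 0 hm y hy).2,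
    fun y hy i => (hboundary i.castSucc i.2 y hy).1, fun y hy => ?_, fun l hl hl' b y hy => ?_⟩
  · obtain ⟨κ, hκ⟩ := humbilic y hy
    refine ⟨κ, fun i j => ?_⟩
    simpa only [delta, Fin.castSucc_inj] using hκ i.castSucc j.castSucc i.2 j.2
  · rw [← iteratedFDeriv_single_apply hV]
    exact (norm_le_pi_norm _ b).trans (hbound l.length hl hl' l.get y hy)

end TangentialIndices

end HalfSpaceTensor

open HalfSpaceTensor in
theorem stmt_7_general (n : ℕ) (hn : 3 < n) (C₀ : ℝ) (d : ℕ) :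
    ∃ lam : ℝ, 0 < lam ∧
    ∀ ε ρ : ℝ, 0 < ε → 2 * ε ≤ ρ →
    ∀ U : (Fin n → ℝ) → ℝ,
      (∀ y : Fin n → ℝ, U y =
        (ε / ((ε + y ⟨n - 1, by omega⟩) ^ 2
          + ∑ i : Fin n, if (i : ℕ) < n - 1 then y i ^ 2 else 0)) ^ (((n : ℝ) - 2) / 2)) →
    ∀ H : Fin n → Fin n → MvPolynomial (Fin n) ℝ,
      (∀ a b : Fin n, ∀ m ∈ (H a b).support,
        1 ≤ m.sum (fun _ e => e) ∧ m.sum (fun _ e => e) ≤ d) →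
      (∀ a b : Fin n, H a b = H b a) →
      ((∑ a : Fin n, H a a) = 0) →
      (∀ a : Fin n, H a ⟨n - 1, by omega⟩ = 0) →
      (∀ i : Fin n, (i : ℕ) < n - 1 → ∀ x : Fin n → ℝ, x ⟨n - 1, by omega⟩ = 0 →
        (∑ j : Fin n, if (j : ℕ) < n - 1 then x j * MvPolynomial.eval x (H i j) else 0) = 0) →
    ∀ V : (Fin n → ℝ) → Fin n → ℝ, ContDiff ℝ (⊤ : ℕ∞) V →
      (∀ i : Fin n, (i : ℕ) < n - 1 → ∀ x : Fin n → ℝ, x ⟨n - 1, by omega⟩ = 0 →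
        fderiv ℝ (fun w : Fin n → ℝ => V w i) x (Pi.single (⟨n - 1, by omega⟩ : Fin n) 1) = 0
          ∧ V x ⟨n - 1, by omega⟩ = 0) →
      (∀ k : ℕ, 1 ≤ k → k ≤ 3 → ∀ dirs : Fin k → Fin n, ∀ x : Fin n → ℝ,
        0 ≤ x ⟨n - 1, by omega⟩ →
        ‖iteratedFDeriv ℝ k V x (fun m => Pi.single (dirs m) 1)‖
          ≤ C₀ * ∑ i : Fin n, ∑ j : Fin n,
              if (i : ℕ) < n - 1 ∧ (j : ℕ) < n - 1 then
                ∑ m ∈ (H i j).support, |MvPolynomial.coeff m (H i j)|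
                  * (ε + Real.sqrt (∑ c : Fin n, x c ^ 2))
                      ^ ((m.sum (fun _ e => e) : ℤ) + 1 - (k : ℤ))
              else 0) →
    ∀ S : Fin n → Fin n → (Fin n → ℝ) → ℝ,
      (∀ (a b : Fin n) (x : Fin n → ℝ), S a b x =
        fderiv ℝ (fun w : Fin n → ℝ => V w b) x (Pi.single a 1)
          + fderiv ℝ (fun w : Fin n → ℝ => V w a) x (Pi.single b 1)
          - 2 / (n : ℝ)
              * (∑ c : Fin n, fderiv ℝ (fun w : Fin n → ℝ => V w c) x (Pi.single c 1))
              * (if a = b then 1 else 0)) →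
    ∀ T : Fin n → Fin n → (Fin n → ℝ) → ℝ,
      (∀ (a b : Fin n) (x : Fin n → ℝ), T a b x = MvPolynomial.eval x (H a b) - S a b x) →
    ∀ Q : Fin n → Fin n → Fin n → (Fin n → ℝ) → ℝ,
      (∀ (a b c : Fin n) (x : Fin n → ℝ), Q a b c x =
        U x * fderiv ℝ (T a b) x (Pi.single c 1)
          - 2 / ((n : ℝ) - 2) * fderiv ℝ U x (Pi.single a 1) * T b c x
          - 2 / ((n : ℝ) - 2) * fderiv ℝ U x (Pi.single b 1) * T a c x
          + 2 / ((n : ℝ) - 2)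
              * (∑ d : Fin n, fderiv ℝ U x (Pi.single d 1) * T a d x)
              * (if b = c then 1 else 0)
          + 2 / ((n : ℝ) - 2)
              * (∑ d : Fin n, fderiv ℝ U x (Pi.single d 1) * T b d x)
              * (if a = c then 1 else 0)) →
      (∀ x : Fin n → ℝ, x ⟨n - 1, by omega⟩ = 0 → ∃ κ : ℝ, ∀ i j : Fin n,
        (i : ℕ) < n - 1 → (j : ℕ) < n - 1 →
        fderiv ℝ (S i j) x (Pi.single (⟨n - 1, by omega⟩ : Fin n) 1)
          = κ * (if i = j then 1 else 0)) →
      lam * ε ^ (n - 2) * (∑ i : Fin n, ∑ j : Fin n,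
          if (i : ℕ) < n - 1 ∧ (j : ℕ) < n - 1 then
            ∑ m ∈ (H i j).support,
              (MvPolynomial.coeff m (H i j)) ^ 2
                * ∫ x in {x : Fin n → ℝ | 0 ≤ x ⟨n - 1, by omega⟩
                    ∧ Real.sqrt (∑ a : Fin n, x a ^ 2) < ρ},
                  (ε + Real.sqrt (∑ a : Fin n, x a ^ 2))
                    ^ (2 * (m.sum (fun _ e => e) : ℤ) + 2 - 2 * (n : ℤ))
          else 0)
        ≤ 1 / 4 * (∫ x in {x : Fin n → ℝ | 0 ≤ x ⟨n - 1, by omega⟩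
              ∧ Real.sqrt (∑ a : Fin n, x a ^ 2) < ρ},
            ∑ a : Fin n, ∑ b : Fin n, ∑ c : Fin n, (Q a b c x) ^ 2)
          - (n : ℝ) ^ 2 / (2 * ((n : ℝ) - 1) * ((n : ℝ) - 2))
            * ∫ x' in {x' : Fin (n - 1) → ℝ | Real.sqrt (∑ i : Fin (n - 1), x' i ^ 2) < ρ},
              fderiv ℝ U (fun a : Fin n => if h : (a : ℕ) < n - 1 then x' ⟨(a : ℕ), h⟩ else 0)
                  (Pi.single (⟨n - 1, by omega⟩ : Fin n) 1)
                * U (fun a : Fin n => if h : (a : ℕ) < n - 1 then x' ⟨(a : ℕ), h⟩ else 0)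
                * (S ⟨n - 1, by omega⟩ ⟨n - 1, by omega⟩
                    (fun a : Fin n => if h : (a : ℕ) < n - 1 then x' ⟨(a : ℕ), h⟩ else 0)) ^ 2 := by
  obtain ⟨m, rfl⟩ : ∃ m, n = m + 1 := ⟨n - 1, by omega⟩
  have hm : 3 ≤ m := by omega
  obtain ⟨lam, hlam, hcoercive⟩ := exists_mul_coeffEnergy_le hm d C₀
  refine ⟨lam, hlam, fun ε ρ hε hρ U hU H hdeg hsymm htrace hnormal hradial V hV hboundary hbound
    S hS T hT Q hQ humbilic => ?_⟩
  obtain rfl : U = bubble ε := funext fun y => by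
    rw [hU, bubble, weight_eq_add_sum_tangential]
    rfl
  obtain rfl : S = conformalKilling (2 / (m + 1 : ℕ)) fun b x => V x b :=
    funext fun a => funext fun b => funext (hS a b)
  obtain rfl : T = deformedTensor H fun b x => V x b :=
    funext fun a => funext fun b => funext (hT a b)
  obtain rfl : Q = bubbleDeriv ε (deformedTensor H fun b x => V x b) :=
    funext fun a => funext fun b => funext fun c => funext (hQ a b c)
  have hH : IsFermiGauge H := isFermiGauge_of_radial hsymm htrace hnormal hradial
  have hdeform : IsDeformationField C₀ ε H fun b x => V x b := by
    refine isDeformationField_of_norm_iteratedFDeriv_le (by omega) hV hboundary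
      (fun k hk hk' dirs x hx => ?_) humbilic
    rw [growthBound_eq_sum_tangential hH]
    exact hbound k hk hk' dirs x hx
  have hinterior := hcoercive ε ρ hε hρ H hdeg hH _ hdeform
  rw [coeffEnergy_eq_sum_tangential hH] at hinterior
  exact hinterior.trans ((le_sub_self_iff _).2 (boundaryTerm_nonpos (by omega) hε _ _))

/-- with the notation of the paper (bubble `U_ε`, polynomial tensor `H` with
coefficients `h_{ij,α}`, corrector vector field `V`, `S`, `T = H − S`, `Q_{ab,c}`, and the
boundary identity for `∂_nS_{ij}`), there is `λ = λ(n, C₀) > 0` such that for all `ρ ≥ 2ε`: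
`λ ε^{n−2} Σ_{i,j,α} h_{ij,α}² ∫_{B⁺_ρ}(ε+|x|)^{2|α|+2−2n} dx
  ≤ (1/4) ∫_{B⁺_ρ} Σ Q_{ab,c}² dx − (n²/(2(n−1)(n−2))) ∫_{|x̄|<ρ} ∂_nU_ε U_ε S_{nn}² dx̄`. -/
theorem stmt_7 (n : ℕ) (hn : 4 ≤ n) (C₀ : ℝ) (hC₀ : 0 < C₀) :
    ∃ lam : ℝ, 0 < lam ∧
    ∀ ε ρ : ℝ, 0 < ε → 2 * ε ≤ ρ →
    ∀ U : (Fin n → ℝ) → ℝ,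
      (∀ y : Fin n → ℝ, U y =
        (ε / ((ε + y ⟨n - 1, by omega⟩) ^ 2
          + ∑ i : Fin n, if (i : ℕ) < n - 1 then y i ^ 2 else 0)) ^ (((n : ℝ) - 2) / 2)) →
    ∀ H : Fin n → Fin n → MvPolynomial (Fin n) ℝ,
      (∀ a b : Fin n, ∀ m ∈ (H a b).support,
        1 ≤ m.sum (fun _ e => e) ∧ m.sum (fun _ e => e) ≤ (n - 2) / 2) →
      (∀ a b : Fin n, H a b = H b a) →
      ((∑ a : Fin n, H a a) = 0) →
      (∀ a : Fin n, H a ⟨n - 1, by omega⟩ = 0) →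
      (∀ i j k : Fin n, (i : ℕ) < n - 1 → (j : ℕ) < n - 1 → (k : ℕ) < n - 1 →
        MvPolynomial.eval (0 : Fin n → ℝ) (MvPolynomial.pderiv k (H i j)) = 0) →
      (∀ i : Fin n, (i : ℕ) < n - 1 → ∀ x : Fin n → ℝ, x ⟨n - 1, by omega⟩ = 0 →
        (∑ j : Fin n, if (j : ℕ) < n - 1 then x j * MvPolynomial.eval x (H i j) else 0) = 0) →
    ∀ η : ℝ → ℝ, ContDiff ℝ (⊤ : ℕ∞) η → (∀ t : ℝ, 0 ≤ η t ∧ η t ≤ 1) →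
      (∀ t : ℝ, 0 ≤ t → t ≤ 4 / 3 → η t = 1) → (∀ t : ℝ, 5 / 3 ≤ t → η t = 0) →
    ∀ V : (Fin n → ℝ) → Fin n → ℝ, ContDiff ℝ (⊤ : ℕ∞) V →
      -- (i) the divergence-form equation on ℝⁿ₊
      (∀ a : Fin n, ∀ x : Fin n → ℝ, 0 ≤ x ⟨n - 1, by omega⟩ →
        (∑ b : Fin n, fderiv ℝ (fun z : Fin n → ℝ =>
          U z ^ (2 * (n : ℝ) / ((n : ℝ) - 2))
            * (η (Real.sqrt (∑ c : Fin n, z c ^ 2) / ρ) * MvPolynomial.eval z (H a b)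
              - fderiv ℝ (fun w : Fin n → ℝ => V w b) z (Pi.single a 1)
              - fderiv ℝ (fun w : Fin n → ℝ => V w a) z (Pi.single b 1)
              + 2 / (n : ℝ)
                  * (∑ c : Fin n, fderiv ℝ (fun w : Fin n → ℝ => V w c) z (Pi.single c 1))
                  * (if a = b then 1 else 0))) x (Pi.single b 1)) = 0) →
      -- (ii) the boundary conditions on ∂ℝⁿ₊
      (∀ i : Fin n, (i : ℕ) < n - 1 → ∀ x : Fin n → ℝ, x ⟨n - 1, by omega⟩ = 0 →
        fderiv ℝ (fun w : Fin n → ℝ => V w i) x (Pi.single (⟨n - 1, by omega⟩ : Fin n) 1) = 0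
          ∧ V x ⟨n - 1, by omega⟩ = 0) →
      -- (iii) the derivative bounds up to order 3 on ℝⁿ₊
      (∀ k : ℕ, k ≤ 3 → ∀ dirs : Fin k → Fin n, ∀ x : Fin n → ℝ, 0 ≤ x ⟨n - 1, by omega⟩ →
        ‖iteratedFDeriv ℝ k V x (fun m => Pi.single (dirs m) 1)‖
          ≤ C₀ * ∑ i : Fin n, ∑ j : Fin n,
              if (i : ℕ) < n - 1 ∧ (j : ℕ) < n - 1 then
                ∑ m ∈ (H i j).support, |MvPolynomial.coeff m (H i j)|
                  * (ε + Real.sqrt (∑ c : Fin n, x c ^ 2))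
                      ^ ((m.sum (fun _ e => e) : ℤ) + 1 - (k : ℤ))
              else 0) →
    ∀ S : Fin n → Fin n → (Fin n → ℝ) → ℝ,
      (∀ (a b : Fin n) (x : Fin n → ℝ), S a b x =
        fderiv ℝ (fun w : Fin n → ℝ => V w b) x (Pi.single a 1)
          + fderiv ℝ (fun w : Fin n → ℝ => V w a) x (Pi.single b 1)
          - 2 / (n : ℝ)
              * (∑ c : Fin n, fderiv ℝ (fun w : Fin n → ℝ => V w c) x (Pi.single c 1))
              * (if a = b then 1 else 0)) →
    ∀ T : Fin n → Fin n → (Fin n → ℝ) → ℝ,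
      (∀ (a b : Fin n) (x : Fin n → ℝ), T a b x = MvPolynomial.eval x (H a b) - S a b x) →
    ∀ Q : Fin n → Fin n → Fin n → (Fin n → ℝ) → ℝ,
      (∀ (a b c : Fin n) (x : Fin n → ℝ), Q a b c x =
        U x * fderiv ℝ (T a b) x (Pi.single c 1)
          - 2 / ((n : ℝ) - 2) * fderiv ℝ U x (Pi.single a 1) * T b c x
          - 2 / ((n : ℝ) - 2) * fderiv ℝ U x (Pi.single b 1) * T a c x
          + 2 / ((n : ℝ) - 2)
              * (∑ d : Fin n, fderiv ℝ U x (Pi.single d 1) * T a d x)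
              * (if b = c then 1 else 0)
          + 2 / ((n : ℝ) - 2)
              * (∑ d : Fin n, fderiv ℝ U x (Pi.single d 1) * T b d x)
              * (if a = c then 1 else 0)) →
      -- the boundary identity for ∂_nS_{ij}
      (∀ i j : Fin n, (i : ℕ) < n - 1 → (j : ℕ) < n - 1 →
        ∀ x : Fin n → ℝ, x ⟨n - 1, by omega⟩ = 0 →
        fderiv ℝ (S i j) x (Pi.single (⟨n - 1, by omega⟩ : Fin n) 1)
          = 2 * (n : ℝ) / (((n : ℝ) - 1) * ((n : ℝ) - 2)) * (U x)⁻¹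
              * fderiv ℝ U x (Pi.single (⟨n - 1, by omega⟩ : Fin n) 1)
              * S ⟨n - 1, by omega⟩ ⟨n - 1, by omega⟩ x
              * (if i = j then 1 else 0)) →
      lam * ε ^ (n - 2) * (∑ i : Fin n, ∑ j : Fin n,
          if (i : ℕ) < n - 1 ∧ (j : ℕ) < n - 1 then
            ∑ m ∈ (H i j).support,
              (MvPolynomial.coeff m (H i j)) ^ 2
                * ∫ x in {x : Fin n → ℝ | 0 ≤ x ⟨n - 1, by omega⟩
                    ∧ Real.sqrt (∑ a : Fin n, x a ^ 2) < ρ},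
                  (ε + Real.sqrt (∑ a : Fin n, x a ^ 2))
                    ^ (2 * (m.sum (fun _ e => e) : ℤ) + 2 - 2 * (n : ℤ))
          else 0)
        ≤ 1 / 4 * (∫ x in {x : Fin n → ℝ | 0 ≤ x ⟨n - 1, by omega⟩
              ∧ Real.sqrt (∑ a : Fin n, x a ^ 2) < ρ},
            ∑ a : Fin n, ∑ b : Fin n, ∑ c : Fin n, (Q a b c x) ^ 2)
          - (n : ℝ) ^ 2 / (2 * ((n : ℝ) - 1) * ((n : ℝ) - 2))
            * ∫ x' in {x' : Fin (n - 1) → ℝ | Real.sqrt (∑ i : Fin (n - 1), x' i ^ 2) < ρ},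
              fderiv ℝ U (fun a : Fin n => if h : (a : ℕ) < n - 1 then x' ⟨(a : ℕ), h⟩ else 0)
                  (Pi.single (⟨n - 1, by omega⟩ : Fin n) 1)
                * U (fun a : Fin n => if h : (a : ℕ) < n - 1 then x' ⟨(a : ℕ), h⟩ else 0)
                * (S ⟨n - 1, by omega⟩ ⟨n - 1, by omega⟩
                    (fun a : Fin n => if h : (a : ℕ) < n - 1 then x' ⟨(a : ℕ), h⟩ else 0)) ^ 2 := by
  obtain ⟨lam, hlam, h⟩ := stmt_7_general n hn C₀ ((n - 2) / 2)
  exact ⟨lam, hlam, fun ε ρ hε hρ U hU H hdeg hsymm htrace hnormal _ hradial _ _ _ _ _ V hV _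
    hboundary hbound S hS T hT Q hQ humbilic => h ε ρ hε hρ U hU H hdeg hsymm htrace hnormal
      hradial V hV hboundary (fun k _ => hbound k) S hS T hT Q hQ fun x hx =>
        ⟨_, fun i j hi hj => humbilic i j hi hj x hx⟩⟩
end

section
/- Let E be a real normed vector space, α ∈ ℝ, C₀ > 0, x ∈ E, and let u : E∖{x} → ℝ be differentiable with |u(y)| ≤ C₀ ‖y−x‖^α and ‖Du(y)‖ ≤ C₀ ‖y−x‖^{α−1} for every y ≠ x. Then for every θ ∈ (0,1] there exists a constant C₁ depending only on C₀, α and θ such that |u(y) − u(z)| ≤ C₁ ‖y−z‖^θ ( ‖x−y‖^{α−θ} + ‖x−z‖^{α−θ} ) for all y,z ∈ E with y ≠ x and z ≠ x. -/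
universe u

/-!
If `‖y - z‖ ≤ ‖y - x‖ / 2`, the ball around `y` of radius `‖y - x‖ / 2` contains the segment from
`y` to `z`, and on it the distance to `x` is comparable to `‖y - x‖`; the mean value inequality
bounds `‖u y - u z‖` by a multiple of `‖y - x‖ ^ (α - 1) * ‖y - z‖`, and `‖y - z‖ ^ (1 - θ)` is
traded for `‖y - x‖ ^ (1 - θ)`. The same works with `y` and `z` exchanged. In the remaining case
both `‖y - x‖` and `‖z - x‖` are at most `2 * ‖y - z‖`, and the size bound on `u` suffices.
-/

section RealPowers

variable {a c d p t α θ : ℝ}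

theorem rpow_le_rpow_abs_mul_rpow (hc : 0 < c) (ha : 0 < a) (hat : a / c ≤ t) (hta : t ≤ c * a) :
    t ^ p ≤ c ^ |p| * a ^ p := by
  have hac : 0 < a / c := div_pos ha hc
  rcases le_total 0 p with hp | hp
  · calc
      t ^ p ≤ (c * a) ^ p := Real.rpow_le_rpow (hac.le.trans hat) hta hp
      _ = c ^ |p| * a ^ p := by rw [abs_of_nonneg hp, Real.mul_rpow hc.le ha.le]
  · calc
      t ^ p ≤ (a / c) ^ p := Real.rpow_le_rpow_of_nonpos hac hat hp
      _ = c ^ |p| * a ^ p := by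
        rw [abs_of_nonpos hp, Real.div_rpow ha.le hc.le, Real.rpow_neg hc.le, div_eq_inv_mul]

theorem rpow_sub_one_mul_le_rpow_mul_rpow_sub (hd : 0 ≤ d) (ha : 0 < a) (hda : d ≤ a)
    (hθ : θ ≤ 1) : a ^ (α - 1) * d ≤ d ^ θ * a ^ (α - θ) := by
  rcases hd.eq_or_lt with rfl | hd
  · rw [mul_zero]
    positivity
  have hdθ : d = d ^ θ * d ^ (1 - θ) := by
    rw [← Real.rpow_add hd, add_sub_cancel, Real.rpow_one]
  calc
    a ^ (α - 1) * d = d ^ θ * (d ^ (1 - θ) * a ^ (α - 1)) := by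
      rw [← mul_assoc, ← hdθ, mul_comm]
    _ ≤ d ^ θ * (a ^ (1 - θ) * a ^ (α - 1)) := by gcongr
    _ = d ^ θ * a ^ (α - θ) := by
      rw [← Real.rpow_add ha, sub_add_sub_cancel']

theorem rpow_le_rpow_mul_rpow_mul_rpow_sub (hc : 0 ≤ c) (hd : 0 ≤ d) (ha : 0 < a)
    (had : a ≤ c * d) (hθ : 0 ≤ θ) : a ^ α ≤ c ^ θ * d ^ θ * a ^ (α - θ) :=
  calc
    a ^ α = a ^ θ * a ^ (α - θ) := by rw [← Real.rpow_add ha, add_sub_cancel]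
    _ ≤ (c * d) ^ θ * a ^ (α - θ) := by gcongr
    _ = c ^ θ * d ^ θ * a ^ (α - θ) := by rw [Real.mul_rpow hc hd]

end RealPowers

section Dist

variable {X : Type*} [PseudoMetricSpace X] {w x y : X}

theorem half_dist_le_dist_of_mem_closedBall (hw : w ∈ Metric.closedBall y (dist y x / 2)) :
    dist y x / 2 ≤ dist w x := by
  linarith [Metric.mem_closedBall'.1 hw, dist_triangle y w x]

theorem dist_le_two_mul_dist_of_mem_closedBall (hw : w ∈ Metric.closedBall y (dist y x / 2)) :
    dist w x ≤ 2 * dist y x := by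
  linarith [Metric.mem_closedBall.1 hw, dist_triangle w y x, dist_nonneg (x := y) (y := x)]

end Dist

section Holder

variable {E F : Type*} [NormedAddCommGroup E] [NormedAddCommGroup F] {x y z : E} {u : E → F}
  {C c p α θ : ℝ}

theorem norm_sub_le_rpow_mul_add_of_norm_le (hC : 0 ≤ C) (hc : 0 ≤ c) (hθ : 0 ≤ θ)
    (hsize : ∀ w, w ≠ x → ‖u w‖ ≤ C * ‖w - x‖ ^ α) (hy : y ≠ x) (hz : z ≠ x)
    (hyx : ‖y - x‖ ≤ c * ‖y - z‖) (hzx : ‖z - x‖ ≤ c * ‖y - z‖) :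
    ‖u y - u z‖ ≤ C * c ^ θ * ‖y - z‖ ^ θ * (‖y - x‖ ^ (α - θ) + ‖z - x‖ ^ (α - θ)) := by
  have norm_le : ∀ w, w ≠ x → ‖w - x‖ ≤ c * ‖y - z‖ →
      ‖u w‖ ≤ C * (c ^ θ * ‖y - z‖ ^ θ * ‖w - x‖ ^ (α - θ)) := fun w hw hwx =>
    (hsize w hw).trans <| mul_le_mul_of_nonneg_left
      (rpow_le_rpow_mul_rpow_mul_rpow_sub hc (norm_nonneg _) (norm_sub_pos_iff.2 hw)
        hwx hθ) hC
  linarith [norm_sub_le (u y) (u z), norm_le y hy hyx, norm_le z hz hzx]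

variable [NormedSpace ℝ E] [NormedSpace ℝ F]

theorem norm_sub_le_of_norm_fderiv_le_rpow (hC : 0 ≤ C)
    (hdiff : ∀ w, w ≠ x → DifferentiableAt ℝ u w)
    (hgrad : ∀ w, w ≠ x → ‖fderiv ℝ u w‖ ≤ C * ‖w - x‖ ^ p)
    (hy : y ≠ x) (hyz : ‖y - z‖ ≤ ‖y - x‖ / 2) :
    ‖u y - u z‖ ≤ C * (2 ^ |p| * ‖y - x‖ ^ p) * ‖y - z‖ := by
  simp only [← dist_eq_norm] at hgrad hyz ⊢
  have hyx : 0 < dist y x := dist_pos.2 hy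
  have hne : ∀ w ∈ Metric.closedBall y (dist y x / 2), w ≠ x := fun w hw =>
    dist_pos.1 ((half_pos hyx).trans_le (half_dist_le_dist_of_mem_closedBall hw))
  have hgrad_ball : ∀ w ∈ Metric.closedBall y (dist y x / 2),
      ‖fderiv ℝ u w‖ ≤ C * (2 ^ |p| * dist y x ^ p) := fun w hw =>
    (hgrad w (hne w hw)).trans <| mul_le_mul_of_nonneg_left
      (rpow_le_rpow_abs_mul_rpow two_pos hyx (half_dist_le_dist_of_mem_closedBall hw)
        (dist_le_two_mul_dist_of_mem_closedBall hw)) hC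
  simpa only [dist_eq_norm] using (convex_closedBall y _).norm_image_sub_le_of_norm_fderiv_le
    (fun w hw => hdiff w (hne w hw)) hgrad_ball (Metric.mem_closedBall'.2 hyz)
    (Metric.mem_closedBall_self (half_pos hyx).le)

theorem norm_sub_le_rpow_mul_rpow_of_norm_fderiv_le (hC : 0 ≤ C) (hθ : θ ≤ 1)
    (hdiff : ∀ w, w ≠ x → DifferentiableAt ℝ u w)
    (hgrad : ∀ w, w ≠ x → ‖fderiv ℝ u w‖ ≤ C * ‖w - x‖ ^ (α - 1))
    (hy : y ≠ x) (hyz : ‖y - z‖ ≤ ‖y - x‖ / 2) :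
    ‖u y - u z‖ ≤ C * 2 ^ |α - 1| * ‖y - z‖ ^ θ * ‖y - x‖ ^ (α - θ) := by
  have hyx : 0 < ‖y - x‖ := norm_sub_pos_iff.2 hy
  calc
    ‖u y - u z‖ ≤ C * (2 ^ |α - 1| * ‖y - x‖ ^ (α - 1)) * ‖y - z‖ :=
      norm_sub_le_of_norm_fderiv_le_rpow hC hdiff hgrad hy hyz
    _ = C * 2 ^ |α - 1| * (‖y - x‖ ^ (α - 1) * ‖y - z‖) := by ring
    _ ≤ C * 2 ^ |α - 1| * (‖y - z‖ ^ θ * ‖y - x‖ ^ (α - θ)) :=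
      mul_le_mul_of_nonneg_left (rpow_sub_one_mul_le_rpow_mul_rpow_sub (norm_nonneg _) hyx
        (hyz.trans (half_le_self hyx.le)) hθ) (by positivity)
    _ = C * 2 ^ |α - 1| * ‖y - z‖ ^ θ * ‖y - x‖ ^ (α - θ) := by ring

theorem stmt_9_general (hθ0 : 0 ≤ θ) (hθ1 : θ ≤ 1)
    (hdiff : ∀ w, w ≠ x → DifferentiableAt ℝ u w)
    (hsize : ∀ w, w ≠ x → ‖u w‖ ≤ C * ‖w - x‖ ^ α)
    (hgrad : ∀ w, w ≠ x → ‖fderiv ℝ u w‖ ≤ C * ‖w - x‖ ^ (α - 1))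
    (hy : y ≠ x) (hz : z ≠ x) :
    ‖u y - u z‖ ≤ C * max (2 ^ |α - 1|) (2 ^ θ) * ‖y - z‖ ^ θ *
      (‖x - y‖ ^ (α - θ) + ‖x - z‖ ^ (α - θ)) := by
  have hC : 0 ≤ C := nonneg_of_mul_nonneg_left ((norm_nonneg _).trans (hsize y hy))
    (Real.rpow_pos_of_pos (norm_sub_pos_iff.2 hy) α)
  rw [norm_sub_rev x y, norm_sub_rev x z]
  rcases le_total ‖y - z‖ (‖y - x‖ / 2) with near_y | far_y
  · refine (norm_sub_le_rpow_mul_rpow_of_norm_fderiv_le hC hθ1 hdiff hgrad hy near_y).trans ?_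
    gcongr
    · exact le_max_left _ _
    · exact le_add_of_nonneg_right (by positivity)
  rcases le_total ‖y - z‖ (‖z - x‖ / 2) with near_z | far_z
  · rw [norm_sub_rev y z] at near_z
    rw [norm_sub_rev (u y), norm_sub_rev y z]
    refine (norm_sub_le_rpow_mul_rpow_of_norm_fderiv_le hC hθ1 hdiff hgrad hz near_z).trans ?_
    gcongr
    · exact le_max_left _ _
    · exact le_add_of_nonneg_left (by positivity)
  · refine (norm_sub_le_rpow_mul_add_of_norm_le hC zero_le_two hθ0 hsize hy hz
      ((div_le_iff₀' two_pos).1 far_y) ((div_le_iff₀' two_pos).1 far_z)).trans ?_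
    gcongr
    exact le_max_right _ _

end Holder

/-- Hölder-type estimate for a function on a normed space with a power-type
bound and gradient bound near a singular point `x`: if `|u(y)| ≤ C₀‖y−x‖^α` and
`‖Du(y)‖ ≤ C₀‖y−x‖^{α−1}` away from `x`, then for every `θ ∈ (0,1]` there is a constant
`C₁ = C₁(C₀, α, θ)` such that
`|u(y) − u(z)| ≤ C₁ ‖y−z‖^θ (‖x−y‖^{α−θ} + ‖x−z‖^{α−θ})` for `y, z ≠ x`. -/
theorem stmt_9 (α C₀ : ℝ) (hC₀ : 0 < C₀) (θ : ℝ) (hθ0 : 0 < θ) (hθ1 : θ ≤ 1) :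
    ∃ C₁ : ℝ, ∀ (E : Type u) [inst1 : NormedAddCommGroup E] [inst2 : NormedSpace ℝ E]
      (x : E) (u : E → ℝ),
      (∀ y : E, y ≠ x → DifferentiableAt ℝ u y) →
      (∀ y : E, y ≠ x → |u y| ≤ C₀ * ‖y - x‖ ^ α) →
      (∀ y : E, y ≠ x → ‖fderiv ℝ u y‖ ≤ C₀ * ‖y - x‖ ^ (α - 1)) →
      ∀ y z : E, y ≠ x → z ≠ x →
        |u y - u z| ≤ C₁ * ‖y - z‖ ^ θ * (‖x - y‖ ^ (α - θ) + ‖x - z‖ ^ (α - θ)) := by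
  exact ⟨_, fun _ _ _ _ _ hdiff hsize hgrad _ _ hy hz =>
    stmt_9_general hθ0.le hθ1 hdiff hsize hgrad hy hz⟩
end
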